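/- arXiv:2212.00376 — 3 statements merged into one kernel-verified Lean document; each statement's English description precedes it below -/
import Mathlib

section
/- Let q₁, ..., q_ℓ > 2 be pairwise coprime natural numbers. Then the set of real numbers ⋃_{j=1}^ℓ { cot(π a/q_j) : 1 ≤ a < q_j/2, gcd(a, q_j) = 1 } is linearly independent over ℚ. -/
open Complex HurwitzZeta Filter Topology in
lemma hurwitzOdd_real {a : ℝ} (ha : 0 < a) (ha1 : a < 1) {s : ℝ} (hs : 1 < s) :
    hurwitzZetaOdd (a : UnitAddCircle) (s : ℂ) =
      (((a ^ (-s) : ℝ) : ℂ) + ∑' n : ℕ, (((n + 1 + a) ^ (-s) - (n + 1 - a) ^ (-s) : ℝ) : ℂ)) / 2 := by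
  have h := (hasSum_int_hurwitzZetaOdd a (s := (s : ℂ)) (by simpa using hs)).nat_add_neg
  rw [← hasSum_nat_add_iff' 1] at h
  have h2 := h.tsum_eq
  have key : ∀ x : ℝ, 0 < x → ((SignType.sign x : ℂ) / ((|x| : ℝ) : ℂ) ^ (s : ℂ)) = ((x ^ (-s) : ℝ) : ℂ) := by
    intro x hx
    rw [sign_pos hx, abs_of_pos hx, ofReal_cpow hx.le]
    simp [cpow_neg]
  have key' : ∀ x : ℝ, 0 < x → ((SignType.sign (-x) : ℂ) / ((|-x| : ℝ) : ℂ) ^ (s : ℂ)) = -((x ^ (-s) : ℝ) : ℂ) := by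
    intro x hx
    rw [← key x hx, abs_neg, Left.sign_neg]
    simp [neg_div]
  have e : ∀ n : ℕ, (SignType.sign ((((n + 1 : ℕ) : ℤ) : ℝ) + a) / (↑|(((n + 1 : ℕ) : ℤ) : ℝ) + a| : ℂ) ^ (s : ℂ) / 2
     + SignType.sign (((-((n + 1 : ℕ) : ℤ) : ℤ) : ℝ) + a) / (↑|((-((n + 1 : ℕ) : ℤ) : ℤ) : ℝ) + a| : ℂ) ^ (s : ℂ) / 2 : ℂ)
     = (((n + 1 + a) ^ (-s) - (n + 1 - a) ^ (-s) : ℝ) : ℂ) / 2 := by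
    intro n
    have hn : (0 : ℝ) ≤ n := n.cast_nonneg
    have h1 : ((((n + 1 : ℕ) : ℤ) : ℝ) + a) = n + 1 + a := by push_cast; ring
    have h2 : (((-((n + 1 : ℕ) : ℤ) : ℤ) : ℝ) + a) = -(n + 1 - a) := by push_cast; ring
    rw [h1, h2, key _ (by linarith), key' _ (by linarith)]
    push_cast; ring
  have h0 := key a ha
  simp only [e] at h2
  rw [tsum_div_const] at h2
  simp only [Finset.sum_range_one] at h2
  simp only [Nat.cast_zero, Int.cast_zero, neg_zero, zero_add, h0] at h2
  rw [add_div, h2]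
  ring

lemma term_bound {a : ℝ} (ha : 0 < a) (ha1 : a < 1) {s : ℝ} (hs : 1 < s) (hs2 : s ≤ 2) (m : ℝ) (hm : 1 ≤ m) :
    |(m + a) ^ (-s) - (m - a) ^ (-s)| ≤ 4 * (1 - a)⁻¹ ^ 2 * (1 / m ^ 2) := by
  have hx : 0 < m - a := by linarith
  have hy : 0 < m + a := by linarith
  have hm0 : 0 < m := by linarith
  have h1 : 0 < 1 - a := by linarith
  have e : (m + a) ^ (-s) = (m - a) ^ (-s) * ((m - a) / (m + a)) ^ s := by
    rw [Real.div_rpow hx.le hy.le, Real.rpow_neg hx.le, Real.rpow_neg hy.le]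
    have := (Real.rpow_pos_of_pos hx s).ne'
    field_simp
  set r := (m - a) / (m + a) with hr
  have hr0 : 0 < r := by positivity
  have hr1 : r ≤ 1 := by rw [hr, div_le_one hy]; linarith
  have hrs : r ^ s ≤ 1 := Real.rpow_le_one hr0.le hr1 (by linarith)
  have hrs2 : r ^ (2:ℝ) ≤ r ^ s := Real.rpow_le_rpow_of_exponent_ge hr0 hr1 hs2
  rw [Real.rpow_two] at hrs2
  have hP : 0 < (m - a) ^ (-s) := Real.rpow_pos_of_pos hx _
  rw [e, abs_sub_comm, abs_of_nonneg (by nlinarith)]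
  have hd : 1 - r ^ s ≤ 4 / m := by
    have h3 : 1 - r = 2 * a / (m + a) := by rw [hr]; field_simp; ring
    have h4 : 2 * a / (m + a) ≤ 2 / m := by
      rw [div_le_div_iff₀ hy hm0]; nlinarith
    have h5 : (4:ℝ) / m = 2 * (2 / m) := by ring
    nlinarith
  have hQ : (m - a) ^ (-s) ≤ (1 - a)⁻¹ ^ 2 * (1 / m) := by
    have g1 : (1 - a) * m ≤ m - a := by nlinarith
    calc (m - a) ^ (-s) ≤ ((1 - a) * m) ^ (-s) :=
          Real.rpow_le_rpow_of_nonpos (by positivity) g1 (by linarith)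
      _ = (1 - a) ^ (-s) * m ^ (-s) := Real.mul_rpow h1.le hm0.le
      _ ≤ (1 - a) ^ (-2 : ℝ) * m ^ (-1 : ℝ) := by
          apply mul_le_mul
          · exact Real.rpow_le_rpow_of_exponent_ge h1 (by linarith) (by linarith)
          · exact Real.rpow_le_rpow_of_exponent_le hm (by linarith)
          · positivity
          · positivity
      _ = _ := by
          rw [Real.rpow_neg h1.le, Real.rpow_neg hm0.le, Real.rpow_two, Real.rpow_one]
          simp
  calc (m - a) ^ (-s) - (m - a) ^ (-s) * r ^ s = (m - a) ^ (-s) * (1 - r ^ s) := by ring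
    _ ≤ ((1 - a)⁻¹ ^ 2 * (1 / m)) * (4 / m) := by
        apply mul_le_mul hQ hd (by linarith) (by positivity)
    _ = _ := by field_simp

open Complex HurwitzZeta Filter Topology in
lemma hurwitzOdd_one {a : ℝ} (ha : 0 < a) (ha1 : a < 1) :
    hurwitzZetaOdd (a : UnitAddCircle) 1 = Real.pi / 2 * Complex.cot (Real.pi * a) := by
  have t1 : Tendsto (fun s : ℝ => hurwitzZetaOdd (a : UnitAddCircle) (s : ℂ)) (𝓝[>] 1)
      (𝓝 (hurwitzZetaOdd (a : UnitAddCircle) 1)) := by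
    have : Continuous (fun s : ℝ => hurwitzZetaOdd (a : UnitAddCircle) (s : ℂ)) :=
      (differentiable_hurwitzZetaOdd _).continuous.comp continuous_ofReal
    have h := this.tendsto 1
    simp only [ofReal_one] at h
    exact h.mono_left nhdsWithin_le_nhds
  have t2 : Tendsto (fun s : ℝ => ∑' n : ℕ, (((n + 1 + a) ^ (-s) - (n + 1 - a) ^ (-s) : ℝ) : ℂ)) (𝓝[>] 1)
      (𝓝 (∑' n : ℕ, (((n + 1 + a) ^ (-(1:ℝ)) - (n + 1 - a) ^ (-(1:ℝ)) : ℝ) : ℂ))) := by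
    apply tendsto_tsum_of_dominated_convergence
      (bound := fun n : ℕ => 4 * (1 - a)⁻¹ ^ 2 * (1 / ((n : ℝ) + 1) ^ 2))
    · apply Summable.mul_left
      have := (summable_nat_add_iff 1).mpr (Real.summable_one_div_nat_pow.mpr (one_lt_two))
      simpa using this
    · intro n
      have hn : (0 : ℝ) ≤ n := n.cast_nonneg
      apply (continuous_ofReal.tendsto _).comp
      refine Tendsto.mono_left ?_ nhdsWithin_le_nhds
      have c : Continuous (fun s : ℝ => ((n : ℝ) + 1 + a) ^ (-s) - (n + 1 - a) ^ (-s)) := by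
        apply Continuous.sub
        · exact (Real.continuous_const_rpow (by linarith)).comp continuous_neg
        · exact (Real.continuous_const_rpow (by linarith)).comp continuous_neg
      exact c.tendsto 1
    · have : ∀ᶠ s : ℝ in 𝓝[>] 1, s ∈ Set.Ioo (1:ℝ) 2 := Ioo_mem_nhdsGT (by norm_num)
      filter_upwards [this] with s hs n
      have hn : (0 : ℝ) ≤ n := n.cast_nonneg
      rw [norm_real]
      exact term_bound ha ha1 hs.1 hs.2.le _ (by linarith)
  have t3 : Tendsto (fun s : ℝ => ((a ^ (-s) : ℝ) : ℂ)) (𝓝[>] 1) (𝓝 ((a ^ (-(1:ℝ)) : ℝ) : ℂ)) := by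
    apply (continuous_ofReal.tendsto _).comp
    refine Tendsto.mono_left ?_ nhdsWithin_le_nhds
    exact ((Real.continuous_const_rpow ha.ne').comp continuous_neg).tendsto 1
  have t4 := (t3.add t2).div_const 2
  have ev : (fun s : ℝ => (((a ^ (-s) : ℝ) : ℂ) +
      ∑' n : ℕ, (((n + 1 + a) ^ (-s) - (n + 1 - a) ^ (-s) : ℝ) : ℂ)) / 2) =ᶠ[𝓝[>] 1]
      (fun s : ℝ => hurwitzZetaOdd (a : UnitAddCircle) (s : ℂ)) := by
    filter_upwards [self_mem_nhdsWithin] with s hs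
    rw [hurwitzOdd_real ha ha1 hs]
  have t5 := t4.congr' ev
  rw [tendsto_nhds_unique t1 t5]
  have hz : (a : ℂ) ∈ Complex.integerComplement := by
    rintro ⟨n, hn⟩
    have hn' : (n : ℝ) = a := by exact_mod_cast hn
    rw [← hn'] at ha ha1
    have h1 : 0 < n := by exact_mod_cast ha
    have h2 : n < 1 := by exact_mod_cast ha1
    omega
  have hc := cot_series_rep' hz
  have : ∀ n : ℕ, (((n + 1 + a) ^ (-(1:ℝ)) - (n + 1 - a) ^ (-(1:ℝ)) : ℝ) : ℂ)
      = (1 / ((a:ℂ) - (n + 1)) + 1 / (a + (n + 1))) := by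
    intro n
    have hn : (0 : ℝ) ≤ n := n.cast_nonneg
    rw [Real.rpow_neg_one, Real.rpow_neg_one]
    push_cast
    have e : (a:ℂ) - (n + 1) = - (n + 1 - a) := by ring
    rw [e, one_div, one_div, inv_neg, add_comm (a:ℂ)]
    ring
  simp only [this]
  rw [← hc, Real.rpow_neg_one]
  push_cast
  ring

/-- `cot (π n / q)` as a complex number. -/
noncomputable def cotQ (q n : ℕ) : ℂ := Complex.cot (Real.pi * n / q)

lemma cotQ_eq (q n : ℕ) :
    cotQ q n = -Complex.I * ((Complex.exp (2 * Real.pi * Complex.I / q) ^ n + 1) /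
      (1 - Complex.exp (2 * Real.pi * Complex.I / q) ^ n)) := by
  rw [cotQ, Complex.cot_eq_exp_ratio, ← Complex.exp_nat_mul]
  have : 2 * Complex.I * (Real.pi * n / q) = n * (2 * Real.pi * Complex.I / q) := by ring
  rw [this, div_mul_eq_div_div, div_eq_mul_inv _ Complex.I, Complex.inv_I]
  ring

lemma cotQ_ofReal (q n : ℕ) : cotQ q n = ((Real.cot (Real.pi * n / q) : ℝ) : ℂ) := by
  rw [cotQ, Complex.ofReal_cot]
  push_cast
  rfl

lemma cotQ_mod {q m n : ℕ} (hq : q ≠ 0) (h : m ≡ n [MOD q]) : cotQ q m = cotQ q n := by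
  have hz := Complex.isPrimitiveRoot_exp q hq
  rw [cotQ_eq, cotQ_eq, pow_eq_pow_mod m hz.pow_eq_one, pow_eq_pow_mod n hz.pow_eq_one,
    show m % q = n % q from h]

lemma cotQ_neg {q m n : ℕ} (hq : q ≠ 0) (h : q ∣ m + n) : cotQ q m = - cotQ q n := by
  have hz := Complex.isPrimitiveRoot_exp q hq
  have h1 := (hz.pow_eq_one_iff_dvd (m + n)).2 h
  rw [cotQ_eq, cotQ_eq]
  set w := Complex.exp (2 * Real.pi * Complex.I / q)
  rw [pow_add] at h1
  have h2 : w ^ n ≠ 0 := right_ne_zero_of_mul_eq_one h1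
  have h3 : w ^ m = (w ^ n)⁻¹ := eq_inv_of_mul_eq_one_left h1
  rw [h3]
  set v := w ^ n
  have e1 : v⁻¹ + 1 = (v + 1) / v := by field_simp; ring
  have e2 : 1 - v⁻¹ = -(1 - v) / v := by field_simp; ring
  rw [e1, e2, div_div_div_cancel_right₀ h2, div_neg]
  ring

lemma cotQ_scale {q k n : ℕ} (hk : k ≠ 0) : cotQ (q * k) (n * k) = cotQ q n := by
  rw [cotQ, cotQ]
  have : (k : ℂ) ≠ 0 := by exact_mod_cast hk
  push_cast
  rw [← mul_assoc, mul_div_mul_right _ _ this]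

lemma galois_step_aux {ι : Type*} (s : Finset ι) (c : ι → ℚ) (n : ι → ℕ) {N b : ℕ} [NeZero N]
    (hN : N ≠ 0) (hb : b.Coprime N) (K : Type) [Field K] [CharZero K] [Algebra ℚ K]
    [IsCyclotomicExtension {N} ℚ K]
    (h : ∑ k ∈ s, (c k : ℂ) * cotQ N (n k) = 0) :
    ∑ k ∈ s, (c k : ℂ) * cotQ N (b * n k) = 0 := by
  let z : K := IsCyclotomicExtension.zeta N ℚ K
  have hz : IsPrimitiveRoot z N := IsCyclotomicExtension.zeta_spec N ℚ K
  have hirr := Polynomial.cyclotomic.irreducible_rat (Nat.pos_of_ne_zero hN)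
  have ex : ∀ μ : ℂ, IsPrimitiveRoot μ N → ∃ φ : K →ₐ[ℚ] ℂ, φ z = μ := by
    intro μ hμ
    have hm : Polynomial.aeval μ (minpoly ℚ (hz.powerBasis ℚ).gen) = 0 := by
      rw [hz.powerBasis_gen ℚ, ← hz.minpoly_eq_cyclotomic_of_irreducible hirr,
        Polynomial.aeval_def, Polynomial.eval₂_eq_eval_map, Polynomial.map_cyclotomic,
        ← Polynomial.IsRoot.def, Polynomial.isRoot_cyclotomic_iff]
      exact hμ
    refine ⟨(hz.powerBasis ℚ).lift μ hm, ?_⟩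
    have := (hz.powerBasis ℚ).lift_gen μ hm
    rwa [hz.powerBasis_gen ℚ] at this
  have hw := Complex.isPrimitiveRoot_exp N hN
  set w := Complex.exp (2 * Real.pi * Complex.I / N) with hwdef
  obtain ⟨φ, hφ⟩ := ex w hw
  obtain ⟨ψ, hψ⟩ := ex (w ^ b) (hw.pow_of_coprime b hb)
  have main : ∑ k ∈ s, (c k : K) * ((z ^ n k + 1) / (1 - z ^ n k)) = 0 := by
    apply φ.toRingHom.injective
    have h' : -Complex.I * ∑ k ∈ s, (c k : ℂ) * ((w ^ n k + 1) / (1 - w ^ n k)) = 0 := by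
      rw [← h, Finset.mul_sum]
      refine Finset.sum_congr rfl fun k _ => ?_
      rw [cotQ_eq, ← hwdef]; ring
    have h'' := (mul_eq_zero.1 h').resolve_left (by simp)
    simpa [hφ] using h''
  have m2 := congrArg ψ main
  simp [hψ] at m2
  have : ∑ k ∈ s, (c k : ℂ) * cotQ N (b * n k) = -Complex.I * ∑ k ∈ s, (c k : ℂ) * (((w ^ b) ^ n k + 1) / (1 - (w ^ b) ^ n k)) := by
    rw [Finset.mul_sum]
    refine Finset.sum_congr rfl fun k _ => ?_
    rw [cotQ_eq, ← hwdef, pow_mul]; ring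
  rw [this, m2, mul_zero]

lemma galois_step {ι : Type*} (s : Finset ι) (c : ι → ℚ) (n : ι → ℕ) {N b : ℕ} (hN : N ≠ 0)
    (hb : b.Coprime N) (h : ∑ k ∈ s, (c k : ℂ) * cotQ N (n k) = 0) :
    ∑ k ∈ s, (c k : ℂ) * cotQ N (b * n k) = 0 := by
  have : NeZero N := ⟨hN⟩
  have : NeZero ((N : ℕ) : ℚ) := ⟨by exact_mod_cast hN⟩
  have : IsCyclotomicExtension {N} ℚ (CyclotomicField N ℚ) :=
    CyclotomicField.isCyclotomicExtension N ℚ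
  have key := galois_step_aux s c n hN hb (CyclotomicField N ℚ) h
  exact key

open HurwitzZeta in
lemma cot_char_sum_ne_zero {N : ℕ} [NeZero N] (χ : DirichletCharacter ℂ N) (hχ : χ.Odd) :
    ∑ j : ZMod N, χ j * cotQ N j.val ≠ 0 := by
  have h1 : χ ≠ 1 := by
    rintro rfl
    have := hχ
    unfold DirichletCharacter.Odd at this
    rw [MulChar.one_apply (isUnit_one.neg)] at this
    norm_num at this
  have hL := DirichletCharacter.LFunction_apply_one_ne_zero h1
  rw [DirichletCharacter.LFunction, ZMod.LFunction_def_odd hχ.to_fun] at hL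
  intro h0
  apply hL
  have : ∀ j : ZMod N, χ j * hurwitzZetaOdd (ZMod.toAddCircle j) 1 = Real.pi / 2 * (χ j * cotQ N j.val) := by
    intro j
    by_cases hj : j = 0
    · have : χ j = 0 := by
        have := hχ.to_fun 0
        rw [neg_zero] at this
        rw [hj]
        linear_combination this / 2
      rw [this]; ring
    · have hv : 0 < j.val := Nat.pos_of_ne_zero (by simpa using hj)
      have hN : (0 : ℝ) < N := by exact_mod_cast Nat.pos_of_ne_zero (NeZero.ne N)
      have hlt : (j.val : ℝ) < N := by exact_mod_cast j.val_lt
      rw [ZMod.toAddCircle_apply, hurwitzOdd_one (by positivity) ((div_lt_one hN).2 hlt), cotQ]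
      push_cast
      rw [mul_div_assoc]
      ring
  simp only [this]
  rw [← Finset.mul_sum, h0]
  simp

lemma okada_core {N : ℕ} [NeZero N] (f : ZMod N → ℂ) (hodd : ∀ x, f (-x) = - f x)
    (hsupp : ∀ x, ¬ IsUnit x → f x = 0)
    (h : ∀ b : ZMod N, IsUnit b → ∑ a, f a * cotQ N (a * b).val = 0) (x : ZMod N) : f x = 0 := by
  by_cases hx : IsUnit x
  swap
  · exact hsupp x hx
  have hchar : ∀ χ : DirichletCharacter ℂ N, ∑ a, f a * χ a⁻¹ = 0 := by
    intro χ
    rcases χ.even_or_odd with he | ho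
    · have e : ∑ a, f a * χ a⁻¹ = ∑ a, f (-a) * χ (-a)⁻¹ :=
        (Equiv.sum_comp (Equiv.neg (ZMod N)) (fun a => f a * χ a⁻¹)).symm
      have e2 : ∀ a, f (-a) * χ (-a)⁻¹ = -(f a * χ a⁻¹) := by
        intro a
        by_cases ha : IsUnit a
        · have : (-a)⁻¹ = -(a⁻¹) := by
            obtain ⟨u, rfl⟩ := ha
            rw [← Units.val_neg, ZMod.inv_coe_unit, ZMod.inv_coe_unit]
            simp
          rw [this, he.eval_neg, hodd]; ring
        · rw [hodd, hsupp a ha]; simp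
      simp only [e2, Finset.sum_neg_distrib] at e
      linear_combination e / 2
    · have S := cot_char_sum_ne_zero χ ho
      have z : ∑ b, χ b * ∑ a, f a * cotQ N (a * b).val = 0 := by
        apply Finset.sum_eq_zero
        intro b _
        by_cases hb : IsUnit b
        · rw [h b hb, mul_zero]
        · rw [χ.map_nonunit hb, zero_mul]
      have z2 : ∑ b, χ b * ∑ a, f a * cotQ N (a * b).val =
          (∑ a, f a * χ a⁻¹) * ∑ j, χ j * cotQ N j.val := by
        rw [Finset.sum_mul_sum]
        simp only [Finset.mul_sum]
        rw [Finset.sum_comm]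
        refine Finset.sum_congr rfl fun a _ => ?_
        by_cases ha : IsUnit a
        · obtain ⟨u, rfl⟩ := ha
          rw [← Equiv.sum_comp (Units.mulLeft u) (fun j => f u * χ (u : ZMod N)⁻¹ * (χ j * cotQ N j.val))]
          refine Finset.sum_congr rfl fun b _ => ?_
          simp only [Units.mulLeft_apply, map_mul]
          have : χ (u : ZMod N)⁻¹ * χ u = 1 := by
            rw [← map_mul, ZMod.inv_coe_unit]; simp
          linear_combination (-(f u * χ b * cotQ N ((u : ZMod N) * b).val)) * this
        · simp [hsupp a ha]
      rw [z2] at z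
      exact (mul_eq_zero.1 z).resolve_right S
  have := fun a => DirichletCharacter.sum_char_inv_mul_char_eq ℂ (n := N) (a := a)
  have t : ∑ χ : DirichletCharacter ℂ N, χ x * ∑ a, f a * χ a⁻¹ = N.totient * f x := by
    simp only [Finset.mul_sum]
    rw [Finset.sum_comm]
    rw [Finset.sum_eq_single x]
    · rw [mul_comm _ (f x)]
      have t := this x hx x
      rw [if_pos rfl] at t
      rw [← t, Finset.mul_sum]
      exact Finset.sum_congr rfl fun χ _ => by ring
    · intro a _ hax
      by_cases ha : IsUnit a
      · have t := this a ha x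
        rw [if_neg hax] at t
        rw [← mul_zero (f a), ← t, Finset.mul_sum]
        exact Finset.sum_congr rfl fun χ _ => by ring
      · simp [hsupp a ha]
    · simp
  simp only [hchar, mul_zero, Finset.sum_const_zero] at t
  have hN : (N.totient : ℂ) ≠ 0 := by
    exact_mod_cast (Nat.totient_pos.2 (Nat.pos_of_ne_zero (NeZero.ne N))).ne'
  exact (mul_eq_zero.1 t.symm).resolve_left hN

lemma separate {ℓ : ℕ} (q : Fin ℓ → ℕ) (hq : ∀ j, 2 < q j)
    (hcop : Pairwise fun i j => Nat.Coprime (q i) (q j)) {ι : Type*} (s : Finset ι) (c : ι → ℚ)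
    (n : ι → ℕ) (t : ι → Fin ℓ) (h : ∑ k ∈ s, (c k : ℂ) * cotQ (q (t k)) (n k) = 0)
    (j : Fin ℓ) (b : ℕ) (hb : b.Coprime (q j)) :
    ∑ k ∈ s with t k = j, (c k : ℂ) * cotQ (q j) (b * n k) = 0 := by
  have hq0 : ∀ i, q i ≠ 0 := fun i => by have := hq i; omega
  set N := ∏ i, q i with hNdef
  have hN : N ≠ 0 := Finset.prod_ne_zero_iff.2 fun i _ => hq0 i
  have hdvd : ∀ i, q i ∣ N := fun i => Finset.dvd_prod_of_mem q (Finset.mem_univ i)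
  have gal : ∀ B : ℕ, B.Coprime N → ∑ k ∈ s, (c k : ℂ) * cotQ (q (t k)) (B * n k) = 0 := by
    intro B hB
    have e : ∀ i m, cotQ (q i) m = cotQ N (m * (N / q i)) := by
      intro i m
      have h1 : N = q i * (N / q i) := (Nat.mul_div_cancel' (hdvd i)).symm
      have h2 : N / q i ≠ 0 := fun h0 => hN (by rw [h1, h0, mul_zero])
      rw [← cotQ_scale (q := q i) (n := m) h2, ← h1]
    simp only [e] at h ⊢
    have := galois_step s c _ hN hB h
    simpa only [mul_assoc] using this
  have crt : ∀ r : Fin ℓ → ℕ, (∀ i, (r i).Coprime (q i)) →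
      ∃ B : ℕ, B.Coprime N ∧ ∀ i, B ≡ r i [MOD q i] := by
    intro r hr
    obtain ⟨B, hB⟩ := Nat.chineseRemainderOfFinset r q Finset.univ (fun i _ => hq0 i)
      (fun i _ k _ hik => hcop hik)
    refine ⟨B, ?_, fun i => hB i (Finset.mem_univ i)⟩
    apply Nat.Coprime.prod_right
    intro i _
    have := (hB i (Finset.mem_univ i)).gcd_eq
    rw [Nat.Coprime, this]
    exact hr i
  obtain ⟨B, hBc, hB⟩ := crt (fun i => if i = j then b else 1) (by
    intro i
    by_cases hi : i = j
    · subst hi; simpa using hb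
    · simp [hi])
  obtain ⟨D, hDc, hD⟩ := crt (fun i => if i = j then b else q i - 1) (by
    intro i
    by_cases hi : i = j
    · subst hi; simpa using hb
    · simp only [hi, if_false]
      have := hq i
      rw [Nat.coprime_self_sub_left (by omega)]
      simp)
  have hsum : ∑ k ∈ s, ((c k : ℂ) * cotQ (q (t k)) (B * n k) + (c k : ℂ) * cotQ (q (t k)) (D * n k)) = 0 := by
    rw [Finset.sum_add_distrib, gal B hBc, gal D hDc, add_zero]
  have hterm : ∀ k, ((c k : ℂ) * cotQ (q (t k)) (B * n k) + (c k : ℂ) * cotQ (q (t k)) (D * n k)) =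
      if t k = j then 2 * ((c k : ℂ) * cotQ (q j) (b * n k)) else 0 := by
    intro k
    split_ifs with hk
    · have h1 := hB (t k)
      have h2 := hD (t k)
      simp only [hk, if_true] at h1 h2
      rw [hk, cotQ_mod (hq0 j) (h1.mul_right _), cotQ_mod (hq0 j) (h2.mul_right _)]
      ring
    · have h1 := hB (t k)
      have h2 := hD (t k)
      simp only [hk, if_false] at h1 h2
      have h3 : q (t k) ∣ B * n k + D * n k := by
        rw [← add_mul]
        apply Dvd.dvd.mul_right
        have h4 := h1.add h2
        have := hq (t k)
        rw [show 1 + (q (t k) - 1) = q (t k) by omega] at h4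
        exact (Nat.modEq_zero_iff_dvd).1 (h4.trans (by simp [Nat.ModEq]))
      rw [cotQ_neg (hq0 _) h3]
      ring
  simp only [hterm] at hsum
  rw [← Finset.sum_filter, ← Finset.mul_sum] at hsum
  exact (mul_eq_zero.1 hsum).resolve_left two_ne_zero

/-- Extension of Okada's theorem: for pairwise coprime moduli `q₁, …, q_ℓ > 2`, the real
numbers `cot (π a / q_j)` for `1 ≤ a < q_j / 2` with `gcd(a, q_j) = 1` are linearly
independent over `ℚ`. -/
theorem cot_values_linearIndependent {ℓ : ℕ} (q : Fin ℓ → ℕ) (hq : ∀ j, 2 < q j)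
    (hcop : Pairwise fun i j => Nat.Coprime (q i) (q j)) :
    LinearIndependent ℚ
      (fun p : Σ j : Fin ℓ, {a : ℕ // 1 ≤ a ∧ 2 * a < q j ∧ Nat.Coprime a (q j)} =>
        Real.cot (Real.pi * p.2.1 / q p.1)) := by
  classical
  rw [linearIndependent_iff']
  intro s g hg p hp
  have hgC : ∑ k ∈ s, (g k : ℂ) * cotQ (q k.1) k.2.1 = 0 := by
    have := congrArg (fun x : ℝ => (x : ℂ)) hg
    simp only [Rat.smul_def] at this
    push_cast at this
    rw [← this]
    refine Finset.sum_congr rfl fun k _ => ?_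
    rw [cotQ_ofReal]
    push_cast
    rfl
  obtain ⟨j, a, ha1, ha2, ha3⟩ := p
  have sep := separate q hq hcop s g (fun k => k.2.1) (fun k => k.1) hgC j
  have hj0 : q j ≠ 0 := by have := hq j; omega
  have : NeZero (q j) := ⟨hj0⟩
  set T := s.filter (fun k => k.1 = j) with hT
  let f : ZMod (q j) → ℂ := fun x => ∑ k ∈ T, (g k : ℂ) *
    ((if x = (k.2.1 : ZMod (q j)) then 1 else 0) - (if x = -(k.2.1 : ZMod (q j)) then 1 else 0))
  have hprop : ∀ k ∈ T, 1 ≤ k.2.1 ∧ 2 * k.2.1 < q j ∧ Nat.Coprime k.2.1 (q j) := by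
    rintro ⟨i, k⟩ hk
    have hi : i = j := (Finset.mem_filter.1 hk).2
    subst hi
    exact k.2
  have hodd : ∀ x, f (-x) = - f x := by
    intro x
    simp only [f]
    rw [← Finset.sum_neg_distrib]
    refine Finset.sum_congr rfl fun k _ => ?_
    simp only [neg_eq_iff_eq_neg (a := x)]
    ring_nf
  have hsupp : ∀ x, ¬ IsUnit x → f x = 0 := by
    intro x hx
    apply Finset.sum_eq_zero
    intro k hk
    have hu : IsUnit (k.2.1 : ZMod (q j)) := (ZMod.isUnit_iff_coprime _ _).2 (hprop k hk).2.2
    have h1 : x ≠ (k.2.1 : ZMod (q j)) := fun h => hx (h ▸ hu)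
    have h2 : x ≠ -(k.2.1 : ZMod (q j)) := fun h => hx (h ▸ hu.neg)
    simp [h1, h2]
  have hrel : ∀ b : ZMod (q j), IsUnit b → ∑ x, f x * cotQ (q j) (x * b).val = 0 := by
    intro b hb
    have hbc : b.val.Coprime (q j) := by
      rw [← ZMod.isUnit_iff_coprime, ZMod.natCast_zmod_val]; exact hb
    have hs := sep b.val hbc
    simp only [f, Finset.sum_mul]
    rw [Finset.sum_comm]
    have : ∀ k ∈ T, ∑ x : ZMod (q j), (g k : ℂ) *
        ((if x = (k.2.1 : ZMod (q j)) then 1 else 0) - (if x = -(k.2.1 : ZMod (q j)) then 1 else 0))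
          * cotQ (q j) (x * b).val = 2 * ((g k : ℂ) * cotQ (q j) (b.val * k.2.1)) := by
      intro k hk
      have e1 : cotQ (q j) ((k.2.1 : ZMod (q j)) * b).val = cotQ (q j) (b.val * k.2.1) := by
        apply cotQ_mod hj0
        rw [← ZMod.natCast_eq_natCast_iff]
        push_cast
        rw [ZMod.natCast_zmod_val, ZMod.natCast_zmod_val, mul_comm]
      have e2 : cotQ (q j) (-(k.2.1 : ZMod (q j)) * b).val = - cotQ (q j) (b.val * k.2.1) := by
        apply cotQ_neg hj0
        rw [← ZMod.natCast_eq_zero_iff]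
        push_cast
        rw [ZMod.natCast_zmod_val, ZMod.natCast_zmod_val]
        ring
      simp only [mul_sub, sub_mul, mul_ite, mul_one, mul_zero, ite_mul, zero_mul,
        Finset.sum_sub_distrib, Finset.sum_ite_eq', Finset.mem_univ, if_true]
      rw [e1, e2]
      ring
    rw [Finset.sum_congr rfl this, ← Finset.mul_sum, hs, mul_zero]
  have hfa := okada_core f hodd hsupp hrel (a : ZMod (q j))
  have hval : f (a : ZMod (q j)) = g ⟨j, a, ha1, ha2, ha3⟩ := by
    simp only [f]
    rw [Finset.sum_eq_single (⟨j, a, ha1, ha2, ha3⟩ : Σ j : Fin ℓ, {a : ℕ // 1 ≤ a ∧ 2 * a < q j ∧ Nat.Coprime a (q j)})]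
    · have : (a : ZMod (q j)) ≠ -(a : ZMod (q j)) := by
        intro h
        have h' : ((a + a : ℕ) : ZMod (q j)) = 0 := by
          push_cast
          linear_combination h
        rw [ZMod.natCast_eq_zero_iff] at h'
        have := Nat.le_of_dvd (by omega) h'
        omega
      simp [this]
    · intro k hk hne
      obtain ⟨p1, p2, p3⟩ := hprop k hk
      have h1 : (a : ZMod (q j)) ≠ (k.2.1 : ZMod (q j)) := by
        intro h
        rw [ZMod.natCast_eq_natCast_iff] at h
        have h2 := Nat.ModEq.eq_of_lt_of_lt h (by omega) (by omega)
        apply hne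
        obtain ⟨i, k⟩ := k
        have hi : i = j := (Finset.mem_filter.1 hk).2
        subst hi
        congr 1
        exact Subtype.ext h2.symm
      have h2 : (a : ZMod (q j)) ≠ -(k.2.1 : ZMod (q j)) := by
        intro h
        have h' : ((a + k.2.1 : ℕ) : ZMod (q j)) = 0 := by
          push_cast
          rw [h]; ring
        rw [ZMod.natCast_eq_zero_iff] at h'
        have := Nat.le_of_dvd (by omega) h'
        omega
      simp [h1, h2]
    · intro h
      refine absurd ?_ h
      rw [hT, Finset.mem_filter]
      exact ⟨hp, rfl⟩

  rw [hval] at hfa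
  exact_mod_cast hfa
end

section
/- For pairwise coprime natural numbers q₁, ..., q_ℓ > 4, the set of Ramachandra units ⋃_{j=1}^ℓ { ξ_{a,q_j} : 1 < a < q_j/2, gcd(a, q_j) = 1 } is multiplicatively independent, i.e., the only integer exponents α_{a,j} with ∏_{j,a} ξ_{a,q_j}^{α_{a,j}} = 1 are all zero. -/
open Complex

noncomputable def zetaC (m : ℕ) : ℂ := Complex.exp (2 * Real.pi * Complex.I / m)

/-- The exponent `d_a = (1-a)/2 · Σ_{d ∣ q, d ≠ q, gcd(d, q/d) = 1} d` (a rational number). -/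
noncomputable def ramExp (a q : ℕ) : ℚ :=
  (1 - (a : ℚ)) / 2 *
    ∑ d ∈ (Nat.divisors q).filter (fun d => d ≠ q ∧ Nat.Coprime d (q / d)), (d : ℚ)

/-- The Ramachandra unit `ξ_{a,q} = ζ_q^{d_a} ∏_{d ∣ q, d ≠ q, gcd(d,q/d)=1} (1-ζ_q^{ad})/(1-ζ_q^d)`,
where `ζ_q^{d_a}` is interpreted as `exp(2πi d_a / q)`. -/
noncomputable def ramUnit (a q : ℕ) : ℂ :=
  Complex.exp (2 * Real.pi * Complex.I * (ramExp a q : ℂ) / q) *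
    ∏ d ∈ (Nat.divisors q).filter (fun d => d ≠ q ∧ Nat.Coprime d (q / d)),
      (1 - zetaC q ^ (a * d)) / (1 - zetaC q ^ d)

noncomputable def hlog (x : ℝ) : ℝ := Real.log ‖1 - Complex.exp (2 * Real.pi * Complex.I * x)‖

lemma abel_tail {z : ℂ} (hz : ‖z‖ = 1) (w : ℕ → ℝ) (M : ℕ)
    (hw0 : ∀ n, M ≤ n → 0 ≤ w n) (hw : ∀ n, M ≤ n → w (n+1) ≤ w n) (N : ℕ) (hN : M ≤ N) :
    ‖(1 - z) * (∑ n ∈ Finset.range N, (w n : ℂ) * z ^ n - ∑ n ∈ Finset.range M, (w n : ℂ) * z ^ n)‖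
      ≤ 2 * w M := by
  have key : ‖(1 - z) * (∑ n ∈ Finset.range N, (w n : ℂ) * z ^ n
      - ∑ n ∈ Finset.range M, (w n : ℂ) * z ^ n) + w N * z ^ N‖ ≤ 2 * w M - w N := by
    induction N, hN using Nat.le_induction with
    | base =>
      simp [hz, abs_of_nonneg (hw0 M le_rfl)]
      linarith
    | succ n hn ih =>
      have e : (1 - z) * (∑ n ∈ Finset.range (n+1), (w n : ℂ) * z ^ n
        - ∑ n ∈ Finset.range M, (w n : ℂ) * z ^ n) + w (n+1) * z ^ (n+1) =
        ((1 - z) * (∑ n ∈ Finset.range n, (w n : ℂ) * z ^ n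
        - ∑ n ∈ Finset.range M, (w n : ℂ) * z ^ n) + w n * z ^ n) +
          ((w (n+1) - w n : ℝ) : ℂ) * z ^ (n+1) := by
        rw [Finset.sum_range_succ]; push_cast; ring
      rw [e]
      refine (norm_add_le _ _).trans ?_
      rw [norm_mul, norm_pow, hz, one_pow, mul_one, Complex.norm_real, Real.norm_eq_abs,
        abs_of_nonpos (by linarith [hw n hn])]
      linarith
  have h2 : ‖(w N : ℂ) * z ^ N‖ = w N := by
    simp [hz, abs_of_nonneg (hw0 N hN)]
  calc _ = ‖((1 - z) * (∑ n ∈ Finset.range N, (w n : ℂ) * z ^ n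
      - ∑ n ∈ Finset.range M, (w n : ℂ) * z ^ n) + w N * z ^ N) - w N * z ^ N‖ := by
        congr 1; ring
    _ ≤ _ := norm_sub_le _ _
    _ ≤ _ := by linarith

lemma abel_tail_hasSum {z : ℂ} (hz : ‖z‖ = 1) (w : ℕ → ℝ) (M : ℕ)
    (hw0 : ∀ n, M ≤ n → 0 ≤ w n) (hw : ∀ n, M ≤ n → w (n+1) ≤ w n) {S : ℂ}
    (hS : HasSum (fun n => (w n : ℂ) * z ^ n) S) :
    ‖(1 - z) * (S - ∑ n ∈ Finset.range M, (w n : ℂ) * z ^ n)‖ ≤ 2 * w M := by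
  have h1 := ((hS.tendsto_sum_nat.sub_const
    (∑ n ∈ Finset.range M, (w n : ℂ) * z ^ n)).const_mul (1 - z)).norm
  refine le_of_tendsto h1 ?_
  filter_upwards [Filter.eventually_ge_atTop M] with N hN
  exact abel_tail hz w M hw0 hw N hN

lemma expZeta_one (a : ℝ) (ha : Complex.exp (2 * Real.pi * Complex.I * a) ≠ 1) :
    HurwitzZeta.expZeta a 1 = - Complex.log (1 - Complex.exp (2 * Real.pi * Complex.I * a)) := by
  set z := Complex.exp (2 * Real.pi * Complex.I * a) with hzdef
  have hz : ‖z‖ = 1 := by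
    rw [hzdef, show (2 * Real.pi * Complex.I * a : ℂ) = ((2 * Real.pi * a : ℝ) : ℂ) * I by
      push_cast; ring]
    exact Complex.norm_exp_ofReal_mul_I _
  have hz1 : 1 - z ≠ 0 := sub_ne_zero.mpr ha.symm
  have ha0 : (a : UnitAddCircle) ≠ 0 := by
    intro h0
    rw [AddCircle.coe_eq_zero_iff] at h0
    obtain ⟨n, hn⟩ := h0
    apply ha
    rw [hzdef, Complex.exp_eq_one_iff]
    refine ⟨n, ?_⟩
    rw [← hn]; simp; ring
  have hslit : 1 - z ∈ slitPlane := by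
    left
    have h1 : z.re < 1 := by
      rcases lt_or_eq_of_le (hz ▸ Complex.re_le_norm z) with h | h
      · exact h
      · exfalso
        apply ha
        have : z.im = 0 := by
          have := Complex.sq_norm_sub_sq_re z
          rw [hz, h] at this
          nlinarith
        exact Complex.ext (by simpa using h) (by simpa using this)
    simpa using h1
  -- first bound
  have b1 : ∀ M : ℕ, 1 ≤ M → ‖(1 - z) * (HurwitzZeta.expZeta a 1 -
      ∑ n ∈ Finset.range M, ((1 / n : ℝ) : ℂ) * z ^ n)‖ ≤ 2 * (1 / M) := by
    intro M hM
    have ht : Filter.Tendsto (fun s : ℝ => ‖(1 - z) * (HurwitzZeta.expZeta a s -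
      ∑ n ∈ Finset.range M, (((n:ℝ) ^ (-s) : ℝ) : ℂ) * z ^ n)‖) (nhdsWithin 1 (Set.Ioi 1))
      (nhds (‖(1 - z) * (HurwitzZeta.expZeta a 1 -
      ∑ n ∈ Finset.range M, ((1 / n : ℝ) : ℂ) * z ^ n)‖)) := by
      have c1 : Filter.Tendsto (fun s : ℝ => HurwitzZeta.expZeta a s) (nhdsWithin 1 (Set.Ioi 1))
          (nhds (HurwitzZeta.expZeta a 1)) := by
        have : Continuous (fun s : ℝ => HurwitzZeta.expZeta a s) :=
          (HurwitzZeta.differentiable_expZeta_of_ne_zero ha0).continuous.comp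
            Complex.continuous_ofReal
        simpa using (this.tendsto 1).mono_left nhdsWithin_le_nhds
      refine ((c1.sub (tendsto_finsetSum _ fun n hn => ?_)).const_mul _).norm
      refine Filter.Tendsto.mul_const _ ?_
      refine (Complex.continuous_ofReal.tendsto _).comp ?_
      refine Filter.Tendsto.mono_left ?_ nhdsWithin_le_nhds
      rcases Nat.eq_zero_or_pos n with rfl | hn
      · simp only [CharP.cast_eq_zero, div_zero]
        refine tendsto_const_nhds.congr' ?_
        filter_upwards [eventually_ne_nhds (one_ne_zero : (1:ℝ) ≠ 0)] with s hs
        rw [Real.zero_rpow (neg_ne_zero.mpr hs)]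
      · have hn' : (0:ℝ) < n := by exact_mod_cast hn
        have : Continuous (fun s : ℝ => (n:ℝ) ^ (-s)) :=
          Real.continuous_const_rpow hn'.ne' |>.comp continuous_neg
        have h := this.tendsto 1
        rwa [Real.rpow_neg_one, ← one_div] at h
    have ht2 : Filter.Tendsto (fun s : ℝ => (2 * (1 / M : ℝ))) (nhdsWithin 1 (Set.Ioi 1))
      (nhds (2 * (1 / M))) := tendsto_const_nhds
    refine le_of_tendsto_of_tendsto ht ht2 ?_
    filter_upwards [self_mem_nhdsWithin] with s hs
    have hs' : (1:ℝ) < s := hs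
    have hS := HurwitzZeta.hasSum_expZeta_of_one_lt_re a (s := (s : ℂ)) (by simpa using hs')
    have hS' : HasSum (fun n : ℕ => (((n:ℝ) ^ (-s) : ℝ) : ℂ) * z ^ n) (HurwitzZeta.expZeta a s) := by
      refine hS.congr_fun ?_
      intro n
      rw [hzdef, ← Complex.exp_nat_mul, Complex.ofReal_cpow (Nat.cast_nonneg n)]
      push_cast
      rw [Complex.cpow_neg, div_eq_mul_inv, mul_comm]
      congr 2; ring
    refine (abel_tail_hasSum hz (fun n => (n:ℝ) ^ (-s)) M (fun n _ => by positivity) ?_ hS').trans ?_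
    · intro n hn
      have : (0:ℝ) < n := by exact_mod_cast (by omega : 0 < n)
      exact Real.rpow_le_rpow_of_nonpos this (by push_cast; linarith) (by linarith)
    · have hM' : (1:ℝ) ≤ M := by exact_mod_cast hM
      have := Real.rpow_le_rpow_of_exponent_le hM' (by linarith : -s ≤ -1)
      rw [Real.rpow_neg_one] at this
      simp only [one_div]
      linarith
  have b2 : ∀ M : ℕ, 1 ≤ M → ‖(1 - z) * (- Complex.log (1 - z) -
      ∑ n ∈ Finset.range M, ((1 / n : ℝ) : ℂ) * z ^ n)‖ ≤ 2 * (1 / M) := by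
    intro M hM
    have ht : Filter.Tendsto (fun r : ℝ => ‖(1 - z) * (- Complex.log (1 - r * z) -
      ∑ n ∈ Finset.range M, ((r ^ n / n : ℝ) : ℂ) * z ^ n)‖) (nhdsWithin 1 (Set.Iio 1))
      (nhds (‖(1 - z) * (- Complex.log (1 - z) -
      ∑ n ∈ Finset.range M, ((1 / n : ℝ) : ℂ) * z ^ n)‖)) := by
      have c : ContinuousAt (fun r : ℝ => ‖(1 - z) * (- Complex.log (1 - r * z) -
        ∑ n ∈ Finset.range M, ((r ^ n / n : ℝ) : ℂ) * z ^ n)‖) 1 := by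
        have : ContinuousAt (fun r : ℝ => Complex.log (1 - r * z)) 1 := by
          refine ContinuousAt.clog (by fun_prop) (by simpa using hslit)
        fun_prop
      have h := c.tendsto.mono_left (nhdsWithin_le_nhds (s := Set.Iio 1))
      simpa using h
    have ht2 : Filter.Tendsto (fun s : ℝ => (2 * (1 / M : ℝ))) (nhdsWithin 1 (Set.Iio 1))
      (nhds (2 * (1 / M))) := tendsto_const_nhds
    refine le_of_tendsto_of_tendsto ht ht2 ?_
    filter_upwards [self_mem_nhdsWithin, mem_nhdsWithin_of_mem_nhds (Ioi_mem_nhds zero_lt_one)]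
      with r hr hr0
    have hr' : r < 1 := hr
    have hr0' : 0 < r := hr0
    have hS := Complex.hasSum_taylorSeries_neg_log (z := r * z) (by
      rw [norm_mul, hz, mul_one, Complex.norm_real, Real.norm_eq_abs, abs_of_pos hr0']; exact hr')
    have hS' : HasSum (fun n : ℕ => ((r ^ n / n : ℝ) : ℂ) * z ^ n) (- Complex.log (1 - r * z)) := by
      refine hS.congr_fun ?_
      intro n
      push_cast
      rw [mul_pow]; ring
    refine (abel_tail_hasSum hz (fun n => r ^ n / n) M (fun n _ => by positivity) ?_ hS').trans ?_
    · intro n hn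
      have : (0:ℝ) < n := by exact_mod_cast (by omega : 0 < n)
      have h1 : r ^ (n+1) ≤ r ^ n := pow_le_pow_of_le_one hr0'.le hr'.le (by omega)
      push_cast
      gcongr
      linarith
    · have h1 : r ^ M ≤ 1 := pow_le_one₀ hr0'.le hr'.le
      gcongr
  have lim : Filter.Tendsto (fun M : ℕ => 2 * (1 / (M:ℝ)) + 2 * (1 / (M:ℝ))) Filter.atTop (nhds 0) := by
    have := (tendsto_one_div_atTop_nhds_zero_nat (𝕜 := ℝ)).const_mul 2
    simpa using this.add this
  have hle : ‖(1 - z) * (HurwitzZeta.expZeta a 1 - (- Complex.log (1 - z)))‖ ≤ 0 := by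
    refine ge_of_tendsto lim ?_
    filter_upwards [Filter.eventually_ge_atTop 1] with M hM
    calc _ = ‖(1 - z) * (HurwitzZeta.expZeta a 1 -
      ∑ n ∈ Finset.range M, ((1 / n : ℝ) : ℂ) * z ^ n) - (1 - z) * (- Complex.log (1 - z) -
      ∑ n ∈ Finset.range M, ((1 / n : ℝ) : ℂ) * z ^ n)‖ := by congr 1; ring
      _ ≤ _ := norm_sub_le _ _
      _ ≤ _ := add_le_add (b1 M hM) (b2 M hM)
  have := norm_le_zero_iff.mp hle
  exact sub_eq_zero.mp ((mul_eq_zero.mp this).resolve_left hz1)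

lemma cosZeta_one (a : ℝ) (ha : Complex.exp (2 * Real.pi * Complex.I * a) ≠ 1) :
    HurwitzZeta.cosZeta a 1 = - (hlog a : ℂ) := by
  have hconj : Complex.exp (2 * Real.pi * Complex.I * ((-a : ℝ))) =
      (starRingEnd ℂ) (Complex.exp (2 * Real.pi * Complex.I * a)) := by
    rw [← Complex.exp_conj]; simp [Complex.conj_ofNat]
  have ha' : Complex.exp (2 * Real.pi * Complex.I * ((-a : ℝ))) ≠ 1 := by
    rw [hconj]; intro h; apply ha
    have := congrArg (starRingEnd ℂ) h
    simpa using this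
  rw [HurwitzZeta.cosZeta_eq, ← AddCircle.coe_neg, expZeta_one a ha, expZeta_one _ ha', hconj]
  have harg : (1 - Complex.exp (2 * Real.pi * Complex.I * a)).arg ≠ Real.pi := by
    intro h
    rw [Complex.arg_eq_pi_iff] at h
    have h1 : (Complex.exp (2 * Real.pi * Complex.I * a)).re ≤ 1 := by
      refine (Complex.re_le_norm _).trans ?_
      rw [show (2 * Real.pi * Complex.I * a : ℂ) = ((2 * Real.pi * a : ℝ) : ℂ) * I by
        push_cast; ring, Complex.norm_exp_ofReal_mul_I]
    have := h.1
    simp only [sub_re, one_re] at this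
    linarith
  have : (1 - (starRingEnd ℂ) (Complex.exp (2 * Real.pi * Complex.I * a))) =
    (starRingEnd ℂ) (1 - Complex.exp (2 * Real.pi * Complex.I * a)) := by simp
  rw [this, Complex.log_conj _ harg, hlog, ← Complex.log_re]
  have := Complex.add_conj (Complex.log (1 - Complex.exp (2 * Real.pi * Complex.I * a)))
  push_cast at this
  linear_combination (-1/2) * this

lemma hlog_add_int (x : ℝ) (n : ℤ) : hlog (x + n) = hlog x := by
  unfold hlog
  congr 3
  rw [Complex.exp_eq_exp_iff_exists_int]
  exact ⟨n, by push_cast; ring⟩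

lemma exp_ne_one_of_coprime {u f : ℕ} (hf : 1 < f) (hu : Nat.Coprime u f) :
    Complex.exp (2 * Real.pi * Complex.I * ((u / f : ℝ) : ℂ)) ≠ 1 := by
  intro h
  rw [Complex.exp_eq_one_iff] at h
  obtain ⟨n, hn⟩ := h
  have hf' : (f : ℂ) ≠ 0 := by exact_mod_cast (by omega : f ≠ 0)
  have h2 : (2 * Real.pi * Complex.I : ℂ) ≠ 0 := Complex.two_pi_I_ne_zero
  have h3 : ((u / f : ℝ) : ℂ) = n := by
    apply mul_left_cancel₀ h2; rw [hn]; ring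
  push_cast at h3
  rw [div_eq_iff hf'] at h3
  have h4 : (u : ℤ) = n * f := by exact_mod_cast h3
  have h5 : f ∣ u := by
    have : (f : ℤ) ∣ u := ⟨n, by rw [h4]; ring⟩
    exact_mod_cast this
  have h6 : f ∣ 1 := hu ▸ Nat.dvd_gcd h5 dvd_rfl
  have := Nat.dvd_one.mp h6
  omega

lemma hlog_distribution (n : ℕ) (hn : 0 < n) (y : ℝ)
    (hy : Complex.exp (2 * Real.pi * Complex.I * ((n * y : ℝ) : ℂ)) ≠ 1) :
    ∑ k ∈ Finset.range n, hlog (y + k / n) = hlog (n * y) := by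
  set z := Complex.exp (2 * Real.pi * Complex.I * y) with hz
  set ζ := Complex.exp (2 * Real.pi * Complex.I / n) with hζ
  have hprim : IsPrimitiveRoot ζ n := Complex.isPrimitiveRoot_exp n hn.ne'
  have hn' : (n : ℂ) ≠ 0 := by exact_mod_cast hn.ne'
  have hzn : Complex.exp (2 * Real.pi * Complex.I * ((n * y : ℝ) : ℂ)) = z ^ n := by
    rw [hz, ← Complex.exp_nat_mul]; congr 1; push_cast; ring
  have hterm : ∀ k : ℕ, Complex.exp (2 * Real.pi * Complex.I * ((y + k / n : ℝ) : ℂ)) = ζ ^ k * z := by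
    intro k
    rw [hz, hζ, ← Complex.exp_nat_mul, ← Complex.exp_add]; congr 1; push_cast; field_simp; ring
  have hprod : ∏ k ∈ Finset.range n, (1 - ζ ^ k * z) = 1 - z ^ n := by
    have h := hprim.pow_sub_pow_eq_prod_sub_mul 1 z hn
    rw [one_pow] at h
    rw [h]
    symm
    have himg : Polynomial.nthRootsFinset n (1:ℂ) = (Finset.range n).image (fun k => ζ ^ k) := by
      ext x
      simp only [Polynomial.mem_nthRootsFinset hn, Finset.mem_image, Finset.mem_range]
      constructor
      · intro hx
        have : NeZero n := ⟨hn.ne'⟩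
        obtain ⟨i, hi, hx⟩ := hprim.eq_pow_of_pow_eq_one hx
        exact ⟨i, hi, hx⟩
      · rintro ⟨i, hi, rfl⟩
        rw [← pow_mul, mul_comm, pow_mul, hprim.pow_eq_one, one_pow]
    rw [himg, Finset.prod_image]
    intro i hi j hj hij
    exact hprim.pow_inj (by simpa using hi) (by simpa using hj) hij
  have hne : 1 - z ^ n ≠ 0 := by
    rw [← hzn]; exact sub_ne_zero.mpr hy.symm
  unfold hlog
  rw [hzn, ← hprod, norm_prod, Real.log_prod]
  · exact Finset.sum_congr rfl fun k _ => by rw [hterm]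
  · intro k hk h0
    rw [← hprod] at hne
    exact hne (Finset.prod_eq_zero hk (norm_eq_zero.mp h0))

lemma sum_range_mul_eq {M : Type*} [AddCommMonoid M] (F : ℕ → M) (f n : ℕ) :
    ∑ t ∈ Finset.range (f * n), F t = ∑ k ∈ Finset.range n, ∑ u ∈ Finset.range f, F (f * k + u) := by
  induction n with
  | zero => simp
  | succ n ih => rw [Nat.mul_succ, Finset.sum_range_add, ih, Finset.sum_range_succ]

noncomputable def Tsum {f : ℕ} (χ : DirichletCharacter ℂ f) : ℂ :=
  ∑ u ∈ Finset.range f, χ (u : ZMod f) * hlog (u / f)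

lemma Tsum_level {f : ℕ} (hf : 1 < f) (χ : DirichletCharacter ℂ f) (n : ℕ) (hn : 0 < n) :
    ∑ t ∈ Finset.range (f * n), χ (t : ZMod f) * hlog (t / (f * n : ℕ)) = Tsum χ := by
  rw [sum_range_mul_eq, Finset.sum_comm, Tsum]
  refine Finset.sum_congr rfl fun u hu => ?_
  have hn' : (n : ℝ) ≠ 0 := by exact_mod_cast hn.ne'
  have hf' : (f : ℝ) ≠ 0 := by exact_mod_cast (by omega : f ≠ 0)
  have e : ∀ k : ℕ, χ ((f * k + u : ℕ) : ZMod f) = χ (u : ZMod f) := by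
    intro k; simp
  simp_rw [e]
  rw [← Finset.mul_sum]
  by_cases hc : Nat.Coprime u f
  · congr 1
    rw [← Complex.ofReal_sum]
    congr 1
    have hd := hlog_distribution n hn (u / (f * n : ℕ)) (by
      have := exp_ne_one_of_coprime hf hc
      convert this using 5
      push_cast; field_simp)
    have e2 : (n * (u / (f * n : ℕ)) : ℝ) = u / f := by push_cast; field_simp
    rw [e2] at hd
    rw [← hd]
    refine Finset.sum_congr rfl fun k _ => ?_
    congr 1; push_cast; field_simp; ring
  · have : χ (u : ZMod f) = 0 := by
      apply MulChar.map_nonunit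
      rwa [ZMod.isUnit_iff_coprime]
    rw [this]; simp

lemma sum_zmod_val {M : Type*} [AddCommMonoid M] (F : ℕ → M) (f : ℕ) [NeZero f] :
    ∑ j : ZMod f, F j.val = ∑ u ∈ Finset.range f, F u := by
  obtain ⟨k, rfl⟩ := Nat.exists_eq_succ_of_ne_zero (NeZero.ne f)
  exact Fin.sum_univ_eq_sum_range F (k+1)

lemma Tsum_ne_zero {f : ℕ} [NeZero f] (hf : 1 < f) (χ : DirichletCharacter ℂ f)
    (hprim : χ.IsPrimitive) (heven : χ.Even) : Tsum χ ≠ 0 := by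
  have hne : χ ≠ 1 := by
    rintro rfl
    rw [DirichletCharacter.isPrimitive_def, DirichletCharacter.conductor_one] at hprim
    omega
  have h0 : χ 0 = 0 := DirichletCharacter.map_zero' χ (by omega)
  have hL := ZMod.LFunction_dft (χ : ZMod f → ℂ) (s := 1) (Or.inl h0)
  -- right side
  have hR : ∑ j : ZMod f, χ j * HurwitzZeta.expZeta (ZMod.toAddCircle (-j)) 1 = - Tsum χ := by
    have r1 : ∑ j : ZMod f, χ j * HurwitzZeta.expZeta (ZMod.toAddCircle (-j)) 1 =
        ∑ j : ZMod f, χ j * HurwitzZeta.expZeta (ZMod.toAddCircle j) 1 := by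
      rw [← Equiv.sum_comp (Equiv.neg (ZMod f))]
      refine Finset.sum_congr rfl fun j _ => ?_
      simp [heven.eval_neg]
    have r2 : ∑ j : ZMod f, χ j * HurwitzZeta.expZeta (ZMod.toAddCircle (-j)) 1 =
        ∑ j : ZMod f, χ j * HurwitzZeta.cosZeta (ZMod.toAddCircle j) 1 := by
      have : ∀ j : ZMod f, χ j * HurwitzZeta.cosZeta (ZMod.toAddCircle j) 1 =
        (χ j * HurwitzZeta.expZeta (ZMod.toAddCircle j) 1 +
          χ j * HurwitzZeta.expZeta (ZMod.toAddCircle (-j)) 1) / 2 := by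
        intro j; rw [HurwitzZeta.cosZeta_eq, map_neg]; ring
      simp_rw [this]
      rw [← Finset.sum_div, Finset.sum_add_distrib, ← r1]; ring
    rw [r2, Tsum, ← sum_zmod_val (fun u => χ (u : ZMod f) * hlog (u / f)), ← Finset.sum_neg_distrib]
    refine Finset.sum_congr rfl fun j _ => ?_
    rw [ZMod.natCast_zmod_val]
    by_cases hj : IsUnit j
    · rw [ZMod.toAddCircle_apply, cosZeta_one]
      · ring
      · apply exp_ne_one_of_coprime hf
        rw [← ZMod.isUnit_iff_coprime, ZMod.natCast_zmod_val]; exact hj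
    · rw [MulChar.map_nonunit χ hj]; simp
  intro hT
  rw [hR, hT, neg_zero] at hL
  have hdft : ZMod.dft (χ : ZMod f → ℂ) = fun k => gaussSum χ ZMod.stdAddChar * χ⁻¹ k := by
    ext k
    rw [hprim.fourierTransform_eq_inv_mul_gaussSum]
    have : χ⁻¹ (-k) = χ⁻¹ k := by
      rw [DirichletCharacter.Even.eval_neg]
      have h1 : χ (-1) = 1 := heven
      show χ⁻¹ (-1) = 1
      rw [MulChar.inv_apply_eq_inv, h1]; simp
    rw [this]; ring
  have hg : gaussSum χ ZMod.stdAddChar ≠ 0 := by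
    intro hg
    rw [hg] at hdft
    have h00 : ZMod.dft (χ : ZMod f → ℂ) = 0 := by rw [hdft]; ext; simp
    have := (LinearEquiv.map_eq_zero_iff ZMod.dft).mp h00
    have h1 : χ 1 = 0 := congrFun this 1
    simp at h1
  have hL2 : ZMod.LFunction (ZMod.dft (χ : ZMod f → ℂ)) 1 =
      gaussSum χ ZMod.stdAddChar * DirichletCharacter.LFunction χ⁻¹ 1 := by
    rw [hdft, DirichletCharacter.LFunction, ZMod.LFunction, ZMod.LFunction]
    simp_rw [mul_assoc]
    rw [← Finset.mul_sum]; ring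
  rw [hL2] at hL
  rcases mul_eq_zero.mp hL with h | h
  · exact hg h
  · exact DirichletCharacter.LFunction_apply_one_ne_zero (inv_ne_one.mpr hne) h

lemma hlog_congr_mod {m a b : ℕ} (hm : 0 < m) (h : a ≡ b [MOD m]) :
    hlog (a / m) = hlog (b / m) := by
  have hm' : (m : ℝ) ≠ 0 := by exact_mod_cast hm.ne'
  have h1 : (m : ℤ) ∣ (b : ℤ) - a := Nat.modEq_iff_dvd.mp h
  obtain ⟨k, hk⟩ := h1
  have hk' : (b : ℝ) = a + m * k := by
    have : (b : ℤ) = a + m * k := by linarith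
    exact_mod_cast this
  rw [← hlog_add_int (a / m) k, hk']
  congr 1; field_simp

lemma coprime_indicator (t m : ℕ) (hm : m ≠ 0) :
    (if Nat.Coprime t m then (1:ℂ) else 0) =
      ∑ I ∈ m.primeFactors.powerset, (-1) ^ I.card * (if (∏ p ∈ I, p) ∣ t then (1:ℂ) else 0) := by
  have h1 : (if Nat.Coprime t m then (1:ℂ) else 0) =
      ∏ p ∈ m.primeFactors, (-(if p ∣ t then (1:ℂ) else 0) + 1) := by
    split_ifs with h
    · symm
      refine Finset.prod_eq_one fun p hp => ?_
      have hp' := Nat.mem_primeFactors.mp hp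
      have : ¬ p ∣ t := fun hpt => Nat.not_coprime_of_dvd_of_dvd hp'.1.one_lt hpt hp'.2.1 h
      simp [this]
    · symm
      obtain ⟨p, hp, hpt, hpm⟩ := Nat.Prime.not_coprime_iff_dvd.mp h
      refine Finset.prod_eq_zero (Nat.mem_primeFactors.mpr ⟨hp, hpm, hm⟩) ?_
      simp [hpt]
  rw [h1, Finset.prod_add]
  refine Finset.sum_congr rfl fun I hI => ?_
  rw [Finset.prod_const_one, mul_one, Finset.prod_neg, Finset.prod_ite_zero, Finset.prod_const_one]
  congr 2
  have : (∀ i ∈ I, i ∣ t) ↔ (∏ p ∈ I, p) ∣ t := by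
    constructor
    · intro h
      refine Finset.prod_primes_dvd _ (fun p hp => ?_) h
      exact (Nat.prime_of_mem_primeFactors (Finset.mem_powerset.mp hI hp)).prime
    · intro h i hi
      exact (Finset.dvd_prod_of_mem _ hi).trans h
  simp [this]

lemma sum_multiples {M : Type*} [AddCommMonoid M] (G : ℕ → M) (K n : ℕ) (hK : 0 < K) :
    ∑ t ∈ Finset.range (K * n), (if K ∣ t then G t else 0) = ∑ k ∈ Finset.range n, G (K * k) := by
  rw [sum_range_mul_eq]
  refine Finset.sum_congr rfl fun k _ => ?_
  rw [Finset.sum_eq_single 0]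
  · simp
  · intro u hu hu0
    rw [if_neg]
    intro h
    have : K ∣ u := (Nat.dvd_add_right (Dvd.intro _ rfl)).mp h
    have := Nat.le_of_dvd (Nat.pos_of_ne_zero hu0) this
    have := Finset.mem_range.mp hu
    omega
  · intro h; exact absurd (Finset.mem_range.mpr hK) h

lemma Ssum_eq {f : ℕ} (hf : 1 < f) (χ : DirichletCharacter ℂ f) (m : ℕ) (hm : 0 < m) (hfm : f ∣ m) :
    ∑ t ∈ (Finset.range m).filter (fun t => Nat.Coprime t m), χ (t : ZMod f) * hlog (t / m) =
      (∏ p ∈ m.primeFactors, (1 - χ (p : ZMod f))) * Tsum χ := by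
  have h1 : ∀ t : ℕ, (if Nat.Coprime t m then χ (t : ZMod f) * (hlog (t / m) : ℂ) else 0) =
      ∑ I ∈ m.primeFactors.powerset, (-1) ^ I.card *
        (if (∏ p ∈ I, p) ∣ t then χ (t : ZMod f) * (hlog (t / m) : ℂ) else 0) := by
    intro t
    have := coprime_indicator t m hm.ne'
    calc _ = (if Nat.Coprime t m then (1:ℂ) else 0) * (χ (t : ZMod f) * (hlog (t / m) : ℂ)) := by
          split_ifs <;> simp
      _ = _ := by
          rw [this, Finset.sum_mul]
          refine Finset.sum_congr rfl fun I _ => ?_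
          split_ifs <;> simp
  rw [Finset.sum_filter]
  simp_rw [h1]
  rw [Finset.sum_comm]
  have h2 : ∀ I ∈ m.primeFactors.powerset, ∑ t ∈ Finset.range m, (-1) ^ I.card *
        (if (∏ p ∈ I, p) ∣ t then χ (t : ZMod f) * (hlog (t / m) : ℂ) else 0) =
      (∏ p ∈ I, (-χ (p : ZMod f))) * Tsum χ := by
    intro I hI
    have hI' := Finset.mem_powerset.mp hI
    rw [← Finset.mul_sum, Finset.prod_neg, mul_assoc]
    congr 1
    set K := ∏ p ∈ I, p with hKdef
    have hKχ : ∏ p ∈ I, χ (p : ZMod f) = χ (K : ZMod f) := by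
      rw [hKdef, Nat.cast_prod, map_prod]
    rw [hKχ]
    have hKm : K ∣ m := by
      refine Finset.prod_primes_dvd _ (fun p hp => ?_) (fun p hp => ?_)
      · exact (Nat.prime_of_mem_primeFactors (hI' hp)).prime
      · exact Nat.dvd_of_mem_primeFactors (hI' hp)
    obtain ⟨m', hm'⟩ := hKm
    have hK0 : 0 < K := Nat.pos_of_ne_zero (by rintro h; rw [h] at hm'; omega)
    have hm'0 : 0 < m' := Nat.pos_of_ne_zero (by rintro h; rw [h] at hm'; omega)
    have hKR : (K : ℝ) ≠ 0 := by exact_mod_cast hK0.ne'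
    have hmR : (m' : ℝ) ≠ 0 := by exact_mod_cast hm'0.ne'
    rw [hm', sum_multiples (fun t => χ (t : ZMod f) * (hlog (t / (K * m' : ℕ)) : ℂ)) K m' hK0]
    have h3 : ∀ k : ℕ, χ ((K * k : ℕ) : ZMod f) * (hlog ((K * k : ℕ) / (K * m' : ℕ)) : ℂ) =
        χ (K : ZMod f) * (χ (k : ZMod f) * (hlog (k / m') : ℂ)) := by
      intro k
      have : (((K * k : ℕ) : ℝ) / (K * m' : ℕ)) = k / m' := by push_cast; field_simp
      rw [this, Nat.cast_mul, map_mul, mul_assoc]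
    simp_rw [h3]
    rw [← Finset.mul_sum]
    by_cases hc : Nat.Coprime K f
    · congr 1
      have : f ∣ m' := hc.symm.dvd_of_dvd_mul_left (hm' ▸ hfm)
      obtain ⟨n, rfl⟩ := this
      exact Tsum_level hf χ n (Nat.pos_of_ne_zero (by rintro rfl; simp at hm'0))
    · have : χ (K : ZMod f) = 0 := by
        apply MulChar.map_nonunit
        rwa [ZMod.isUnit_iff_coprime]
      rw [this]; simp
  rw [Finset.sum_congr rfl h2, ← Finset.sum_mul]
  congr 1
  have : ∀ p : ℕ, 1 - χ (p : ZMod f) = -χ (p : ZMod f) + 1 := fun p => by ring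
  simp_rw [this]
  rw [Finset.prod_add]
  simp

lemma sum_units_zmod {M : Type*} [AddCommMonoid M] (m : ℕ) [NeZero m] (F : ZMod m → M) :
    ∑ y : (ZMod m)ˣ, F y = ∑ t ∈ (Finset.range m).filter (fun t => Nat.Coprime t m), F (t : ZMod m) := by
  rw [Finset.sum_filter, ← sum_zmod_val (fun t => if Nat.Coprime t m then F (t : ZMod m) else 0),
    ← Finset.sum_filter]
  refine Finset.sum_bij (fun y _ => (y : ZMod m)) ?_ ?_ ?_ ?_
  · intro y _
    simpa using ZMod.val_coe_unit_coprime y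
  · intro y _ z _ h
    exact Units.ext h
  · intro x hx
    have hx' := (Finset.mem_filter.mp hx).2
    refine ⟨ZMod.unitOfCoprime x.val hx', Finset.mem_univ _, ?_⟩
    simp
  · intro y _
    simp

lemma sum_units_mul {d m : ℕ} [NeZero d] [NeZero m] (hc : Nat.Coprime d m) (F : ZMod m → ℂ) :
    ∑ t : (ZMod (d * m))ˣ, F (ZMod.castHom (Dvd.intro_left d rfl) (ZMod m) (t : ZMod (d * m))) =
      Nat.totient d * ∑ y : (ZMod m)ˣ, F y := by
  let e : (ZMod (d * m))ˣ ≃ (ZMod d)ˣ × (ZMod m)ˣ :=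
    ((Units.mapEquiv (ZMod.chineseRemainder hc).toMulEquiv).trans MulEquiv.prodUnits).toEquiv
  have he : ∀ t : (ZMod (d * m))ˣ, ((e t).2 : ZMod m) =
      ZMod.castHom (Dvd.intro_left d rfl) (ZMod m) (t : ZMod (d * m)) := by
    intro t
    have : (RingHom.snd (ZMod d) (ZMod m)).comp (ZMod.chineseRemainder hc : ZMod (d * m) →+* _) =
      ZMod.castHom (Dvd.intro_left d rfl) (ZMod m) := RingHom.ext_zmod _ _
    rw [← this]; rfl
  simp_rw [← he]
  rw [Equiv.sum_comp e (fun x => F x.2), Fintype.sum_prod_type]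
  simp [ZMod.card_units_eq_totient]

lemma Usum_eq_zero {q d m : ℕ} [NeZero q] (hq : q = d * m) (χ : DirichletCharacter ℂ q)
    (hf : ¬ χ.conductor ∣ m) :
    ∑ t : (ZMod q)ˣ, χ t * (hlog ((t : ZMod q).val * d / q) : ℂ) = 0 := by
  have hq0 : q ≠ 0 := NeZero.ne q
  have hd0 : d ≠ 0 := by rintro rfl; simp at hq; exact hq0 hq
  have hm0 : m ≠ 0 := by rintro rfl; simp at hq; exact hq0 hq
  have hmq : m ∣ q := ⟨d, by rw [hq]; ring⟩
  have hnf : ¬ χ.FactorsThrough m := by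
    intro h
    exact hf ((DirichletCharacter.mem_conductorSet_iff_conductor_dvd χ hmq).mp h)
  rw [DirichletCharacter.factorsThrough_iff_ker_unitsMap hmq, SetLike.not_le_iff_exists] at hnf
  obtain ⟨u, hu, hu'⟩ := hnf
  rw [MonoidHom.mem_ker] at hu hu'
  have hχu : χ u ≠ 1 := by
    intro h
    apply hu'
    ext
    simpa using h
  set S := ∑ t : (ZMod q)ˣ, χ t * (hlog ((t : ZMod q).val * d / q) : ℂ) with hS
  have hSS : S = χ u * S := by
    rw [hS, Finset.mul_sum, ← Equiv.sum_comp (Equiv.mulLeft u)]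
    refine Finset.sum_congr rfl fun t _ => ?_
    have hh : ∀ n : ℕ, (n * d / q : ℝ) = n / m := by
      intro n
      have : (d : ℝ) ≠ 0 := by exact_mod_cast hd0
      have : (m : ℝ) ≠ 0 := by exact_mod_cast hm0
      rw [hq]; push_cast; field_simp
    rw [hh, hh, hlog_congr_mod (b := (t : ZMod q).val) (Nat.pos_of_ne_zero hm0)]
    · simp [mul_assoc]
    · rw [← ZMod.natCast_eq_natCast_iff]
      have hu2 : ZMod.castHom hmq (ZMod m) (u : ZMod q) = 1 := by
        have := congrArg Units.val hu
        simpa [ZMod.unitsMap_def] using this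
      have c : ∀ x : ZMod q, ((x.val : ℕ) : ZMod m) = ZMod.castHom hmq (ZMod m) x := by
        intro x; simp [ZMod.natCast_val]
      rw [c, c]
      simp only [Equiv.coe_mulLeft, Units.val_mul, map_mul, hu2, one_mul]
  have : (χ u - 1) * S = 0 := by linear_combination -hSS
  exact (mul_eq_zero.mp this).resolve_left (sub_ne_zero.mpr hχu)

lemma prim_apply {q : ℕ} (χ : DirichletCharacter ℂ q) {t : ℕ} (ht : Nat.Coprime t q) :
    χ.primitiveCharacter (t : ZMod χ.conductor) = χ (t : ZMod q) := by
  have := DirichletCharacter.primitiveCharacter_apply_of_isCoprime χ (a := t)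
    (Nat.isCoprime_iff_coprime.mpr ht)
  simpa using this

lemma Usum_eq {q d m : ℕ} [NeZero q] (hq : q = d * m) (hc : Nat.Coprime d m)
    (χ : DirichletCharacter ℂ q) (hf1 : 1 < χ.conductor) (hf : χ.conductor ∣ m) :
    ∑ t : (ZMod q)ˣ, χ t * (hlog ((t : ZMod q).val * d / q) : ℂ) =
      Nat.totient d * ((∏ p ∈ m.primeFactors, (1 - χ.primitiveCharacter (p : ZMod χ.conductor)))
        * Tsum χ.primitiveCharacter) := by
  have hq0 : q ≠ 0 := NeZero.ne q
  have hd0 : d ≠ 0 := by rintro rfl; simp at hq; exact hq0 hq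
  have hm0 : m ≠ 0 := by rintro rfl; simp at hq; exact hq0 hq
  have : NeZero d := ⟨hd0⟩
  have : NeZero m := ⟨hm0⟩
  subst hq
  let F : ZMod m → ℂ := fun x => χ.primitiveCharacter (x.val : ZMod χ.conductor) * hlog (x.val / m)
  have h1 : ∀ t : (ZMod (d*m))ˣ, χ t * (hlog ((t : ZMod (d*m)).val * d / (d*m : ℕ)) : ℂ) =
      F (ZMod.castHom (Dvd.intro_left d rfl) (ZMod m) (t : ZMod (d * m))) := by
    intro t
    have hmod : (ZMod.castHom (Dvd.intro_left d rfl) (ZMod m) (t : ZMod (d * m))).val ≡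
        (t : ZMod (d * m)).val [MOD m] := by
      rw [← ZMod.natCast_eq_natCast_iff]
      simp [ZMod.natCast_val]
    have hh : ((t : ZMod (d*m)).val * d / (d*m : ℕ) : ℝ) = (t : ZMod (d*m)).val / m := by
      have : (d : ℝ) ≠ 0 := by exact_mod_cast hd0
      have : (m : ℝ) ≠ 0 := by exact_mod_cast hm0
      push_cast; field_simp
    simp only [F]
    rw [hlog_congr_mod (Nat.pos_of_ne_zero hm0) hmod, hh]
    congr 1
    rw [(ZMod.natCast_eq_natCast_iff _ _ _).mpr (hmod.of_dvd hf),
      prim_apply χ (ZMod.val_coe_unit_coprime t), ZMod.natCast_zmod_val]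
  simp_rw [h1]
  rw [sum_units_mul hc F, sum_units_zmod, ← Ssum_eq hf1 _ m (Nat.pos_of_ne_zero hm0) hf]
  congr 1
  refine Finset.sum_congr rfl fun t ht => ?_
  have : t < m := by simpa using (Finset.mem_filter.mp ht).1
  simp only [F]
  rw [ZMod.val_natCast, Nat.mod_eq_of_lt this]

lemma unitary_fact {q d : ℕ} (_hq : q ≠ 0) (hd : d ∣ q) (hc : Nat.Coprime d (q / d)) {p : ℕ}
    (hp : p ∈ d.primeFactors) : q.factorization p = d.factorization p := by
  conv_lhs => rw [← Nat.mul_div_cancel' hd]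
  exact Nat.factorization_eq_of_coprime_left hc (by simpa using hp)

lemma unitary_prod {q d : ℕ} (hq : q ≠ 0) (hd : d ∣ q) (hc : Nat.Coprime d (q / d)) :
    ∏ p ∈ d.primeFactors, p ^ q.factorization p = d := by
  have hd0 : d ≠ 0 := by rintro rfl; exact hq (zero_dvd_iff.mp hd)
  conv_rhs => rw [← Nat.prod_factorization_pow_eq_self hd0]
  rw [Finsupp.prod, Nat.support_factorization]
  exact Finset.prod_congr rfl fun p hp => by rw [unitary_fact hq hd hc hp]

lemma unitary_primeFactors {q : ℕ} {I : Finset ℕ} (hI : I ⊆ q.primeFactors) :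
    (∏ p ∈ I, p ^ q.factorization p).primeFactors = I := by
  have hpr : ∀ p ∈ I, p.Prime := fun p hp => Nat.prime_of_mem_primeFactors (hI hp)
  ext r
  rw [Nat.mem_primeFactors]
  constructor
  · rintro ⟨hr, hd, _⟩
    obtain ⟨p, hp, hrp⟩ := (Prime.dvd_finsetProd_iff hr.prime _).mp hd
    have := (Nat.prime_dvd_prime_iff_eq hr (hpr p hp)).mp (hr.dvd_of_dvd_pow hrp)
    rwa [this]
  · intro hr
    refine ⟨hpr r hr, ?_, ?_⟩
    · refine dvd_trans (dvd_pow_self r ?_) (Finset.dvd_prod_of_mem _ hr)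
      have h := hI hr
      rw [← Nat.support_factorization] at h
      exact Finsupp.mem_support_iff.mp h
    · exact Finset.prod_ne_zero_iff.mpr fun p hp => pow_ne_zero _ (hpr p hp).ne_zero

lemma unitary_compl {q : ℕ} (hq : q ≠ 0) {I : Finset ℕ} (hI : I ⊆ q.primeFactors) :
    (∏ p ∈ I, p ^ q.factorization p) * (∏ p ∈ q.primeFactors \ I, p ^ q.factorization p) = q := by
  rw [mul_comm, Finset.prod_sdiff hI]
  conv_rhs => rw [← Nat.prod_factorization_pow_eq_self hq]
  rw [Finsupp.prod, Nat.support_factorization]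

lemma sum_unitary {q : ℕ} (hq : q ≠ 0) (A B : ℕ → ℂ) :
    ∑ d ∈ (Nat.divisors q).filter (fun d => Nat.Coprime d (q / d)),
      (∏ p ∈ d.primeFactors, A p) * (∏ p ∈ (q / d).primeFactors, B p) =
    ∏ p ∈ q.primeFactors, (A p + B p) := by
  rw [Finset.prod_add]
  refine Finset.sum_bij' (fun d _ => d.primeFactors) (fun I _ => ∏ p ∈ I, p ^ q.factorization p)
    ?_ ?_ ?_ ?_ ?_
  · intro d hd
    simp only [Finset.mem_filter, Nat.mem_divisors] at hd
    exact Finset.mem_powerset.mpr (Nat.primeFactors_mono hd.1.1 hq)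
  · intro I hI
    have hI' := Finset.mem_powerset.mp hI
    have h := unitary_compl hq hI'
    have h0 : (∏ p ∈ I, p ^ q.factorization p) ≠ 0 := left_ne_zero_of_mul (h ▸ hq)
    have h0' : (∏ p ∈ q.primeFactors \ I, p ^ q.factorization p) ≠ 0 :=
      right_ne_zero_of_mul (h ▸ hq)
    simp only [Finset.mem_filter, Nat.mem_divisors]
    refine ⟨⟨Dvd.intro _ h, hq⟩, ?_⟩
    rw [Nat.div_eq_of_eq_mul_right (Nat.pos_of_ne_zero h0) h.symm, ← Nat.disjoint_primeFactors h0 h0',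
      unitary_primeFactors hI', unitary_primeFactors Finset.sdiff_subset]
    exact Finset.disjoint_sdiff
  · intro d hd
    simp only [Finset.mem_filter, Nat.mem_divisors] at hd
    exact unitary_prod hq hd.1.1 hd.2
  · intro I hI
    exact unitary_primeFactors (Finset.mem_powerset.mp hI)
  · intro d hd
    simp only [Finset.mem_filter, Nat.mem_divisors] at hd
    congr 2
    have h1 := hd.2.primeFactors_mul
    rw [Nat.mul_div_cancel' hd.1.1] at h1
    rw [h1, Finset.union_sdiff_cancel_left hd.2.disjoint_primeFactors]

/-- The sum `g(n) = Σ_d log|1 - ζ_q^{nd}|`. -/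
noncomputable def gsum (q n : ℕ) : ℝ :=
  ∑ d ∈ (Nat.divisors q).filter (fun d => d ≠ q ∧ Nat.Coprime d (q / d)), hlog (n * d / q)

lemma ghat_ne_zero {q : ℕ} [NeZero q] (χ : DirichletCharacter ℂ q) (hχ : χ ≠ 1) (heven : χ.Even) :
    ∑ t : (ZMod q)ˣ, χ t * (gsum q (t : ZMod q).val : ℂ) ≠ 0 := by
  have hq0 : q ≠ 0 := NeZero.ne q
  set f := χ.conductor with hfdef
  have hf0 : f ≠ 0 := DirichletCharacter.conductor_ne_zero χ
  have hf1 : 1 < f := by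
    have : f ≠ 1 := fun h => hχ ((DirichletCharacter.eq_one_iff_conductor_eq_one).mpr h)
    omega
  have hfq : f ∣ q := χ.conductor_dvd_level
  let A : ℕ → ℂ := fun p => if p ∣ f then 0 else
    ((p ^ (q.factorization p - 1) * (p - 1) : ℕ) : ℂ)
  let B : ℕ → ℂ := fun p => 1 - χ.primitiveCharacter (p : ZMod f)
  have hmain : ∑ t : (ZMod q)ˣ, χ t * (gsum q (t : ZMod q).val : ℂ) =
      (∏ p ∈ q.primeFactors, (A p + B p)) * Tsum χ.primitiveCharacter := by
    rw [← sum_unitary hq0 A B, Finset.sum_mul]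
    have hU : ∀ d ∈ (Nat.divisors q).filter (fun d => Nat.Coprime d (q / d)),
        (∏ p ∈ d.primeFactors, A p) * (∏ p ∈ (q / d).primeFactors, B p) * Tsum χ.primitiveCharacter
        = if d ≠ q then ∑ t : (ZMod q)ˣ, χ t * (hlog ((t : ZMod q).val * d / q) : ℂ) else 0 := by
      intro d hd
      simp only [Finset.mem_filter, Nat.mem_divisors] at hd
      obtain ⟨⟨hdq, _⟩, hc⟩ := hd
      have hqd : q = d * (q / d) := (Nat.mul_div_cancel' hdq).symm
      have hd0 : d ≠ 0 := by rintro rfl; exact hq0 (zero_dvd_iff.mp hdq)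
      by_cases hcf : Nat.Coprime d f
      · have hne : d ≠ q := by
          rintro rfl
          have := hcf.symm.eq_one_of_dvd hfq
          omega
        have hfm : f ∣ q / d := hcf.symm.dvd_of_dvd_mul_left (hqd ▸ hfq)
        rw [if_pos hne, Usum_eq hqd hc χ hf1 hfm, mul_assoc]
        congr 1
        rw [Nat.totient_eq_prod_factorization hd0, Finsupp.prod, Nat.support_factorization,
          Nat.cast_prod]
        refine Finset.prod_congr rfl fun p hp => ?_
        have hpf : ¬ p ∣ f := fun h => Nat.not_coprime_of_dvd_of_dvd
          (Nat.prime_of_mem_primeFactors hp).one_lt (Nat.dvd_of_mem_primeFactors hp) h hcf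
        simp only [A]
        rw [if_neg hpf, unitary_fact hq0 hdq hc hp]
      · obtain ⟨p, hp, hpd, hpf⟩ := Nat.Prime.not_coprime_iff_dvd.mp hcf
        have hA : ∏ p ∈ d.primeFactors, A p = 0 :=
          Finset.prod_eq_zero (Nat.mem_primeFactors.mpr ⟨hp, hpd, hd0⟩) (by simp [A, hpf])
        rw [hA, zero_mul, zero_mul]
        symm
        split_ifs with h
        · refine Usum_eq_zero hqd χ fun h2 => ?_
          exact Nat.not_coprime_of_dvd_of_dvd hp.one_lt hpd (hpf.trans h2) hc
        · rfl
    rw [Finset.sum_congr rfl hU, ← Finset.sum_filter, Finset.filter_filter, Finset.sum_comm]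
    refine Finset.sum_congr rfl fun t _ => ?_
    rw [gsum, Complex.ofReal_sum, Finset.mul_sum]
    refine Finset.sum_congr ?_ fun _ _ => rfl
    ext d; simp only [Finset.mem_filter]; tauto
  rw [hmain]
  have : NeZero f := ⟨hf0⟩
  refine mul_ne_zero (Finset.prod_ne_zero_iff.mpr fun p hp => ?_) ?_
  · have hpp := Nat.prime_of_mem_primeFactors hp
    simp only [A, B]
    split_ifs with h
    · have : χ.primitiveCharacter (p : ZMod f) = 0 := by
        apply MulChar.map_nonunit
        rw [ZMod.isUnit_iff_coprime]
        intro h2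
        exact Nat.not_coprime_of_dvd_of_dvd hpp.one_lt dvd_rfl h h2
      rw [this]; simp
    · intro h0
      have hn := DirichletCharacter.norm_le_one χ.primitiveCharacter (p : ZMod f)
      have hre := (Complex.re_le_norm (χ.primitiveCharacter (p : ZMod f))).trans hn
      have hpos : 0 < p ^ (q.factorization p - 1) * (p - 1) :=
        Nat.mul_pos (pow_pos hpp.pos _) (Nat.sub_pos_of_lt hpp.one_lt)
      have := congrArg Complex.re h0
      simp only [Complex.add_re, Complex.natCast_re, Complex.sub_re, Complex.one_re,
        Complex.zero_re] at this
      have hpos' : (0:ℝ) < ((p ^ (q.factorization p - 1) * (p - 1) : ℕ) : ℝ) := by exact_mod_cast hpos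
      linarith
  · refine Tsum_ne_zero hf1 _ χ.primitiveCharacter_isPrimitive ?_
    have := DirichletCharacter.primitiveCharacter_apply_of_isCoprime χ (a := -1)
      (isCoprime_one_left.neg_left)
    have h1 : χ (-1) = 1 := heven
    show χ.primitiveCharacter (-1) = 1
    simpa [h1] using this

lemma gsum_congr {q a b : ℕ} (hq : 0 < q) (h : a ≡ b [MOD q]) : gsum q a = gsum q b := by
  unfold gsum
  refine Finset.sum_congr rfl fun d _ => ?_
  have := hlog_congr_mod hq (h.mul_right d)
  push_cast at this
  exact this

lemma sum_units_char {q : ℕ} [NeZero q] (χ : DirichletCharacter ℂ q) (hχ : χ ≠ 1) :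
    ∑ t : (ZMod q)ˣ, χ t = 0 := by
  rw [sum_units_zmod q (fun x => χ x), Finset.sum_filter]
  have h0 := MulChar.sum_eq_zero_of_ne_one hχ
  have := sum_zmod_val (fun t : ℕ => χ (t : ZMod q)) q
  simp only [ZMod.natCast_zmod_val] at this
  rw [this] at h0
  refine Eq.trans (Finset.sum_congr rfl fun t _ => ?_) h0
  split_ifs with h
  · rfl
  · symm; apply MulChar.map_nonunit; rwa [ZMod.isUnit_iff_coprime]

lemma single_modulus {q : ℕ} [NeZero q] (A : Finset ℕ)
    (hA : ∀ a ∈ A, 1 < a ∧ 2 * a < q ∧ Nat.Coprime a q) (α : ℕ → ℤ) (c : ℝ)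
    (h : ∀ s : ℕ, Nat.Coprime s q → ∑ a ∈ A, (α a : ℝ) * (gsum q (a * s) - gsum q s) = c) :
    ∀ a ∈ A, α a = 0 := by
  have hq0 : 0 < q := Nat.pos_of_ne_zero (NeZero.ne q)
  have hΓ : ∀ χ : DirichletCharacter ℂ q,
      (1 + χ (-1)) * ∑ a ∈ A, (α a : ℂ) * (χ (a : ZMod q) - 1) = 0 := by
    intro χ
    rcases χ.even_or_odd with he | ho
    · by_cases h1 : χ = 1
      · rw [Finset.sum_eq_zero, mul_zero]
        intro a ha
        rw [h1, MulChar.one_apply ((ZMod.isUnit_iff_coprime a q).mpr (hA a ha).2.2)]; simp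
      · have hinv : χ⁻¹ ≠ 1 := inv_ne_one.mpr h1
        have hie : χ⁻¹.Even := by
          have h1 : χ (-1) = 1 := he
          show χ⁻¹ (-1) = 1
          rw [MulChar.inv_apply_eq_inv, h1]; simp
        have hg := ghat_ne_zero χ⁻¹ hinv hie
        set G := ∑ t : (ZMod q)ˣ, χ⁻¹ t * (gsum q (t : ZMod q).val : ℂ) with hG
        have hS : ∑ t : (ZMod q)ˣ, χ⁻¹ t * ((∑ a ∈ A, (α a : ℝ) *
            (gsum q (a * (t : ZMod q).val) - gsum q (t : ZMod q).val) : ℝ) : ℂ) = 0 := by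
          have : ∀ t : (ZMod q)ˣ, (∑ a ∈ A, (α a : ℝ) *
            (gsum q (a * (t : ZMod q).val) - gsum q (t : ZMod q).val) : ℝ) = c :=
            fun t => h _ (ZMod.val_coe_unit_coprime t)
          simp_rw [this]
          rw [← Finset.sum_mul, sum_units_char _ hinv, zero_mul]
        have hsh : ∀ a ∈ A, ∑ t : (ZMod q)ˣ, χ⁻¹ t * (gsum q (a * (t : ZMod q).val) : ℂ) =
            χ (a : ZMod q) * G := by
          intro a ha
          have hu := (hA a ha).2.2
          set u := ZMod.unitOfCoprime a hu with hudef
          have huv : (u : ZMod q) = a := ZMod.coe_unitOfCoprime a hu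
          rw [hG, Finset.mul_sum]
          symm
          rw [← Equiv.sum_comp (Equiv.mulLeft u)]
          refine Finset.sum_congr rfl fun t _ => ?_
          have e1 : gsum q ((Equiv.mulLeft u t : (ZMod q)ˣ) : ZMod q).val = gsum q (a * (t : ZMod q).val) := by
            apply gsum_congr hq0
            rw [← ZMod.natCast_eq_natCast_iff]
            simp [huv]
          have e2 : χ (a : ZMod q) * χ⁻¹ ((Equiv.mulLeft u t : (ZMod q)ˣ) : ZMod q) = χ⁻¹ t := by
            simp only [Equiv.coe_mulLeft, Units.val_mul, map_mul, huv]
            rw [← mul_assoc, ← MulChar.mul_apply, mul_inv_cancel, MulChar.one_apply, one_mul]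
            rw [← huv]; exact u.isUnit
          rw [e1, ← mul_assoc, e2]
        have hfin : (∑ a ∈ A, (α a : ℂ) * (χ (a : ZMod q) - 1)) * G = 0 := by
          rw [← hS]
          push_cast
          simp_rw [Finset.mul_sum]
          rw [Finset.sum_comm, Finset.sum_mul]
          refine Finset.sum_congr rfl fun a ha => ?_
          have : (α a : ℂ) * (χ (a : ZMod q) - 1) * G = α a * (χ (a : ZMod q) * G) - α a * G := by ring
          rw [this, ← hsh a ha, hG, Finset.mul_sum, Finset.mul_sum, ← Finset.sum_sub_distrib]
          refine Finset.sum_congr rfl fun t _ => ?_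
          ring
        rw [(mul_eq_zero.mp hfin).resolve_right hg, mul_zero]
    · have : χ (-1) = -1 := ho
      rw [this]; simp
  intro b hb
  obtain ⟨hb1, hb2, hbc⟩ := hA b hb
  have hbu : IsUnit (b : ZMod q) := (ZMod.isUnit_iff_coprime b q).mpr hbc
  have hsum : ∑ χ : DirichletCharacter ℂ q, χ (b : ZMod q)⁻¹ *
      ((1 + χ (-1)) * ∑ a ∈ A, (α a : ℂ) * (χ (a : ZMod q) - 1)) = 0 := by
    simp_rw [hΓ]; simp
  have hexp : ∀ χ : DirichletCharacter ℂ q, χ (b : ZMod q)⁻¹ *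
      ((1 + χ (-1)) * ∑ a ∈ A, (α a : ℂ) * (χ (a : ZMod q) - 1)) =
      ∑ a ∈ A, (α a : ℂ) * (χ (b : ZMod q)⁻¹ * χ (a : ZMod q) + χ (b : ZMod q)⁻¹ * χ (-(a : ZMod q))
        - χ (b : ZMod q)⁻¹ * χ 1 - χ (b : ZMod q)⁻¹ * χ (-1)) := by
    intro χ
    rw [Finset.mul_sum, Finset.mul_sum]
    refine Finset.sum_congr rfl fun a _ => ?_
    rw [← neg_one_mul (a : ZMod q), map_mul, map_one]
    ring
  simp_rw [hexp] at hsum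
  rw [Finset.sum_comm] at hsum
  simp_rw [← Finset.mul_sum, Finset.sum_sub_distrib, Finset.sum_add_distrib,
    DirichletCharacter.sum_char_inv_mul_char_eq ℂ hbu] at hsum
  have hn1 : (b : ZMod q) ≠ 1 := by
    intro h
    have : ((b : ℕ) : ZMod q) = ((1 : ℕ) : ZMod q) := by simpa using h
    rw [ZMod.natCast_eq_natCast_iff] at this
    have := Nat.ModEq.eq_of_lt_of_lt this (by omega) (by omega)
    omega
  have hneg : ∀ a : ℕ, 0 < a → 2 * a < q → (b : ZMod q) ≠ -(a : ZMod q) := by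
    intro a ha0 ha h
    have : ((b + a : ℕ) : ZMod q) = 0 := by push_cast; rw [h]; ring
    rw [ZMod.natCast_eq_zero_iff] at this
    have := Nat.le_of_dvd (by omega) this
    omega
  have hn2 : (b : ZMod q) ≠ -1 := by
    have := hneg 1 one_pos (by omega)
    simpa using this
  rw [Finset.sum_eq_single b] at hsum
  · rw [if_pos rfl, if_neg (hneg b (by omega) hb2), if_neg hn1, if_neg hn2] at hsum
    have hφ : (q.totient : ℂ) ≠ 0 := by exact_mod_cast (Nat.totient_pos.mpr hq0).ne'
    have : (α b : ℂ) = 0 := by simpa [hφ, NeZero.ne q] using hsum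
    exact_mod_cast this
  · intro a ha hab
    obtain ⟨ha1, ha2, _⟩ := hA a ha
    rw [if_neg, if_neg (hneg a (by omega) ha2), if_neg hn1, if_neg hn2]
    · simp
    · intro h
      rw [ZMod.natCast_eq_natCast_iff] at h
      exact hab (Nat.ModEq.eq_of_lt_of_lt h (by omega) (by omega)).symm
  · intro h; exact absurd hb h

noncomputable def Ratio {F : Type*} [Field F] (q a : ℕ) (w : F) : F :=
  ∏ d ∈ (Nat.divisors q).filter (fun d => d ≠ q ∧ Nat.Coprime d (q / d)),
      (1 - w ^ (a * d)) / (1 - w ^ d)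

lemma Ratio_map {F L : Type*} [Field F] [Field L] (φ : F →+* L) (q a : ℕ) (w : F) :
    φ (Ratio q a w) = Ratio q a (φ w) := by
  simp [Ratio, map_prod]

lemma term_ne_zero {q n d : ℕ} (hq : 0 < q) (hn : Nat.Coprime n q) (hd : d ∣ q) (hdq : d ≠ q) :
    1 - Complex.exp (2 * Real.pi * Complex.I * ((n * d / q : ℝ) : ℂ)) ≠ 0 := by
  obtain ⟨m, rfl⟩ := hd
  have hd0 : 0 < d := Nat.pos_of_mul_pos_right hq
  have hm0 : 0 < m := Nat.pos_of_mul_pos_left hq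
  have hm1 : 1 < m := by
    rcases Nat.lt_or_ge 1 m with h | h
    · exact h
    · have : m = 1 := by omega
      simp [this] at hdq
  have e : (n * d / (d * m : ℕ) : ℝ) = n / m := by
    have : (d : ℝ) ≠ 0 := by exact_mod_cast hd0.ne'
    have : (m : ℝ) ≠ 0 := by exact_mod_cast hm0.ne'
    push_cast; field_simp
  rw [e]
  exact sub_ne_zero.mpr (exp_ne_one_of_coprime hm1 (hn.coprime_mul_left_right)).symm

lemma log_Ratio {q a t : ℕ} (hq : 0 < q) (ha : Nat.Coprime a q) (ht : Nat.Coprime t q) :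
    Ratio q a (zetaC q ^ t) ≠ 0 ∧
    Real.log ‖Ratio q a (zetaC q ^ t)‖ = gsum q (a * t) - gsum q t := by
  have hpow : ∀ n d : ℕ, zetaC q ^ (n * d) =
      Complex.exp (2 * Real.pi * Complex.I * ((n * d / q : ℝ) : ℂ)) := by
    intro n d
    rw [zetaC, ← Complex.exp_nat_mul]; congr 1; push_cast; ring
  have hR : Ratio q a (zetaC q ^ t) =
      ∏ d ∈ (Nat.divisors q).filter (fun d => d ≠ q ∧ Nat.Coprime d (q / d)),
      (1 - Complex.exp (2 * Real.pi * Complex.I * (((a * t : ℕ) * d / q : ℝ) : ℂ))) /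
      (1 - Complex.exp (2 * Real.pi * Complex.I * ((t * d / q : ℝ) : ℂ))) := by
    unfold Ratio
    refine Finset.prod_congr rfl fun d _ => ?_
    rw [← hpow, ← hpow, ← pow_mul, ← pow_mul]
    congr 3; ring
  have hat : Nat.Coprime (a * t) q := Nat.Coprime.mul_left ha ht
  have hne : ∀ n, Nat.Coprime n q →
      ∀ d ∈ (Nat.divisors q).filter (fun d => d ≠ q ∧ Nat.Coprime d (q / d)),
      1 - Complex.exp (2 * Real.pi * Complex.I * ((n * d / q : ℝ) : ℂ)) ≠ 0 := by
    intro n hn d hd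
    simp only [Finset.mem_filter, Nat.mem_divisors] at hd
    exact term_ne_zero hq hn hd.1.1 hd.2.1
  rw [hR]
  constructor
  · exact Finset.prod_ne_zero_iff.mpr fun d hd => div_ne_zero (hne _ hat d hd) (hne _ ht d hd)
  · rw [norm_prod, Real.log_prod fun d hd =>
      norm_ne_zero_iff.mpr (div_ne_zero (hne _ hat d hd) (hne _ ht d hd)), gsum, gsum,
      ← Finset.sum_sub_distrib]
    refine Finset.sum_congr rfl fun d hd => ?_
    rw [norm_div, Real.log_div (norm_ne_zero_iff.mpr (hne _ hat d hd))
      (norm_ne_zero_iff.mpr (hne _ ht d hd)), hlog, hlog]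

lemma exists_embedding_aux (K : Type) [Field K] [Algebra ℚ K] (Q t : ℕ) (hQ : 0 < Q) (ht : Nat.Coprime t Q)
    [IsCyclotomicExtension {Q} ℚ K] :
    ∃ (φ ψ : K →+* ℂ) (ζ : K),
      φ ζ = zetaC Q ∧ ψ ζ = zetaC Q ^ t := by
  have : NeZero Q := ⟨hQ.ne'⟩
  have hζ := IsCyclotomicExtension.zeta_spec Q ℚ K
  have hirr := Polynomial.cyclotomic.irreducible_rat hQ
  have hz : IsPrimitiveRoot (zetaC Q) Q := Complex.isPrimitiveRoot_exp Q hQ.ne'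
  have key : ∀ w : ℂ, IsPrimitiveRoot w Q → ∃ φ : K →+* ℂ,
      φ (IsCyclotomicExtension.zeta Q ℚ K) = w := by
    intro w hw
    let e := hζ.embeddingsEquivPrimitiveRoots ℂ hirr
    let φ := e.symm ⟨w, (mem_primitiveRoots hQ).mpr hw⟩
    refine ⟨φ.toRingHom, ?_⟩
    have : e φ = ⟨w, (mem_primitiveRoots hQ).mpr hw⟩ := e.apply_symm_apply _
    have h2 := congrArg Subtype.val this
    simpa [e] using h2
  obtain ⟨φ, hφ⟩ := key _ hz
  obtain ⟨ψ, hψ⟩ := key _ (hz.pow_of_coprime t ht)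
  exact ⟨φ, ψ, _, hφ, hψ⟩

lemma exists_embedding (Q t : ℕ) (hQ : 0 < Q) (ht : Nat.Coprime t Q) :
    ∃ (φ ψ : CyclotomicField Q ℚ →+* ℂ) (ζ : CyclotomicField Q ℚ),
      φ ζ = zetaC Q ∧ ψ ζ = zetaC Q ^ t := by
  have : NeZero Q := ⟨hQ.ne'⟩
  exact @exists_embedding_aux (CyclotomicField Q ℚ) _ (CyclotomicField.algebra Q ℚ) Q t hQ ht
    (CyclotomicField.isCyclotomicExtension Q ℚ)

lemma ram_eps (q k a : ℕ) (hq : 0 < q) :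
    Complex.exp (2 * Real.pi * Complex.I * (ramExp a q : ℂ) / q) ^ (2 * (q * k)) = 1 := by
  rw [← Complex.exp_nat_mul, Complex.exp_eq_one_iff]
  have hq' : (q : ℂ) ≠ 0 := by exact_mod_cast hq.ne'
  refine ⟨k * ((1 - a) *
    ∑ d ∈ (Nat.divisors q).filter (fun d => d ≠ q ∧ Nat.Coprime d (q / d)), (d : ℤ)), ?_⟩
  rw [ramExp]; push_cast; field_simp

lemma galois_step_s5 {ℓ : ℕ} (q : Fin ℓ → ℕ) (hq : ∀ j, 0 < q j) (A : Fin ℓ → Finset ℕ)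
    (hA : ∀ j, ∀ a ∈ A j, Nat.Coprime a (q j)) (α : Fin ℓ → ℕ → ℤ)
    (h : (∏ j, ∏ a ∈ A j, ramUnit a (q j) ^ α j a) = 1) (t : ℕ)
    (ht : Nat.Coprime t (∏ j, q j)) :
    ∑ j, ∑ a ∈ A j, (α j a : ℝ) * (gsum (q j) (a * t) - gsum (q j) t) = 0 := by
  set Q := ∏ j, q j with hQdef
  have hQ : 0 < Q := Finset.prod_pos fun j _ => hq j
  have hdvd : ∀ j, q j ∣ Q := fun j => Finset.dvd_prod_of_mem _ (Finset.mem_univ j)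
  choose k hk using hdvd
  have hk0 : ∀ j, (k j : ℂ) ≠ 0 := by
    intro j h0
    have h0' : k j = 0 := by exact_mod_cast h0
    have := hk j
    rw [h0'] at this; omega
  obtain ⟨φ, ψ, ζ, hφ, hψ⟩ := exists_embedding Q t hQ ht
  have hz : ∀ j, zetaC Q ^ k j = zetaC (q j) := by
    intro j
    have : (q j : ℂ) ≠ 0 := by exact_mod_cast (hq j).ne'
    have := hk0 j
    rw [zetaC, zetaC, ← Complex.exp_nat_mul, hk j]
    congr 1; push_cast; field_simp
  let E : CyclotomicField Q ℚ := ∏ j, ∏ a ∈ A j, Ratio (q j) a (ζ ^ k j) ^ α j a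
  have hφE : φ E = ∏ j, ∏ a ∈ A j, Ratio (q j) a (zetaC (q j)) ^ α j a := by
    simp only [E, map_prod, map_zpow₀, Ratio_map, map_pow, hφ, hz]
  have hψE : ψ E = ∏ j, ∏ a ∈ A j, Ratio (q j) a (zetaC (q j) ^ t) ^ α j a := by
    simp only [E, map_prod, map_zpow₀, Ratio_map, map_pow, hψ]
    refine Finset.prod_congr rfl fun j _ => Finset.prod_congr rfl fun a _ => ?_
    rw [← pow_mul, mul_comm t, pow_mul, hz]
  have hram : ∀ j a, ramUnit a (q j) ^ (2 * Q) = Ratio (q j) a (zetaC (q j)) ^ (2 * Q) := by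
    intro j a
    have := ram_eps (q j) (k j) a (hq j)
    rw [← hk j] at this
    rw [ramUnit, mul_pow, this, one_mul, Ratio]
  have h1 : φ E ^ (2 * Q) = 1 := by
    rw [hφE, ← one_pow (2 * Q), ← h, ← Finset.prod_pow, ← Finset.prod_pow]
    refine Finset.prod_congr rfl fun j _ => ?_
    rw [← Finset.prod_pow, ← Finset.prod_pow]
    refine Finset.prod_congr rfl fun a _ => ?_
    have sw : ∀ (x : ℂ) (n : ℤ) (m : ℕ), (x ^ n) ^ m = (x ^ m) ^ n := by
      intro x n m
      rw [← zpow_natCast, ← zpow_natCast, ← zpow_mul, ← zpow_mul, mul_comm]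
    rw [sw, sw, hram]
  have h2 : E ^ (2 * Q) = 1 := by
    apply φ.injective
    rw [map_pow, h1, map_one]
  have h3 : ψ E ^ (2 * Q) = 1 := by rw [← map_pow, h2, map_one]
  have h4 : ‖ψ E‖ = 1 := by
    have := congrArg norm h3
    rw [norm_pow, norm_one] at this
    exact (pow_eq_one_iff_of_nonneg (norm_nonneg _) (by omega)).mp this
  have htq : ∀ j, Nat.Coprime t (q j) := fun j => ht.coprime_dvd_right ⟨k j, hk j⟩
  have h5 := congrArg Real.log h4
  rw [Real.log_one, hψE, norm_prod, Real.log_prod] at h5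
  · rw [← h5]
    refine Finset.sum_congr rfl fun j _ => ?_
    rw [norm_prod, Real.log_prod]
    · refine Finset.sum_congr rfl fun a ha => ?_
      rw [norm_zpow, Real.log_zpow, (log_Ratio (hq j) (hA j a ha) (htq j)).2]
    · intro a ha
      exact norm_ne_zero_iff.mpr (zpow_ne_zero _ (log_Ratio (hq j) (hA j a ha) (htq j)).1)
  · intro j _
    refine norm_ne_zero_iff.mpr (Finset.prod_ne_zero_iff.mpr fun a ha => ?_)
    exact zpow_ne_zero _ (log_Ratio (hq j) (hA j a ha) (htq j)).1

/-- For pairwise coprime moduli `q₁, …, q_ℓ > 4`, the Ramachandra units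
`ξ_{a,q_j}` for `1 < a < q_j/2`, `gcd(a,q_j) = 1`, are multiplicatively independent. -/
theorem ramachandra_units_multiplicatively_independent {ℓ : ℕ} (q : Fin ℓ → ℕ)
    (hq : ∀ j, 4 < q j) (hcop : Pairwise fun i j => Nat.Coprime (q i) (q j))
    (α : Fin ℓ → ℕ → ℤ)
    (h : (∏ j, ∏ a ∈ (Finset.range (q j)).filter
          (fun a => 1 < a ∧ 2 * a < q j ∧ Nat.Coprime a (q j)),
        ramUnit a (q j) ^ α j a) = 1) :
    ∀ j a, 1 < a → 2 * a < q j → Nat.Coprime a (q j) → α j a = 0 := by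
  intro j a ha1 ha2 hac
  have hq0 : ∀ j, 0 < q j := fun j => by have := hq j; omega
  have : NeZero (q j) := ⟨(hq0 j).ne'⟩
  set A : Fin ℓ → Finset ℕ := fun j => (Finset.range (q j)).filter
          (fun a => 1 < a ∧ 2 * a < q j ∧ Nat.Coprime a (q j)) with hAdef
  have hA : ∀ j, ∀ a ∈ A j, 1 < a ∧ 2 * a < q j ∧ Nat.Coprime a (q j) := by
    intro j a ha
    exact (Finset.mem_filter.mp ha).2
  have hgal := galois_step_s5 q hq0 A (fun j a ha => (hA j a ha).2.2) α h
  refine single_modulus (A j) (hA j) (α j)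
    (-∑ i ∈ Finset.univ.erase j, ∑ a ∈ A i, (α i a : ℝ) * (gsum (q i) (a * 1) - gsum (q i) 1))
    ?_ a (Finset.mem_filter.mpr ⟨Finset.mem_range.mpr (by omega), ha1, ha2, hac⟩)
  intro s hs
  have hcj : Nat.Coprime (q j) (∏ i ∈ Finset.univ.erase j, q i) :=
    Nat.Coprime.prod_right fun i hi => hcop (Finset.ne_of_mem_erase hi).symm
  obtain ⟨t, ht1, ht2⟩ := Nat.chineseRemainder hcj s 1
  have htq : Nat.Coprime t (q j) := by
    rw [Nat.Coprime, ht1.gcd_eq]; exact hs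
  have htr : Nat.Coprime t (∏ i ∈ Finset.univ.erase j, q i) := by
    rw [Nat.Coprime, ht2.gcd_eq]; simp
  have htQ : Nat.Coprime t (∏ i, q i) := by
    rw [← Finset.mul_prod_erase _ _ (Finset.mem_univ j)]
    exact htq.mul_right htr
  have hg := hgal t htQ
  rw [← Finset.add_sum_erase _ _ (Finset.mem_univ j)] at hg
  rw [eq_neg_iff_add_eq_zero, ← hg]
  congr 1
  · refine Finset.sum_congr rfl fun a _ => ?_
    rw [gsum_congr (hq0 j) ht1, gsum_congr (hq0 j) (ht1.mul_left a)]
  · refine Finset.sum_congr rfl fun i hi => Finset.sum_congr rfl fun a _ => ?_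
    have h1 : t ≡ 1 [MOD q i] := ht2.of_dvd (Finset.dvd_prod_of_mem _ hi)
    rw [gsum_congr (hq0 i) h1, gsum_congr (hq0 i) (h1.mul_left a)]
end

section
/- Let α₁, ..., α_n be positive real algebraic numbers and c₀, c₁, ..., c_n algebraic numbers with c₀ ≠ 0. Then c₀π + Σ_{j=1}^n c_j log α_j is transcendental. -/
namespace BakerPi

open Polynomial

/-! ### Analytic part: a Schwarz lemma -/

lemma exists_div_pow (a : ℂ) (T : ℕ) : ∀ f : ℂ → ℂ, Differentiable ℂ f →
    (T : ℕ∞) ≤ analyticOrderAt f a →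
    ∃ g : ℂ → ℂ, Differentiable ℂ g ∧ ∀ z, f z = (z - a) ^ T * g z := by
  induction T with
  | zero => intro f hf _; exact ⟨f, hf, fun z => by simp⟩
  | succ T ih =>
    intro f hf hord
    have hfa : f a = 0 := by
      apply apply_eq_zero_of_analyticOrderAt_ne_zero
      intro h
      rw [h] at hord
      simp at hord
    have hg1 : Differentiable ℂ (dslope f a) := by
      rw [← differentiableOn_univ] at hf ⊢
      exact (Complex.differentiableOn_dslope Filter.univ_mem).2 hf
    have hfac : f = (fun z => z - a) * dslope f a := by
      funext z
      have := sub_smul_dslope f a z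
      simp [hfa] at this
      simp [this]
    have hord1 : (T : ℕ∞) ≤ analyticOrderAt (dslope f a) a := by
      rw [hfac, analyticOrderAt_mul (by fun_prop) (hg1.analyticAt a)] at hord
      have h1 : analyticOrderAt (fun z : ℂ => z - a) a = 1 := by
        have := analyticOrderAt_id_sub_const_self (c := a)
        exact this
      rw [h1, Nat.cast_succ, add_comm] at hord
      exact (ENat.add_le_add_iff_left ENat.one_ne_top).1 hord
    obtain ⟨g, hg, hgz⟩ := ih _ hg1 hord1
    refine ⟨g, hg, fun z => ?_⟩
    conv_lhs => rw [hfac]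
    simp only [Pi.mul_apply]
    rw [hgz, pow_succ]; ring

lemma exists_div_prod (T : ℕ) (s : Finset ℂ) : ∀ f : ℂ → ℂ, Differentiable ℂ f →
    (∀ a ∈ s, (T : ℕ∞) ≤ analyticOrderAt f a) →
    ∃ g : ℂ → ℂ, Differentiable ℂ g ∧ ∀ z, f z = (∏ a ∈ s, (z - a) ^ T) * g z := by
  induction s using Finset.induction_on with
  | empty => intro f hf _; exact ⟨f, hf, fun z => by simp⟩
  | insert a s ha ih =>
    intro f hf hord
    obtain ⟨g, hg, hgz⟩ := exists_div_pow a T f hf (hord a (by simp))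
    have hfac : f = (fun z => (z - a) ^ T) * g := by funext z; simp [hgz]
    have hordg : ∀ b ∈ s, (T : ℕ∞) ≤ analyticOrderAt g b := by
      intro b hb
      have h := hord b (by simp [hb])
      rw [hfac, analyticOrderAt_mul (by fun_prop) (hg.analyticAt b)] at h
      have h0 : analyticOrderAt (fun z : ℂ => (z - a) ^ T) b = 0 := by
        rw [AnalyticAt.analyticOrderAt_eq_zero (by fun_prop)]
        apply pow_ne_zero
        rw [sub_ne_zero]
        rintro rfl
        exact ha hb
      rwa [h0, zero_add] at h
    obtain ⟨g2, hg2, hg2z⟩ := ih g hg hordg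
    refine ⟨g2, hg2, fun z => ?_⟩
    rw [hgz, hg2z, Finset.prod_insert ha]; ring

lemma schwarz {f : ℂ → ℂ} (hf : Differentiable ℂ f) {T S S' : ℕ} (hSS : S ≤ S') {B : ℝ}
    (hord : ∀ l : ℕ, l < S → (T : ℕ∞) ≤ analyticOrderAt f (l : ℂ))
    (hB : ∀ z : ℂ, ‖z‖ ≤ 3 * S' → ‖f z‖ ≤ B) {x : ℕ} (hx : x < S') :
    ‖f x‖ ≤ B / 2 ^ (T * S) := by
  classical
  have hS' : (0 : ℝ) < S' := by exact_mod_cast (Nat.zero_le x).trans_lt hx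
  obtain ⟨g, hg, hgz⟩ := exists_div_prod T ((Finset.range S).image (fun l : ℕ => (l : ℂ))) f hf
    (by
      intro a ha
      simp only [Finset.mem_image, Finset.mem_range] at ha
      obtain ⟨l, hl, rfl⟩ := ha
      exact hord l hl)
  have hprod : ∀ z : ℂ, (∏ a ∈ (Finset.range S).image (fun l : ℕ => (l : ℂ)), (z - a) ^ T)
      = ∏ l ∈ Finset.range S, (z - (l : ℂ)) ^ T := by
    intro z
    rw [Finset.prod_image]
    intro a _ b _ h
    exact Nat.cast_injective h
  simp only [hprod] at hgz
  have hgB : ∀ z ∈ closure (Metric.ball (0 : ℂ) (3 * S')), ‖g z‖ ≤ B / (2 * S') ^ (T * S) := by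
    intro z hz
    refine Complex.norm_le_of_forall_mem_frontier_norm_le Metric.isBounded_ball
      hg.diffContOnCl ?_ hz
    intro w hw
    rw [frontier_ball _ (by positivity)] at hw
    have hw' : ‖w‖ = 3 * S' := by simpa using hw
    rw [le_div_iff₀ (by positivity)]
    calc ‖g w‖ * (2 * S') ^ (T * S) ≤ ‖g w‖ * ∏ l ∈ Finset.range S, ‖w - (l : ℂ)‖ ^ T := by
          gcongr
          rw [pow_mul]
          calc ((2 * S' : ℝ) ^ T) ^ S = ∏ l ∈ Finset.range S, (2 * S' : ℝ) ^ T := by simp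
            _ ≤ _ := by
              apply Finset.prod_le_prod
              · intros; positivity
              · intro l hl
                gcongr
                have h1 : (l : ℝ) ≤ S' := by
                  exact_mod_cast ((Finset.mem_range.1 hl).le.trans hSS)
                have h2 := norm_sub_norm_le w (l : ℂ)
                rw [hw', Complex.norm_natCast] at h2
                linarith
      _ = ‖f w‖ := by rw [hgz, norm_mul, norm_prod, mul_comm]; simp [norm_pow]
      _ ≤ B := hB w hw'.le
  have hxs : ‖(x : ℂ)‖ < 3 * S' := by
    rw [Complex.norm_natCast]
    have : (x : ℝ) < S' := by exact_mod_cast hx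
    linarith
  have hgx := hgB x (subset_closure (by simpa using hxs))
  rw [hgz, norm_mul, norm_prod]
  have hfst : ∏ l ∈ Finset.range S, ‖((x : ℂ) - (l : ℂ)) ^ T‖ ≤ (S' : ℝ) ^ (T * S) := by
    rw [pow_mul]
    calc _ ≤ ∏ l ∈ Finset.range S, (S' : ℝ) ^ T := by
          apply Finset.prod_le_prod
          · intros; positivity
          · intro l hl
            rw [norm_pow]
            gcongr
            have h1 : (l : ℝ) ≤ S' := by
              exact_mod_cast ((Finset.mem_range.1 hl).le.trans hSS)
            have h2 : (x : ℝ) ≤ S' := by exact_mod_cast hx.le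
            have h3 : ((x : ℂ) - (l : ℂ)) = (((x : ℝ) - (l : ℝ) : ℝ) : ℂ) := by push_cast; rfl
            rw [h3, Complex.norm_real, Real.norm_eq_abs, abs_le]
            constructor
            · have : (0 : ℝ) ≤ x := by positivity
              linarith
            · have : (0 : ℝ) ≤ l := by positivity
              linarith
      _ = _ := by simp
  calc _ ≤ (S' : ℝ) ^ (T * S) * (B / (2 * S') ^ (T * S)) := by gcongr
    _ = B / 2 ^ (T * S) := by
      rw [mul_pow]; field_simp

end BakerPi

namespace BakerPi

open Polynomial

/-! ### Exponential polynomials at consecutive integers -/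

/-- The shift operator on sequences. -/
noncomputable def shiftE : Module.End ℂ (ℕ → ℂ) where
  toFun u := fun l => u (l + 1)
  map_add' _ _ := rfl
  map_smul' _ _ := rfl

lemma shiftE_pow (k : ℕ) : ∀ (u : ℕ → ℂ) (l : ℕ), (shiftE ^ k) u l = u (l + k) := by
  induction k with
  | zero => intro u l; simp
  | succ k ih =>
    intro u l
    rw [pow_succ, Module.End.mul_apply, ih]
    simp [shiftE, add_assoc]

/-- The sequence `P(l) y^l`. -/
noncomputable def expSeq (y : ℂ) (P : ℂ[X]) : ℕ → ℂ := fun l => P.eval (l : ℂ) * y ^ l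

lemma expSeq_ker (y : ℂ) (k : ℕ) : ∀ P : ℂ[X], P.degree < k →
    ((shiftE - y • (1 : Module.End ℂ (ℕ → ℂ))) ^ k) (expSeq y P) = 0 := by
  induction k with
  | zero =>
    intro P hP
    have : P = 0 := by
      rw [← Polynomial.degree_eq_bot]
      simpa using hP
    subst this
    funext l
    simp [expSeq]
  | succ k ih =>
    intro P hP
    rw [pow_succ, Module.End.mul_apply]
    have h1 : (shiftE - y • (1 : Module.End ℂ (ℕ → ℂ))) (expSeq y P)
        = y • expSeq y (taylor 1 P - P) := by
      funext l
      simp [expSeq, shiftE, taylor_eval, pow_succ]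
      ring
    rw [h1, map_smul, ih, smul_zero]
    by_cases h0 : P = 0
    · subst h0; simp
    · have h2 : (taylor 1 P - P).degree < P.degree := by
        have := Polynomial.degree_sub_lt_left (p := taylor 1 P) (q := P) (degree_taylor P 1)
          (by rwa [Ne, taylor_eq_zero]) (leadingCoeff_taylor _ _)
        rwa [degree_taylor] at this
      have h3 : P.degree ≤ k := by
        rw [Polynomial.degree_eq_natDegree h0] at hP ⊢
        exact_mod_cast Nat.lt_succ_iff.1 (by exact_mod_cast hP)
      exact h2.trans_le h3

lemma expPoly_eq_zero {κ : Type*} [Fintype κ] (y : κ → ℂ) (hy : Function.Injective y)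
    (hy0 : ∀ i, y i ≠ 0) (L : ℕ) (P : κ → ℂ[X]) (hP : ∀ i, (P i).degree < L)
    (h : ∀ l : ℕ, l < Fintype.card κ * L → ∑ i, (P i).eval (l : ℂ) * y i ^ l = 0) :
    ∀ i, P i = 0 := by
  classical
  set u : ℕ → ℂ := ∑ i, expSeq (y i) (P i) with hu
  have hul : ∀ l, u l = ∑ i, (P i).eval (l : ℂ) * y i ^ l := by
    intro l; simp [hu, expSeq]
  set χ : ℂ[X] := ∏ i, (X - C (y i)) ^ L with hχ
  have hmonic : χ.Monic := monic_prod_of_monic _ _ (fun i _ => (monic_X_sub_C _).pow _)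
  have hdeg : χ.natDegree = Fintype.card κ * L := by
    rw [hχ, natDegree_prod_of_monic _ _ (fun i _ => (monic_X_sub_C _).pow _)]
    simp
  have haev : aeval shiftE χ u = 0 := by
    rw [hu, map_sum]
    apply Finset.sum_eq_zero
    intro i _
    rw [hχ, ← Finset.prod_erase_mul _ _ (Finset.mem_univ i), map_mul, Module.End.mul_apply]
    have h1 : aeval shiftE ((X - C (y i)) ^ L) = (shiftE - y i • (1 : Module.End ℂ (ℕ → ℂ))) ^ L := by
      simp [Algebra.algebraMap_eq_smul_one]
    rw [h1, expSeq_ker _ _ _ (hP i), map_zero]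
  have hrec : ∀ l, ∑ k ∈ Finset.range (χ.natDegree + 1), χ.coeff k * u (l + k) = 0 := by
    intro l
    have h1 := congrFun haev l
    rw [aeval_eq_sum_range] at h1
    simpa [shiftE_pow] using h1
  have hu0 : ∀ l, u l = 0 := by
    intro l
    induction l using Nat.strong_induction_on with
    | _ l ih =>
      by_cases hl : l < Fintype.card κ * L
      · rw [hul]; exact h l hl
      · have h1 := hrec (l - χ.natDegree)
        rw [Finset.sum_range_succ, Finset.sum_eq_zero, zero_add, hmonic.coeff_natDegree, one_mul,
          Nat.sub_add_cancel (by omega)] at h1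
        · exact h1
        · intro k hk
          rw [ih _ (by have := Finset.mem_range.1 hk; omega), mul_zero]
  have hind := (Module.End.independent_genEigenspace shiftE (L : ℕ∞)).comp hy
  rw [iSupIndep_iff_finsetSum_eq_zero_imp_eq_zero] at hind
  have hz : ∀ i, expSeq (y i) (P i) = 0 := by
    intro i
    refine hind Finset.univ (fun i => expSeq (y i) (P i)) ?_ ?_ i (Finset.mem_univ i)
    · intro j _
      simp only [Function.comp]
      rw [Module.End.mem_genEigenspace_nat, LinearMap.mem_ker]
      exact expSeq_ker _ _ _ (hP j)
    · rw [← hu]; funext l; exact hu0 l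
  intro i
  apply Polynomial.eq_zero_of_infinite_isRoot
  apply Set.Infinite.mono (s := Set.range (fun l : ℕ => (l : ℂ)))
  · rintro _ ⟨l, rfl⟩
    have h1 := congrFun (hz i) l
    simp only [expSeq, Pi.zero_apply, mul_eq_zero] at h1
    rcases h1 with h1 | h1
    · exact h1
    · exact absurd h1 (pow_ne_zero _ (hy0 i))
  · exact Set.infinite_range_of_injective Nat.cast_injective

/-- Version of `expPoly_eq_zero` on even integers. -/
lemma expPoly_even_eq_zero {κ : Type*} [Fintype κ] (y : κ → ℂ)
    (hy : Function.Injective (fun i => y i ^ 2))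
    (hy0 : ∀ i, y i ≠ 0) (L : ℕ) (P : κ → ℂ[X]) (hP : ∀ i, (P i).degree < L)
    (h : ∀ l : ℕ, l < Fintype.card κ * L →
      ∑ i, (P i).eval ((2 * l : ℕ) : ℂ) * y i ^ (2 * l) = 0) :
    ∀ i, P i = 0 := by
  have key := expPoly_eq_zero (fun i => y i ^ 2) hy (fun i => pow_ne_zero _ (hy0 i)) L
    (fun i => (P i).comp (C 2 * X)) ?_ ?_
  · intro i
    have h1 := key i
    rwa [Polynomial.comp_C_mul_X_eq_zero_iff] at h1
    exact mem_nonZeroDivisors_of_ne_zero two_ne_zero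
  · intro i
    by_cases h0 : P i = 0
    · simp only [h0, zero_comp]
      exact (h0 ▸ hP i)
    · have hn : (P i).natDegree < L := by
        exact (Polynomial.natDegree_lt_iff_degree_lt h0).2 (hP i)
      refine lt_of_le_of_lt Polynomial.degree_le_natDegree ?_
      rw [Polynomial.natDegree_comp]
      have : (C (2 : ℂ) * X).natDegree = 1 := by
        exact natDegree_C_mul_X 2 two_ne_zero
      rw [this, mul_one]
      exact_mod_cast hn
  · intro l hl
    rw [← h l hl]
    refine Finset.sum_congr rfl fun i _ => ?_
    simp [pow_mul]

end BakerPi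

namespace BakerPi

open Polynomial

/-! ### The building blocks of the auxiliary function -/

/-- `(D + γ)^m X^d`. -/
noncomputable def qpoly {R : Type*} [CommRing R] (γ : R) (d : ℕ) : ℕ → R[X]
  | 0 => X ^ d
  | m + 1 => derivative (qpoly γ d m) + C γ * qpoly γ d m

lemma qpoly_zero {R : Type*} [CommRing R] (γ : R) (d : ℕ) : qpoly γ d 0 = X ^ d := rfl

lemma qpoly_succ {R : Type*} [CommRing R] (γ : R) (d m : ℕ) :
    qpoly γ d (m + 1) = derivative (qpoly γ d m) + C γ * qpoly γ d m := rfl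

lemma qpoly_coeff_succ {R : Type*} [CommRing R] (γ : R) (d m k : ℕ) :
    (qpoly γ d (m + 1)).coeff k
      = (qpoly γ d m).coeff (k + 1) * (k + 1) + γ * (qpoly γ d m).coeff k := by
  rw [qpoly_succ, coeff_add, coeff_derivative, coeff_C_mul]

lemma qpoly_coeff_of_gt {R : Type*} [CommRing R] (γ : R) (d m : ℕ) :
    ∀ k, d < k → (qpoly γ d m).coeff k = 0 := by
  induction m with
  | zero => intro k hk; rw [qpoly_zero, coeff_X_pow, if_neg (by omega)]
  | succ m ih => intro k hk; rw [qpoly_coeff_succ, ih _ (by omega), ih _ hk]; simp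

lemma qpoly_coeff_self {R : Type*} [CommRing R] (γ : R) (d m : ℕ) :
    (qpoly γ d m).coeff d = γ ^ m := by
  induction m with
  | zero => simp [qpoly_zero]
  | succ m ih =>
    rw [qpoly_coeff_succ, qpoly_coeff_of_gt _ _ _ _ (Nat.lt_succ_self d), ih]; ring

lemma qpoly_natDegree_le {R : Type*} [CommRing R] (γ : R) (d m : ℕ) :
    (qpoly γ d m).natDegree ≤ d :=
  natDegree_le_iff_coeff_eq_zero.2 fun k hk => qpoly_coeff_of_gt γ d m k hk

lemma qpoly_map {R R' : Type*} [CommRing R] [CommRing R'] (f : R →+* R') (γ : R) (d m : ℕ) :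
    (qpoly γ d m).map f = qpoly (f γ) d m := by
  induction m with
  | zero => simp [qpoly_zero]
  | succ m ih => rw [qpoly_succ, qpoly_succ, ← ih]; simp [derivative_map]

lemma qpoly_eval {R : Type*} [CommRing R] (γ : R) (d m : ℕ) (z : R) :
    (qpoly γ d m).eval z = ∑ k ∈ Finset.range (d + 1), (qpoly γ d m).coeff k * z ^ k :=
  eval_eq_sum_range' (Nat.lt_succ_of_le (qpoly_natDegree_le γ d m)) z

lemma qpoly_coeff_norm_le (γ : ℂ) (G : ℝ) (hγ : ‖γ‖ ≤ G) (d m : ℕ) :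
    ∀ k, ‖(qpoly γ d m).coeff k‖ ≤ (G + d) ^ m := by
  have hG : 0 ≤ G := (norm_nonneg _).trans hγ
  induction m with
  | zero =>
    intro k
    rw [qpoly_zero, coeff_X_pow]
    split_ifs <;> simp
  | succ m ih =>
    intro k
    rw [qpoly_coeff_succ]
    by_cases hk : d < k + 1
    · rw [qpoly_coeff_of_gt _ _ _ _ hk, zero_mul, zero_add, norm_mul, pow_succ, mul_comm]
      have h1 := ih k
      have : ‖γ‖ ≤ G + d := by have : (0 : ℝ) ≤ d := by positivity
                               linarith
      gcongr
    · push Not at hk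
      have hk' : (k : ℝ) + 1 ≤ d := by exact_mod_cast hk
      calc ‖(qpoly γ d m).coeff (k + 1) * (k + 1) + γ * (qpoly γ d m).coeff k‖
          ≤ ‖(qpoly γ d m).coeff (k + 1)‖ * (k + 1) + ‖γ‖ * ‖(qpoly γ d m).coeff k‖ := by
            refine (norm_add_le _ _).trans ?_
            rw [norm_mul, norm_mul]
            have : ‖(k : ℂ) + 1‖ = k + 1 := by
              have := Complex.norm_natCast (k + 1)
              push_cast at this
              exact this
            rw [this]
        _ ≤ (G + d) ^ m * d + G * (G + d) ^ m := by
            gcongr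
            · exact ih _
            · exact ih _
        _ = (G + d) ^ (m + 1) := by ring

lemma qpoly_eval_norm_le (γ : ℂ) (G : ℝ) (hγ : ‖γ‖ ≤ G) (d m : ℕ) (z : ℂ) (S : ℝ) (hS : 1 ≤ S)
    (hz : ‖z‖ ≤ S) : ‖(qpoly γ d m).eval z‖ ≤ (d + 1) * S ^ d * (G + d) ^ m := by
  have hG : 0 ≤ G := (norm_nonneg _).trans hγ
  rw [qpoly_eval]
  calc _ ≤ ∑ k ∈ Finset.range (d + 1), (G + d) ^ m * S ^ d := by
        refine norm_sum_le_of_le _ fun k hk => ?_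
        rw [norm_mul, norm_pow]
        have h1 := qpoly_coeff_norm_le γ G hγ d m k
        have hkd : k ≤ d := by have := Finset.mem_range.1 hk; omega
        have h2 : ‖z‖ ^ k ≤ S ^ d :=
          (pow_le_pow_left₀ (norm_nonneg _) hz k).trans (pow_le_pow_right₀ hS hkd)
        gcongr
    _ = _ := by simp; ring

lemma qpoly_coeff_integral {K : Type*} [Field K] (γ : K) (e : ℕ) (he : IsIntegral ℤ (e * γ))
    (d m : ℕ) : ∀ k, IsIntegral ℤ ((e : K) ^ m * (qpoly γ d m).coeff k) := by
  induction m with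
  | zero =>
    intro k
    rw [qpoly_zero, coeff_X_pow]
    split_ifs
    · simpa using isIntegral_one
    · simpa using isIntegral_zero
  | succ m ih =>
    intro k
    rw [qpoly_coeff_succ]
    have h1 : (e : K) ^ (m + 1) *
        ((qpoly γ d m).coeff (k + 1) * (k + 1) + γ * (qpoly γ d m).coeff k)
        = ((e : ℤ) : K) * (((k + 1 : ℕ) : ℤ) : K) * ((e : K) ^ m * (qpoly γ d m).coeff (k + 1))
          + (e * γ) * ((e : K) ^ m * (qpoly γ d m).coeff k) := by
      push_cast; ring
    rw [h1]
    exact (((isIntegral_algebraMap (R := ℤ) (A := K)).mul isIntegral_algebraMap).mul (ih _)).add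
      (he.mul (ih k))

lemma qpoly_eval_integral {K : Type*} [Field K] (γ : K) (e : ℕ) (he : IsIntegral ℤ (e * γ))
    (d m l : ℕ) : IsIntegral ℤ ((e : K) ^ m * (qpoly γ d m).eval (l : K)) := by
  rw [qpoly_eval, Finset.mul_sum]
  refine IsIntegral.sum _ fun k _ => ?_
  rw [← mul_assoc]
  refine (qpoly_coeff_integral γ e he d m k).mul (IsIntegral.pow ?_ _)
  exact_mod_cast (isIntegral_algebraMap (R := ℤ) (A := K) (x := (l : ℤ)))

variable {ι : Type*} [Fintype ι]

/-- The coefficient attached to one exponential. -/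
noncomputable def cf {R : Type*} [CommRing R] (b : ι → R) (b0 : R) (d t : ℕ) (μ : ι → ℕ)
    (m0 : ℕ) (m : ι → ℕ) (z : R) : R :=
  (qpoly (t * b0) d m0).eval z * ∏ i, ((μ i : R) + t * b i) ^ m i

/-- The base of one exponential. -/
noncomputable def bs {R : Type*} [CommRing R] (A : ι → R) (t : ℕ) (μ : ι → ℕ) : R :=
  (-1) ^ t * ∏ i, A i ^ μ i

/-- One term of the auxiliary function at an integer. -/
noncomputable def term {R : Type*} [CommRing R] (A b : ι → R) (b0 : R) (d t : ℕ) (μ : ι → ℕ)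
    (m0 : ℕ) (m : ι → ℕ) (l : ℕ) : R :=
  cf b b0 d t μ m0 m (l : R) * bs A t μ ^ l

lemma cf_map {R R' : Type*} [CommRing R] [CommRing R'] (f : R →+* R') (b : ι → R) (b0 : R)
    (d t : ℕ) (μ : ι → ℕ) (m0 : ℕ) (m : ι → ℕ) (z : R) :
    f (cf b b0 d t μ m0 m z) = cf (fun i => f (b i)) (f b0) d t μ m0 m (f z) := by
  have h := qpoly_map f (t * b0) d m0
  simp only [map_mul, map_natCast] at h
  simp only [cf, map_mul, map_prod, map_pow, map_add, map_natCast]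
  rw [← h, eval_map_apply]

lemma term_map {R R' : Type*} [CommRing R] [CommRing R'] (f : R →+* R') (A b : ι → R) (b0 : R)
    (d t : ℕ) (μ : ι → ℕ) (m0 : ℕ) (m : ι → ℕ) (l : ℕ) :
    f (term A b b0 d t μ m0 m l)
      = term (fun i => f (A i)) (fun i => f (b i)) (f b0) d t μ m0 m l := by
  simp [term, bs, cf_map]

lemma cf_norm_le (b : ι → ℂ) (b0 : ℂ) (B : ℝ) (hB : 1 ≤ B) (hb : ∀ i, ‖b i‖ ≤ B)
    (hb0 : ‖b0‖ ≤ B) (L : ℕ) (d t : ℕ) (hd : d < L) (ht : t < L) (μ : ι → ℕ)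
    (hμ : ∀ i, μ i < L) (m0 : ℕ) (m : ι → ℕ) (M : ℕ) (hM : m0 + ∑ i, m i ≤ M) (z : ℂ) (S : ℝ)
    (hS : 1 ≤ S) (hz : ‖z‖ ≤ S) :
    ‖cf b b0 d t μ m0 m z‖ ≤ L * S ^ L * (2 * L * B) ^ M := by
  have hL : (1 : ℝ) ≤ L := by exact_mod_cast (Nat.zero_le d).trans_lt hd
  have hLB : (1 : ℝ) ≤ 2 * L * B := by nlinarith
  have hdL : (d : ℝ) + 1 ≤ L := by exact_mod_cast hd
  have htL : (t : ℝ) ≤ L := by exact_mod_cast ht.le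
  have h1 : ‖(qpoly (t * b0) d m0).eval z‖ ≤ L * S ^ L * (2 * L * B) ^ m0 := by
    refine (qpoly_eval_norm_le (t * b0) (L * B) ?_ d m0 z S hS hz).trans ?_
    · rw [norm_mul, Complex.norm_natCast]; gcongr
    · have : (L : ℝ) * B + d ≤ 2 * L * B := by nlinarith
      gcongr
  have h2 : ‖∏ i, ((μ i : ℂ) + t * b i) ^ m i‖ ≤ (2 * L * B) ^ (∑ i, m i) := by
    rw [norm_prod, ← Finset.prod_pow_eq_pow_sum]
    apply Finset.prod_le_prod
    · intros; positivity
    · intro i _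
      rw [norm_pow]
      gcongr
      refine (norm_add_le _ _).trans ?_
      rw [norm_mul, Complex.norm_natCast, Complex.norm_natCast]
      have h3 : (μ i : ℝ) ≤ L := by exact_mod_cast (hμ i).le
      have h4 : (t : ℝ) * ‖b i‖ ≤ L * B := by gcongr; exact hb i
      nlinarith
  rw [cf, norm_mul]
  calc _ ≤ (L * S ^ L * (2 * L * B) ^ m0) * (2 * L * B) ^ (∑ i, m i) := by gcongr
    _ = L * S ^ L * (2 * L * B) ^ (m0 + ∑ i, m i) := by rw [pow_add]; ring
    _ ≤ _ := by gcongr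

lemma term_norm_le (A b : ι → ℂ) (b0 : ℂ) (B : ℝ) (hB : 1 ≤ B) (hA : ∀ i, ‖A i‖ ≤ B)
    (hb : ∀ i, ‖b i‖ ≤ B)
    (hb0 : ‖b0‖ ≤ B) (L : ℕ) (d t : ℕ) (hd : d < L) (ht : t < L) (μ : ι → ℕ)
    (hμ : ∀ i, μ i < L) (m0 : ℕ) (m : ι → ℕ) (M : ℕ) (hM : m0 + ∑ i, m i ≤ M) (l S : ℕ)
    (hS : 1 ≤ S) (hl : l ≤ S) :
    ‖term A b b0 d t μ m0 m l‖
      ≤ L * S ^ L * (2 * L * B) ^ M * B ^ (Fintype.card ι * L * S) := by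
  have h1 := cf_norm_le b b0 B hB hb hb0 L d t hd ht μ hμ m0 m M hM (l : ℂ) S
    (by exact_mod_cast hS) (by rw [Complex.norm_natCast]; exact_mod_cast hl)
  rw [term, norm_mul]
  have h2 : ‖bs A t μ‖ ≤ B ^ (Fintype.card ι * L) := by
    simp only [bs, norm_mul, norm_pow, norm_neg, norm_one, one_pow, one_mul, norm_prod]
    calc _ ≤ ∏ i : ι, B ^ L := by
          apply Finset.prod_le_prod
          · intros; positivity
          · intro i _
            exact (pow_le_pow_left₀ (norm_nonneg _) (hA i) _).trans
              (pow_le_pow_right₀ hB (hμ i).le)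
      _ = _ := by simp [← pow_mul, mul_comm]
  have h3 : ‖bs A t μ ^ l‖ ≤ B ^ (Fintype.card ι * L * S) := by
    rw [norm_pow, pow_mul]
    exact (pow_le_pow_left₀ (norm_nonneg _) h2 _).trans
      (pow_le_pow_right₀ (one_le_pow₀ hB) hl)
  gcongr

lemma term_integral {K : Type*} [Field K] (A b : ι → K) (b0 : K) (e : ℕ)
    (hA : ∀ i, IsIntegral ℤ (e * A i)) (hb : ∀ i, IsIntegral ℤ (e * b i))
    (hb0 : IsIntegral ℤ (e * b0)) (d t : ℕ) (μ : ι → ℕ) (L : ℕ)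
    (hμ : ∀ i, μ i < L) (m0 : ℕ) (m : ι → ℕ) (M : ℕ) (hM : m0 + ∑ i, m i ≤ M) (l S : ℕ)
    (hl : l ≤ S) :
    IsIntegral ℤ ((e : K) ^ (M + Fintype.card ι * L * S) * term A b b0 d t μ m0 m l) := by
  have hnat : ∀ k : ℕ, IsIntegral ℤ (k : K) := fun k => by
    exact_mod_cast (isIntegral_algebraMap (R := ℤ) (A := K) (x := (k : ℤ)))
  have hle : m0 + ∑ i, m i + (∑ i, μ i) * l ≤ M + Fintype.card ι * L * S := by
    have h1 : ∑ i, μ i ≤ Fintype.card ι * L := by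
      calc ∑ i, μ i ≤ ∑ _i : ι, L := Finset.sum_le_sum fun i _ => (hμ i).le
        _ = _ := by simp
    have := Nat.mul_le_mul h1 hl
    omega
  obtain ⟨r, hr⟩ := Nat.exists_eq_add_of_le hle
  have h1 : IsIntegral ℤ ((e : K) ^ m0 * (qpoly (t * b0) d m0).eval (l : K)) := by
    apply qpoly_eval_integral
    have : (e : K) * (t * b0) = t * (e * b0) := by ring
    rw [this]
    exact (hnat t).mul hb0
  have h2 : IsIntegral ℤ ((e : K) ^ (∑ i, m i) * ∏ i, ((μ i : K) + t * b i) ^ m i) := by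
    rw [← Finset.prod_pow_eq_pow_sum, ← Finset.prod_mul_distrib]
    refine IsIntegral.prod _ fun i _ => ?_
    rw [← mul_pow]
    refine IsIntegral.pow ?_ _
    have : (e : K) * (μ i + t * b i) = (e : K) * μ i + t * (e * b i) := by ring
    rw [this]
    exact ((hnat _).mul (hnat _)).add ((hnat _).mul (hb i))
  have h3 : IsIntegral ℤ ((e : K) ^ ((∑ i, μ i) * l) * bs A t μ ^ l) := by
    rw [pow_mul, ← mul_pow]
    refine IsIntegral.pow ?_ _
    have : (e : K) ^ (∑ i, μ i) * bs A t μ = (-1) ^ t * ∏ i, (e * A i) ^ μ i := by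
      rw [bs, ← Finset.prod_pow_eq_pow_sum]
      simp only [mul_pow, Finset.prod_mul_distrib]
      ring
    rw [this]
    exact (IsIntegral.pow (IsIntegral.neg isIntegral_one) _).mul
      (IsIntegral.prod _ fun i _ => (hA i).pow _)
  have h4 := (((hnat e).pow r).mul h1).mul (h2.mul h3)
  have h5 : (e : K) ^ (M + Fintype.card ι * L * S) * term A b b0 d t μ m0 m l
      = (e : K) ^ r * ((e : K) ^ m0 * (qpoly (t * b0) d m0).eval (l : K)) *
      ((e : K) ^ (∑ i, m i) * (∏ i, ((μ i : K) + t * b i) ^ m i) *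
      ((e : K) ^ ((∑ i, μ i) * l) * bs A t μ ^ l)) := by
    rw [hr, term, cf]
    simp only [pow_add]
    ring
  rw [h5]
  exact h4

end BakerPi

namespace BakerPi

open Polynomial NumberField

/-! ### Siegel's lemma and Liouville's inequality -/

lemma house_le_of_forall {K : Type*} [Field K] [NumberField K] (x : K) (H : ℝ)
    (hH : ∀ σ : K →+* ℂ, ‖σ x‖ ≤ H) : house x ≤ H := by
  have hH0 : 0 ≤ H :=
    (norm_nonneg _).trans (hH (Classical.arbitrary (K →+* ℂ)))
  lift H to NNReal using hH0
  rw [house_eq_sup']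
  exact_mod_cast Finset.sup'_le _ _ fun σ _ => by exact_mod_cast hH σ

lemma liouville {K : Type*} [Field K] [NumberField K] (φ : K →+* ℂ) (y : K)
    (hy : IsIntegral ℤ y) (hy0 : y ≠ 0) (H : ℝ) (hH : ∀ σ : K →+* ℂ, ‖σ y‖ ≤ H) :
    1 ≤ ‖φ y‖ * H ^ (Module.finrank ℚ K - 1) := by
  have h1 : (1 : ℝ) ≤ ‖Algebra.norm ℚ y‖ := by
    obtain ⟨k, hk⟩ := IsIntegrallyClosed.isIntegral_iff.1 (Algebra.isIntegral_norm ℚ hy)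
    rw [← hk]
    have hk0 : k ≠ 0 := by
      rintro rfl
      rw [map_zero] at hk
      exact hy0 (Algebra.norm_eq_zero_iff.1 hk.symm)
    have : (1 : ℤ) ≤ |k| := Int.one_le_abs hk0
    simp only [eq_intCast, Int.norm_cast_rat]
    rw [Int.norm_eq_abs]
    exact_mod_cast this
  refine h1.trans ((norm_norm_le_norm_mul_house_pow y φ).trans ?_)
  have := house_le_of_forall y H hH
  have h0 := house_nonneg y
  gcongr

lemma siegel (K : Type*) [Field K] [NumberField K] : ∃ C : ℝ, 1 ≤ C ∧
    ∀ (α β : Type) [Fintype α] [Fintype β] (a : α → β → K) (A : ℝ), 1 ≤ A →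
    (∀ k l, IsIntegral ℤ (a k l)) → (∀ k l (σ : K →+* ℂ), ‖σ (a k l)‖ ≤ A) →
    0 < Fintype.card α → 2 * Fintype.card α ≤ Fintype.card β →
    ∃ ξ : β → K, ξ ≠ 0 ∧ (∀ k, ∑ l, a k l * ξ l = 0) ∧ (∀ l, IsIntegral ℤ (ξ l)) ∧
      ∀ l (σ : K →+* ℂ), ‖σ (ξ l)‖ ≤ C * Fintype.card β * A := by
  classical
  obtain ⟨c, hc⟩ : ∃ c : ℝ, ∀ (α β : Type) [Fintype α] [Fintype β] (a : Matrix α β (𝓞 K))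
      (_ : a ≠ 0) (p q : ℕ) (_ : 0 < p) (_ : p < q) (_ : Fintype.card β = q) (A : ℝ)
      (_ : ∀ k l, (house ((algebraMap (𝓞 K) K) (a k l))) ≤ A) (_ : Fintype.card α = p),
      ∃ (ξ : β → 𝓞 K), ξ ≠ 0 ∧ a.mulVec ξ = 0 ∧
      ∀ l, house (ξ l).1 ≤ c * ((c * q * A) ^ ((p : ℝ) / (q - p))) := by
    exact ⟨_, fun α β _ _ a ha p q h0p hpq cβ A habs cα =>
      house.exists_ne_zero_int_vec_house_le K a ha h0p hpq cβ habs cα⟩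
  set c' := max 1 |c| with hc'
  have hc1 : 1 ≤ c' := le_max_left _ _
  have hcc : |c| ≤ c' := le_max_right _ _
  refine ⟨c' * c', by nlinarith, ?_⟩
  intro α β _ _ a A hA hintg hb hα hαβ
  have hq1 : (1 : ℝ) ≤ Fintype.card β := by
    exact_mod_cast (show 1 ≤ Fintype.card β by omega)
  set a' : Matrix α β (𝓞 K) := fun k l => ⟨a k l, hintg k l⟩ with ha'
  by_cases h0 : a' = 0
  · have ha0 : ∀ k l, a k l = 0 := by
      intro k l
      have := congrFun (congrFun h0 k) l
      have h2 := congrArg (algebraMap (𝓞 K) K) this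
      rw [Matrix.zero_apply, map_zero] at h2
      exact h2
    have : Nonempty β := Fintype.card_pos_iff.1 (by omega)
    refine ⟨fun _ => 1, ?_, ?_, fun _ => isIntegral_one, ?_⟩
    · intro h; exact one_ne_zero (congrFun h (Classical.arbitrary β))
    · intro k; simp [ha0]
    · intro l σ
      rw [map_one, norm_one]
      have h2 : 1 ≤ c' * c' := by nlinarith
      exact one_le_mul_of_one_le_of_one_le (one_le_mul_of_one_le_of_one_le h2 hq1) hA
  · obtain ⟨ξ, hξ0, hξ, hξb⟩ := hc α β a' h0 _ _ hα (by omega) rfl A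
      (fun k l => house_le_of_forall _ _ (hb k l)) rfl
    refine ⟨fun l => (ξ l : K), ?_, ?_, fun l => (ξ l).2, ?_⟩
    · intro h
      apply hξ0
      funext l
      have := congrFun h l
      simpa using this
    · intro k
      have h1 := congrFun hξ k
      have h2 := congrArg (algebraMap (𝓞 K) K) h1
      rw [Pi.zero_apply, map_zero, Matrix.mulVec, dotProduct, map_sum] at h2
      simp only [map_mul] at h2
      exact h2
    · intro l σ
      refine (norm_embedding_le_house _ σ).trans ((hξb l).trans ?_)
      set q : ℝ := (Fintype.card β : ℝ)
      set p : ℝ := (Fintype.card α : ℝ)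
      have hp0 : 0 < p := Nat.cast_pos.2 hα
      have hpq : 2 * p ≤ q := by
        have : ((2 * Fintype.card α : ℕ) : ℝ) ≤ (Fintype.card β : ℕ) := Nat.cast_le.2 hαβ
        rwa [Nat.cast_mul] at this
      have hbase : 1 ≤ c' * q * A :=
        one_le_mul_of_one_le_of_one_le (one_le_mul_of_one_le_of_one_le hc1 hq1) hA
      have hexp : p / (q - p) ≤ 1 := by
        rw [div_le_one (by linarith)]; linarith
      have hexp0 : 0 ≤ p / (q - p) := div_nonneg hp0.le (by linarith)
      have h1 : |(c * q * A) ^ (p / (q - p))| ≤ c' * q * A := by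
        refine (Real.abs_rpow_le_abs_rpow _ _).trans ?_
        have h2 : |c * q * A| ≤ c' * q * A := by
          rw [abs_mul, abs_mul, abs_of_nonneg (by linarith : (0 : ℝ) ≤ q),
            abs_of_nonneg (by linarith : (0 : ℝ) ≤ A)]
          gcongr
        calc _ ≤ (c' * q * A) ^ (p / (q - p)) := Real.rpow_le_rpow (abs_nonneg _) h2 hexp0
          _ ≤ (c' * q * A) ^ (1 : ℝ) := Real.rpow_le_rpow_of_exponent_le hbase hexp
          _ = _ := Real.rpow_one _
      calc _ ≤ |c * (c * q * A) ^ (p / (q - p))| := le_abs_self _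
        _ = |c| * |(c * q * A) ^ (p / (q - p))| := abs_mul _ _
        _ ≤ c' * (c' * q * A) := by gcongr
        _ = _ := by ring

end BakerPi

namespace BakerPi

open Polynomial

/-! ### The auxiliary function -/

/-- The index set of the terms. -/
abbrev Idx (ι : Type) (L : ℕ) : Type := Fin L × Fin L × (ι → Fin L)

variable {ι : Type} [Fintype ι] [DecidableEq ι]

/-- frequencies -/
noncomputable def freq (ℓ : ι → ℂ) {L : ℕ} (c : Idx ι L) : ℂ :=
  (c.2.1 : ℕ) * (Real.pi * Complex.I) + ∑ i, ((c.2.2 i : ℕ) : ℂ) * ℓ i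

/-- The coefficient of an index. -/
noncomputable def cfI {R : Type*} [CommRing R] (b : ι → R) (b0 : R) {L : ℕ} (c : Idx ι L)
    (m0 : ℕ) (m : ι → ℕ) (z : R) : R :=
  cf b b0 (c.1 : ℕ) (c.2.1 : ℕ) (fun i => (c.2.2 i : ℕ)) m0 m z

/-- The term of an index. -/
noncomputable def termI {R : Type*} [CommRing R] (A b : ι → R) (b0 : R) {L : ℕ} (c : Idx ι L)
    (m0 : ℕ) (m : ι → ℕ) (l : ℕ) : R :=
  term A b b0 (c.1 : ℕ) (c.2.1 : ℕ) (fun i => (c.2.2 i : ℕ)) m0 m l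

/-- The auxiliary function. -/
noncomputable def auxF (ℓ b : ι → ℂ) (b0 : ℂ) {L : ℕ} (p : Idx ι L → ℂ) (m0 : ℕ) (m : ι → ℕ)
    (z : ℂ) : ℂ :=
  ∑ c, p c * (cfI b b0 c m0 m z * Complex.exp (freq ℓ c * z))

lemma cf_add_single (b : ι → ℂ) (b0 : ℂ) (d t : ℕ) (μ : ι → ℕ) (m0 : ℕ)
    (m : ι → ℕ) (i : ι) (z : ℂ) :
    cf b b0 d t μ m0 (m + Pi.single i 1) z = ((μ i : ℂ) + t * b i) * cf b b0 d t μ m0 m z := by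
  have h : ∏ j, ((μ j : ℂ) + t * b j) ^ (m + Pi.single i 1 : ι → ℕ) j
      = (∏ j, ((μ j : ℂ) + t * b j) ^ m j) * ((μ i : ℂ) + t * b i) := by
    simp only [Pi.add_apply, pow_add, Finset.prod_mul_distrib]
    congr 1
    rw [Finset.prod_eq_single i]
    · simp
    · intro j _ hj; simp [Pi.single_eq_of_ne hj]
    · simp
  rw [cf, cf, h]; ring

lemma cf_hasDerivAt (b : ι → ℂ) (b0 : ℂ) (d t : ℕ) (μ : ι → ℕ) (m0 : ℕ) (m : ι → ℕ) (z : ℂ) :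
    HasDerivAt (cf b b0 d t μ m0 m)
      (cf b b0 d t μ (m0 + 1) m z - t * b0 * cf b b0 d t μ m0 m z) z := by
  have h1 := ((qpoly (t * b0) d m0).hasDerivAt z).mul_const (∏ i, ((μ i : ℂ) + t * b i) ^ m i)
  refine h1.congr_deriv ?_
  rw [cf, cf, qpoly_succ]
  simp
  ring

lemma auxF_hasDerivAt (ℓ b : ι → ℂ) (b0 : ℂ)
    (hrel : (Real.pi : ℂ) * Complex.I = b0 + ∑ i, b i * ℓ i) {L : ℕ} (p : Idx ι L → ℂ) (m0 : ℕ)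
    (m : ι → ℕ) (z : ℂ) :
    HasDerivAt (auxF ℓ b b0 p m0 m)
      (auxF ℓ b b0 p (m0 + 1) m z + ∑ i, ℓ i * auxF ℓ b b0 p m0 (m + Pi.single i 1) z) z := by
  have h1 : HasDerivAt (auxF ℓ b b0 p m0 m)
      (∑ c, p c * ((cfI b b0 c (m0 + 1) m z - (c.2.1 : ℕ) * b0 * cfI b b0 c m0 m z)
        * Complex.exp (freq ℓ c * z)
        + cfI b b0 c m0 m z * (Complex.exp (freq ℓ c * z) * (freq ℓ c * 1)))) z := by
    unfold auxF
    refine HasDerivAt.fun_sum fun c _ => ?_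
    refine HasDerivAt.const_mul _ ?_
    refine HasDerivAt.fun_mul ?_ ?_
    · exact cf_hasDerivAt _ _ _ _ _ _ _ _
    · exact ((hasDerivAt_id z).const_mul (freq ℓ c)).cexp
  refine h1.congr_deriv ?_
  simp only [auxF, Finset.mul_sum]
  rw [Finset.sum_comm, ← Finset.sum_add_distrib]
  refine Finset.sum_congr rfl fun c _ => ?_
  have h2 : ∀ i, cfI b b0 c m0 (m + Pi.single i 1) z
      = (((c.2.2 i : ℕ) : ℂ) + (c.2.1 : ℕ) * b i) * cfI b b0 c m0 m z :=
    fun i => cf_add_single _ _ _ _ _ _ _ _ _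
  simp only [h2]
  have h3 : ∑ i, ℓ i * (p c * ((((c.2.2 i : ℕ) : ℂ) + (c.2.1 : ℕ) * b i) * cfI b b0 c m0 m z
        * Complex.exp (freq ℓ c * z)))
      = (∑ i, ((((c.2.2 i : ℕ) : ℂ) + (c.2.1 : ℕ) * b i) * ℓ i))
        * (p c * (cfI b b0 c m0 m z * Complex.exp (freq ℓ c * z))) := by
    rw [Finset.sum_mul]
    refine Finset.sum_congr rfl fun i _ => ?_
    ring
  have h4 : freq ℓ c = (c.2.1 : ℕ) * b0
      + ∑ i, ((((c.2.2 i : ℕ) : ℂ) + (c.2.1 : ℕ) * b i) * ℓ i) := by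
    rw [freq, hrel]
    simp only [add_mul, Finset.sum_add_distrib, mul_add, Finset.mul_sum, mul_assoc]
    ring
  rw [h3]
  set s := ∑ i, ((((c.2.2 i : ℕ) : ℂ) + (c.2.1 : ℕ) * b i) * ℓ i)
  set E := Complex.exp (freq ℓ c * z)
  rw [h4]
  ring

lemma auxF_differentiable (ℓ b : ι → ℂ) (b0 : ℂ) {L : ℕ} (p : Idx ι L → ℂ) (m0 : ℕ)
    (m : ι → ℕ) : Differentiable ℂ (auxF ℓ b b0 p m0 m) := by
  unfold auxF
  refine Differentiable.fun_sum fun c _ => ?_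
  refine Differentiable.const_mul ?_ _
  refine Differentiable.fun_mul ?_ ?_
  · exact fun z => (cf_hasDerivAt _ _ _ _ _ _ _ _).differentiableAt
  · fun_prop

lemma auxF_iteratedDeriv (ℓ b : ι → ℂ) (b0 : ℂ)
    (hrel : (Real.pi : ℂ) * Complex.I = b0 + ∑ i, b i * ℓ i) {L : ℕ} (p : Idx ι L → ℂ) (M : ℕ)
    (a : ℂ) (h : ∀ m0 m, m0 + ∑ i, m i < M → auxF ℓ b b0 p m0 m a = 0) (k : ℕ) :
    ∀ m0 (m : ι → ℕ), m0 + ∑ i, m i + k < M → iteratedDeriv k (auxF ℓ b b0 p m0 m) a = 0 := by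
  have hcd : ∀ m0 (m : ι → ℕ) (n : ℕ), ContDiffAt ℂ n (auxF ℓ b b0 p m0 m) a := fun m0 m n =>
    (auxF_differentiable ℓ b b0 p m0 m).contDiff.contDiffAt
  induction k with
  | zero => intro m0 m hm; simpa using h m0 m hm
  | succ k ih =>
    intro m0 m hm
    rw [iteratedDeriv_succ']
    have hd : deriv (auxF ℓ b b0 p m0 m) = fun z => auxF ℓ b b0 p (m0 + 1) m z
        + ∑ i, ℓ i * auxF ℓ b b0 p m0 (m + Pi.single i 1) z :=
      funext fun z => (auxF_hasDerivAt ℓ b b0 hrel p m0 m z).deriv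
    rw [hd, iteratedDeriv_fun_add (hcd _ _ _)
      (ContDiffAt.sum fun i _ => contDiffAt_const.mul (hcd _ _ _)), ih _ _ (by omega), zero_add,
      iteratedDeriv_fun_sum (fun i _ => contDiffAt_const.mul (hcd _ _ _))]
    apply Finset.sum_eq_zero
    intro i _
    rw [iteratedDeriv_const_mul _ (hcd _ _ _), ih, mul_zero]
    have : ∑ j, (m + Pi.single i 1 : ι → ℕ) j = ∑ j, m j + 1 := by
      simp [Finset.sum_add_distrib]
    omega

lemma auxF_order (ℓ b : ι → ℂ) (b0 : ℂ)
    (hrel : (Real.pi : ℂ) * Complex.I = b0 + ∑ i, b i * ℓ i) {L : ℕ} (p : Idx ι L → ℂ) (M : ℕ)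
    (a : ℂ) (h : ∀ m0 m, m0 + ∑ i, m i < M → auxF ℓ b b0 p m0 m a = 0) (k : ℕ)
    (m0 : ℕ) (m : ι → ℕ) (hm : m0 + ∑ i, m i + k ≤ M) :
    (k : ℕ∞) ≤ analyticOrderAt (auxF ℓ b b0 p m0 m) a := by
  rw [natCast_le_analyticOrderAt_iff_iteratedDeriv_eq_zero
    ((auxF_differentiable ℓ b b0 p m0 m).analyticAt a)]
  intro j hj
  exact auxF_iteratedDeriv ℓ b b0 hrel p M a h j m0 m (by omega)

lemma auxF_nat (ℓ A b : ι → ℂ) (b0 : ℂ) (hA : ∀ i, Complex.exp (ℓ i) = A i)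
    {L : ℕ} (p : Idx ι L → ℂ) (m0 : ℕ) (m : ι → ℕ) (l : ℕ) :
    auxF ℓ b b0 p m0 m l = ∑ c, p c * termI A b b0 c m0 m l := by
  unfold auxF
  refine Finset.sum_congr rfl fun c _ => ?_
  have h1 : Complex.exp (freq ℓ c * l) = bs A (c.2.1 : ℕ) (fun i => (c.2.2 i : ℕ)) ^ l := by
    rw [mul_comm, Complex.exp_nat_mul, freq, Complex.exp_add, Complex.exp_nat_mul,
      Complex.exp_pi_mul_I, Complex.exp_sum, bs]
    simp only [Complex.exp_nat_mul, hA]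
  rw [h1, termI, term, cfI]

lemma auxF_norm_le (ℓ b : ι → ℂ) (b0 : ℂ) (B : ℝ) (hB : 1 ≤ B) (hb : ∀ i, ‖b i‖ ≤ B)
    (hb0 : ‖b0‖ ≤ B) {L : ℕ} (p : Idx ι L → ℂ) (P : ℝ) (hP : ∀ c, ‖p c‖ ≤ P)
    (m0 : ℕ) (m : ι → ℕ) (M : ℕ) (hM : m0 + ∑ i, m i ≤ M) (z : ℂ) (R : ℝ) (hR : 1 ≤ R)
    (hz : ‖z‖ ≤ R) :
    ‖auxF ℓ b b0 p m0 m z‖ ≤ Fintype.card (Idx ι L) * (P * (L * R ^ L * (2 * L * B) ^ M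
      * Real.exp ((Real.pi + ∑ i, ‖ℓ i‖) * L * R))) := by
  unfold auxF
  rw [← nsmul_eq_mul, ← Finset.card_univ, ← Finset.sum_const]
  refine norm_sum_le_of_le _ fun c _ => ?_
  rw [norm_mul, norm_mul]
  have hP0 : 0 ≤ P := (norm_nonneg _).trans (hP c)
  have h1 := hP c
  have h2 : ‖cfI b b0 c m0 m z‖ ≤ L * R ^ L * (2 * L * B) ^ M :=
    cf_norm_le b b0 B hB hb hb0 L _ _ c.1.2 c.2.1.2 _ (fun i => (c.2.2 i).2) m0 m M hM z R hR hz
  have h4 : ‖freq ℓ c‖ ≤ (Real.pi + ∑ i, ‖ℓ i‖) * L := by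
    rw [freq, add_mul]
    refine (norm_add_le _ _).trans (add_le_add ?_ ?_)
    · rw [norm_mul, norm_mul, Complex.norm_I, Complex.norm_natCast, Complex.norm_real,
        Real.norm_of_nonneg Real.pi_pos.le, mul_one, mul_comm]
      have : ((c.2.1 : ℕ) : ℝ) ≤ L := by exact_mod_cast c.2.1.2.le
      have := Real.pi_pos
      gcongr
    · rw [Finset.sum_mul]
      refine norm_sum_le_of_le _ fun i _ => ?_
      rw [norm_mul, Complex.norm_natCast, mul_comm]
      have : ((c.2.2 i : ℕ) : ℝ) ≤ L := by exact_mod_cast (c.2.2 i).2.le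
      gcongr
  have h3 : ‖Complex.exp (freq ℓ c * z)‖ ≤ Real.exp ((Real.pi + ∑ i, ‖ℓ i‖) * L * R) := by
    refine (Complex.norm_exp_le_exp_norm _).trans (Real.exp_le_exp.2 ?_)
    rw [norm_mul]
    have := (norm_nonneg _).trans h4
    gcongr
  gcongr

end BakerPi

namespace BakerPi

open Polynomial

/-! ### The extrapolation step -/

/-- All the data entering the proof. -/
structure Setup (K : Type) [Field K] [NumberField K] (ι : Type) [Fintype ι] where
  φ : K →+* ℂ
  A : ι → K
  b : ι → K
  b0 : K
  ℓ : ι → ℂ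
  e : ℕ
  B : ℝ
  he : 0 < e
  hB : 1 ≤ B
  hA : ∀ i, Complex.exp (ℓ i) = φ (A i)
  hrel : (Real.pi : ℂ) * Complex.I = φ b0 + ∑ i, φ (b i) * ℓ i
  intA : ∀ i, IsIntegral ℤ (e * A i)
  intb : ∀ i, IsIntegral ℤ (e * b i)
  intb0 : IsIntegral ℤ (e * b0)
  bdA : ∀ (σ : K →+* ℂ) i, ‖σ (A i)‖ ≤ B
  bdb : ∀ (σ : K →+* ℂ) i, ‖σ (b i)‖ ≤ B
  bdb0 : ∀ (σ : K →+* ℂ), ‖σ b0‖ ≤ B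

variable {K : Type} [Field K] [NumberField K] {ι : Type} [Fintype ι] [DecidableEq ι]

/-- The values of the auxiliary functions at integers. -/
noncomputable def Setup.val (s : Setup K ι) {L : ℕ} (p : Idx ι L → K) (m0 : ℕ) (m : ι → ℕ)
    (l : ℕ) : K := ∑ c, p c * termI s.A s.b s.b0 c m0 m l

/-- The exponential type. -/
noncomputable def Setup.W (s : Setup K ι) : ℝ := Real.pi + ∑ i, ‖s.ℓ i‖

lemma termI_map {R R' : Type*} [CommRing R] [CommRing R'] (f : R →+* R') (A b : ι → R) (b0 : R)
    {L : ℕ} (c : Idx ι L) (m0 : ℕ) (m : ι → ℕ) (l : ℕ) :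
    f (termI A b b0 c m0 m l)
      = termI (fun i => f (A i)) (fun i => f (b i)) (f b0) c m0 m l := by
  unfold termI
  exact term_map f A b b0 _ _ _ _ _ _

lemma Setup.map_val (s : Setup K ι) {L : ℕ} (p : Idx ι L → K) (m0 : ℕ) (m : ι → ℕ)
    (l : ℕ) (σ : K →+* ℂ) : σ (s.val p m0 m l)
      = ∑ c, σ (p c) * termI (fun i => σ (s.A i)) (fun i => σ (s.b i)) (σ s.b0) c m0 m l := by
  simp only [Setup.val, map_sum, map_mul, termI_map]

lemma Setup.phi_val (s : Setup K ι) {L : ℕ} (p : Idx ι L → K) (m0 : ℕ) (m : ι → ℕ) (l : ℕ) :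
    auxF s.ℓ (fun i => s.φ (s.b i)) (s.φ s.b0) (fun c => s.φ (p c)) m0 m l
      = s.φ (s.val p m0 m l) := by
  rw [auxF_nat s.ℓ (fun i => s.φ (s.A i)) _ _ s.hA, s.map_val]

lemma Setup.termI_norm (s : Setup K ι) {L : ℕ} (σ : K →+* ℂ) (c : Idx ι L) (m0 : ℕ) (m : ι → ℕ)
    (M : ℕ) (hM : m0 + ∑ i, m i ≤ M) (l S : ℕ) (hS : 1 ≤ S) (hl : l ≤ S) :
    ‖σ (termI s.A s.b s.b0 c m0 m l)‖
      ≤ L * S ^ L * (2 * L * s.B) ^ M * s.B ^ (Fintype.card ι * L * S) := by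
  rw [termI_map]
  exact term_norm_le _ _ _ s.B s.hB (s.bdA σ) (s.bdb σ) (s.bdb0 σ) L _ _ c.1.2 c.2.1.2 _
    (fun i => (c.2.2 i).2) m0 m M hM l S hS hl

lemma Setup.termI_int (s : Setup K ι) {L : ℕ} (c : Idx ι L) (m0 : ℕ) (m : ι → ℕ)
    (M : ℕ) (hM : m0 + ∑ i, m i ≤ M) (l S : ℕ) (hl : l ≤ S) :
    IsIntegral ℤ ((s.e : K) ^ (M + Fintype.card ι * L * S) * termI s.A s.b s.b0 c m0 m l) :=
  term_integral _ _ _ s.e s.intA s.intb s.intb0 _ _ _ L (fun i => (c.2.2 i).2) m0 m M hM l S hl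

lemma Setup.step (s : Setup K ι) {L : ℕ} (p : Idx ι L → K) (P : ℝ)
    (hpint : ∀ c, IsIntegral ℤ (p c)) (hpP : ∀ c (σ : K →+* ℂ), ‖σ (p c)‖ ≤ P)
    (M Mb T S S' : ℕ) (hMb : M ≤ Mb) (hSS : S ≤ S') (hS' : 1 ≤ S')
    (hvan : ∀ m0 m, m0 + ∑ i, m i < M → ∀ l < S, s.val p m0 m l = 0)
    (Q : ℝ)
    (hU : (s.e : ℝ) ^ (Mb + Fintype.card ι * L * S') * (Fintype.card (Idx ι L) *
      (P * (L * (3 * S') ^ L * (2 * L * s.B) ^ Mb * Real.exp (s.W * L * (3 * S'))))) ≤ Q)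
    (hV : (s.e : ℝ) ^ (Mb + Fintype.card ι * L * S') * (Fintype.card (Idx ι L) *
      (P * (L * S' ^ L * (2 * L * s.B) ^ Mb * s.B ^ (Fintype.card ι * L * S')))) ≤ Q)
    (hQ : Q ^ (Module.finrank ℚ K) < 2 ^ (T * S)) :
    ∀ m0 m, m0 + ∑ i, m i + T ≤ M → ∀ l < S', s.val p m0 m l = 0 := by
  intro m0 m hm l hl
  by_contra hx
  set D := Mb + Fintype.card ι * L * S' with hD
  set y : K := (s.e : K) ^ D * s.val p m0 m l with hy
  have hmMb : m0 + ∑ i, m i ≤ Mb := by omega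
  have hyint : IsIntegral ℤ y := by
    rw [hy, Setup.val, Finset.mul_sum]
    refine IsIntegral.sum _ fun c _ => ?_
    have : (s.e : K) ^ D * (p c * termI s.A s.b s.b0 c m0 m l)
      = p c * ((s.e : K) ^ D * termI s.A s.b s.b0 c m0 m l) := by ring
    rw [this]
    exact (hpint c).mul (s.termI_int c m0 m Mb hmMb l S' hl.le)
  have hy0 : y ≠ 0 := mul_ne_zero (pow_ne_zero _ (by exact_mod_cast s.he.ne')) hx
  have hnorm : ∀ σ : K →+* ℂ, ‖σ y‖ = (s.e : ℝ) ^ D * ‖σ (s.val p m0 m l)‖ := by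
    intro σ
    rw [hy, map_mul, map_pow, map_natCast, norm_mul, norm_pow, Complex.norm_natCast]
  have hH : ∀ σ : K →+* ℂ, ‖σ y‖ ≤ Q := by
    intro σ
    rw [hnorm]
    refine le_trans (mul_le_mul_of_nonneg_left ?_ (by positivity)) hV
    rw [Setup.val, map_sum, ← nsmul_eq_mul, ← Finset.card_univ, ← Finset.sum_const]
    refine norm_sum_le_of_le _ fun c _ => ?_
    rw [map_mul, norm_mul]
    have hP0 : 0 ≤ P := (norm_nonneg _).trans (hpP c σ)
    exact mul_le_mul (hpP c σ) (s.termI_norm σ c m0 m Mb hmMb l S' hS' hl.le) (norm_nonneg _) hP0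
  have hQ0 : 0 ≤ Q := (norm_nonneg _).trans (hH s.φ)
  have hsm : ‖s.φ y‖ ≤ Q / 2 ^ (T * S) := by
    rw [hnorm, ← s.phi_val]
    have h1 := schwarz (f := auxF s.ℓ (fun i => s.φ (s.b i)) (s.φ s.b0) (fun c => s.φ (p c)) m0 m)
      (auxF_differentiable _ _ _ _ _ _) (T := T) hSS (B := (Fintype.card (Idx ι L) *
      (P * (L * (3 * S') ^ L * (2 * L * s.B) ^ Mb * Real.exp (s.W * L * (3 * S'))))))
      (fun l hl => by
        refine auxF_order s.ℓ _ _ s.hrel _ M _ ?_ T m0 m hm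
        intro m0' m' hm'
        rw [s.phi_val, hvan m0' m' hm' l hl, map_zero])
      (fun z hz => auxF_norm_le s.ℓ _ _ s.B s.hB (s.bdb s.φ) (s.bdb0 s.φ) _ P
        (fun c => hpP c s.φ) m0 m Mb hmMb z _ (by
          have : (1 : ℝ) ≤ S' := by exact_mod_cast hS'
          linarith) hz) hl
    calc _ ≤ (s.e : ℝ) ^ D * _ := mul_le_mul_of_nonneg_left h1 (by positivity)
      _ = ((s.e : ℝ) ^ D * _) / 2 ^ (T * S) := (mul_div_assoc _ _ _).symm
      _ ≤ _ := div_le_div_of_nonneg_right hU (by positivity)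
  have hl := liouville s.φ y hyint hy0 Q hH
  have hdeg : 0 < Module.finrank ℚ K := Module.finrank_pos
  have h2 : (1 : ℝ) ≤ Q ^ (Module.finrank ℚ K) / 2 ^ (T * S) := by
    refine hl.trans ((mul_le_mul_of_nonneg_right hsm (by positivity)).trans_eq ?_)
    obtain ⟨d, hd⟩ := Nat.exists_eq_succ_of_ne_zero hdeg.ne'
    rw [hd, Nat.succ_sub_one, pow_succ]; ring
  rw [le_div_iff₀ (by positivity), one_mul] at h2
  exact absurd hQ (not_lt.mpr h2)

end BakerPi

namespace BakerPi

open Polynomial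

/-! ### The choice of parameters -/

lemma pow_bound_mul {N x y : ℝ} {u v : ℕ} (hx : 0 ≤ x) (hy : 0 ≤ y) (h1 : x ≤ N ^ u)
    (h2 : y ≤ N ^ v) : x * y ≤ N ^ (u + v) := by
  rw [pow_add]; exact mul_le_mul h1 h2 hy (hx.trans h1)

lemma pow_bound_pow {N x : ℝ} {u k v : ℕ} (hN : 1 ≤ N) (hx : 0 ≤ x) (h1 : x ≤ N ^ u)
    (hv : u * k ≤ v) : x ^ k ≤ N ^ v := by
  refine le_trans ?_ (pow_le_pow_right₀ hN hv)
  rw [pow_mul]; exact pow_le_pow_left₀ hx h1 k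

lemma core_bound (N L S Mb a w q n r X : ℕ) (e B y z : ℝ) (hN : 2 ≤ N) (hL : L = N ^ a)
    (he0 : 0 ≤ e) (he : e ≤ N) (hB0 : 0 ≤ B) (hB : B ≤ N) (hy0 : 0 ≤ y) (hy : y ≤ (N : ℝ) ^ w)
    (hz0 : 0 ≤ z) (hz : z ≤ (N : ℝ) ^ (r * X)) (hMb : Mb ≤ q * X) (hLS : L * S ≤ X)
    (hLX : L ≤ X) (hX : 1 ≤ X) :
    e ^ (Mb + n * L * S) * (L * y ^ L * (2 * L * B) ^ Mb * z)
      ≤ (N : ℝ) ^ (((q + n) + (a + w + (a + 2) * q + r)) * X) := by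
  have hN1 : (1 : ℝ) ≤ N := by exact_mod_cast (by omega : 1 ≤ N)
  have hN2 : (2 : ℝ) ≤ N := by exact_mod_cast hN
  have hLr : (L : ℝ) = (N : ℝ) ^ a := by rw [hL]; push_cast; rfl
  have h1 : e ^ (Mb + n * L * S) ≤ (N : ℝ) ^ ((q + n) * X) := by
    refine pow_bound_pow (u := 1) hN1 he0 (by simpa using he) ?_
    have : n * (L * S) ≤ n * X := Nat.mul_le_mul_left _ hLS
    nlinarith
  have h2 : (L : ℝ) ≤ (N : ℝ) ^ (a * X) := by
    rw [hLr]; exact pow_le_pow_right₀ hN1 (Nat.le_mul_of_pos_right _ hX)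
  have h3 : y ^ L ≤ (N : ℝ) ^ (w * X) :=
    pow_bound_pow hN1 hy0 hy (Nat.mul_le_mul_left _ hLX)
  have h4 : (2 * L * B) ^ Mb ≤ (N : ℝ) ^ (((a + 2) * q) * X) := by
    refine pow_bound_pow (u := 1 + a + 1) hN1 (by positivity) ?_ ?_
    · exact pow_bound_mul (by positivity) hB0
        (pow_bound_mul (by norm_num) (by positivity) (by simpa using hN2) hLr.le)
        (by simpa using hB)
    · calc (1 + a + 1) * Mb ≤ (1 + a + 1) * (q * X) := Nat.mul_le_mul_left _ hMb
        _ = _ := by ring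
  have h5 := pow_bound_mul (by positivity) (by positivity) h1 (pow_bound_mul (by positivity) hz0
    (pow_bound_mul (by positivity) (by positivity) (pow_bound_mul (by positivity)
      (by positivity) h2 h3) h4) hz)
  refine h5.trans_eq ?_
  congr 1; ring

lemma exists_large (G : ℝ) (g E : ℕ) : ∃ N : ℕ, 2 ≤ N ∧ G ≤ N ∧ g ≤ N ∧
    (N : ℝ) ^ E < 2 ^ N := by
  have h1 := tendsto_pow_const_div_const_pow_of_one_lt E (r := (2 : ℝ)) (by norm_num)
  have h2 := (h1.eventually_lt_const (by norm_num : (0 : ℝ) < 1))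
  have h3 : ∀ᶠ N : ℕ in Filter.atTop, G ≤ N := tendsto_natCast_atTop_atTop.eventually_ge_atTop G
  obtain ⟨N, hN⟩ := ((h2.and h3).and ((Filter.eventually_ge_atTop 2).and
    (Filter.eventually_ge_atTop g))).exists
  refine ⟨N, hN.2.1, hN.1.2, hN.2.2, ?_⟩
  have := hN.1.1
  rwa [div_lt_one (by positivity)] at this

variable {K : Type} [Field K] [NumberField K] {ι : Type} [Fintype ι] [DecidableEq ι]

lemma card_Idx (L : ℕ) : Fintype.card (Idx ι L) = L ^ (Fintype.card ι + 2) := by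
  simp [Idx, Fintype.card_prod]; ring

set_option maxHeartbeats 2000000 in
lemma Setup.exists_aux (s : Setup K ι) : ∃ (L : ℕ) (p : Idx ι L → K), p ≠ 0 ∧
    ∀ m0 m, m0 + ∑ i, m i < L → ∀ l < 2 * L ^ (Fintype.card ι + 1), s.val p m0 m l = 0 := by
  obtain ⟨C, hC1, hsieg⟩ := siegel K
  set n := Fintype.card ι with hn
  set a := 2 * n + 4 with ha
  set c := 2 * n + 6 with hc
  set Jm := a * (n + 1) with hJm
  set k := Jm + 1 with hk
  set q := (n + 1) * k with hq
  set w := Jm + 2 with hw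
  set E1 := (q + n) + (a + w + (a + 2) * q + n) with hE1
  set E2 := (q + n) + (a + (w + 2) + (a + 2) * q + 1) with hE2
  set E0 := 1 + a * (n + 2) + E1 with hE0
  set E := a * (n + 2) + E0 + E1 + E2 with hE
  set δ := Module.finrank ℚ K with hδ
  obtain ⟨N, hN2, hG, hg, hexp⟩ := exists_large
    (max (max s.B C) (Real.exp (3 * s.W))) (max s.e (2 * k ^ (n + 1))) (E * δ)
  have hNB : s.B ≤ N := (le_max_left _ _).trans ((le_max_left _ _).trans hG)
  have hNC : C ≤ N := (le_max_right _ _).trans ((le_max_left _ _).trans hG)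
  have hNW : Real.exp (3 * s.W) ≤ N := (le_max_right _ _).trans hG
  have hNe : s.e ≤ N := (le_max_left _ _).trans hg
  have hNer : (s.e : ℝ) ≤ N := by exact_mod_cast hNe
  have hNk : 2 * k ^ (n + 1) ≤ N := (le_max_right _ _).trans hg
  have hN0 : 0 < N := by omega
  have hN1 : (1 : ℝ) ≤ N := by exact_mod_cast hN0
  have hN2r : (2 : ℝ) ≤ N := by exact_mod_cast hN2
  have hB0 : 0 ≤ s.B := zero_le_one.trans s.hB
  set L := N ^ a with hL
  set M0 := k * N ^ c with hM0
  set Mb := q * N ^ c with hMb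
  have hLpos : 0 < L := by positivity
  have hLr : (L : ℝ) = (N : ℝ) ^ a := by rw [hL]; push_cast; rfl
  have hcardr : ∀ X : ℕ, 1 ≤ X → (Fintype.card (Idx ι L) : ℝ) ≤ (N : ℝ) ^ (a * (n + 2) * X) := by
    intro X hX
    rw [card_Idx, Nat.cast_pow, hLr, ← pow_mul]
    exact pow_le_pow_right₀ hN1 (Nat.le_mul_of_pos_right _ hX)
  -- Siegel
  set A0 : ℝ := (s.e : ℝ) ^ (Mb + n * L * N) *
    (L * (N : ℝ) ^ L * (2 * L * s.B) ^ Mb * s.B ^ (n * L * N)) with hA0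
  have hX0 : 1 ≤ N ^ c := Nat.one_le_pow _ _ hN0
  have hLN : L * N ≤ N ^ c := by
    rw [hL, ← pow_succ]; exact Nat.pow_le_pow_right hN0 (by omega)
  have hA0le : A0 ≤ (N : ℝ) ^ (E1 * N ^ c) := by
    refine core_bound N L N Mb a w q n n (N ^ c) s.e s.B N _ hN2 hL (by positivity) hNer
      hB0 hNB (by positivity) ?_ (by positivity) ?_ le_rfl hLN
      ((Nat.le_mul_of_pos_right _ hN0).trans hLN) hX0
    · calc (N : ℝ) = (N : ℝ) ^ 1 := (pow_one _).symm
        _ ≤ _ := pow_le_pow_right₀ hN1 (by omega)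
    · refine pow_bound_pow (u := 1) hN1 hB0 (by simpa using hNB) ?_
      rw [one_mul, mul_assoc]; exact Nat.mul_le_mul_left _ hLN
  have hA01 : 1 ≤ A0 := by
    have h1 : (1 : ℝ) ≤ s.e := by exact_mod_cast s.he
    have h2 : (1 : ℝ) ≤ L := by exact_mod_cast hLpos
    have h3 : (1 : ℝ) ≤ 2 * L * s.B := by nlinarith [s.hB]
    refine one_le_mul_of_one_le_of_one_le (one_le_pow₀ h1) ?_
    refine one_le_mul_of_one_le_of_one_le ?_ (one_le_pow₀ s.hB)
    refine one_le_mul_of_one_le_of_one_le ?_ (one_le_pow₀ h3)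
    exact one_le_mul_of_one_le_of_one_le h2 (one_le_pow₀ hN1)
  have hrow : ∀ r : Fin M0 × (ι → Fin M0) × Fin N,
      (r.1 : ℕ) + ∑ i, (r.2.1 i : ℕ) ≤ Mb := by
    intro r
    have h1 : ∑ i, (r.2.1 i : ℕ) ≤ n * M0 := by
      calc ∑ i, (r.2.1 i : ℕ) ≤ ∑ _i : ι, M0 := Finset.sum_le_sum fun i _ => (r.2.1 i).2.le
        _ = _ := by simp [hn]
    have h2 := r.1.2
    have : Mb = M0 + n * M0 := by rw [hMb, hM0, hq]; ring
    omega
  obtain ⟨p, hp0, hpz, hpint, hpP⟩ := hsieg (Fin M0 × (ι → Fin M0) × Fin N) (Idx ι L)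
    (fun r x => (s.e : K) ^ (Mb + n * L * N) *
      termI s.A s.b s.b0 x (r.1 : ℕ) (fun i => (r.2.1 i : ℕ)) (r.2.2 : ℕ)) A0 hA01
    (fun r x => s.termI_int x _ _ Mb (hrow r) _ N r.2.2.2.le)
    (fun r x σ => by
      rw [map_mul, map_pow, map_natCast, norm_mul, norm_pow, Complex.norm_natCast]
      exact mul_le_mul_of_nonneg_left
        (s.termI_norm σ x _ _ Mb (hrow r) _ N hN0 r.2.2.2.le) (by positivity))
    (by
      simp only [Fintype.card_prod, Fintype.card_fin, Fintype.card_fun]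
      positivity)
    (by
      rw [card_Idx]
      simp only [Fintype.card_prod, Fintype.card_fin, Fintype.card_fun]
      rw [← hn, hL, hM0]
      calc 2 * (k * N ^ c * ((k * N ^ c) ^ n * N))
          = (2 * k ^ (n + 1)) * N ^ (c * (n + 1) + 1) := by
            simp only [mul_pow, ← pow_mul, pow_succ, mul_add, pow_add]; ring
        _ ≤ N * N ^ (c * (n + 1) + 1) := Nat.mul_le_mul_right _ hNk
        _ = N ^ (c * (n + 1) + 1 + 1) := by rw [pow_succ N (c * (n + 1) + 1)]; ring
        _ ≤ (N ^ a) ^ (n + 2) := by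
            rw [← pow_mul]
            exact Nat.pow_le_pow_right hN0 (by rw [ha, hc]; nlinarith))
  set P : ℝ := C * Fintype.card (Idx ι L) * A0 with hP
  have hP0 : 0 ≤ P := by positivity
  have hPle : P ≤ (N : ℝ) ^ (E0 * N ^ c) := by
    have h1 : C ≤ (N : ℝ) ^ (1 * N ^ c) := by
      calc C ≤ (N : ℝ) ^ 1 := by simpa using hNC
        _ ≤ _ := pow_le_pow_right₀ hN1 (by omega)
    have := pow_bound_mul (by positivity) (by positivity)
      (pow_bound_mul (by positivity) (by positivity) h1 (hcardr (N ^ c) hX0)) hA0le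
    refine this.trans_eq ?_
    congr 1; rw [hE0]; ring
  -- induction
  have hind : ∀ J ≤ Jm, ∀ m0 m, m0 + ∑ i, m i < (k - J) * N ^ c → ∀ l < N ^ (J + 1),
      s.val p m0 m l = 0 := by
    intro J
    induction J with
    | zero =>
      intro _ m0 m hm l hl
      rw [Nat.sub_zero, ← hM0] at hm
      rw [zero_add, pow_one] at hl
      have hmi : ∀ i, m i < M0 := fun i => by
        have := Finset.single_le_sum (f := m) (fun i _ => Nat.zero_le _) (Finset.mem_univ i)
        omega
      have h := hpz (⟨m0, by omega⟩, fun i => ⟨m i, hmi i⟩, ⟨l, hl⟩)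
      simp only [mul_assoc] at h
      rw [← Finset.mul_sum] at h
      have he : (s.e : K) ^ (Mb + n * (L * N)) ≠ 0 :=
        pow_ne_zero _ (by exact_mod_cast s.he.ne')
      have h' := (mul_eq_zero.mp h).resolve_left he
      rw [Setup.val, ← h']
      exact Finset.sum_congr rfl fun x _ => mul_comm _ _
    | succ J ih =>
      intro hJ m0 m hm l hl
      have ih' := ih (by omega)
      set X := N ^ (c + J) with hX
      have hX1 : 1 ≤ X := Nat.one_le_pow _ _ hN0
      have hcX : N ^ c ≤ X := Nat.pow_le_pow_right hN0 (by omega)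
      have hMbX : Mb ≤ q * X := Nat.mul_le_mul_left _ hcX
      have hLS : L * N ^ (J + 1 + 1) = X := by
        rw [hL, hX, ← pow_add]; congr 1; omega
      have hLX : L ≤ X := by
        rw [← hLS]; exact Nat.le_mul_of_pos_right _ (by positivity)
      have hPX : P ≤ (N : ℝ) ^ (E0 * X) :=
        hPle.trans (pow_le_pow_right₀ hN1 (Nat.mul_le_mul_left _ hcX))
      have hS'r : ((N ^ (J + 1 + 1) : ℕ) : ℝ) ≤ (N : ℝ) ^ w := by
        rw [Nat.cast_pow]; exact pow_le_pow_right₀ hN1 (by omega)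
      have hLSr : (L : ℝ) * ((N ^ (J + 1 + 1) : ℕ) : ℝ) = X := by exact_mod_cast hLS
      have hV1 := core_bound N L (N ^ (J + 1 + 1)) Mb a w q n n X s.e s.B
        ((N ^ (J + 1 + 1) : ℕ) : ℝ) (s.B ^ (n * L * N ^ (J + 1 + 1))) hN2 hL (by positivity) hNer
        hB0 hNB (by positivity) hS'r (by positivity)
        (by
          refine pow_bound_pow (u := 1) hN1 hB0 (by simpa using hNB) ?_
          rw [one_mul, mul_assoc, hLS]) hMbX hLS.le hLX hX1
      have hU1 := core_bound N L (N ^ (J + 1 + 1)) Mb a (w + 2) q n 1 X s.e s.B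
        (3 * ((N ^ (J + 1 + 1) : ℕ) : ℝ)) (Real.exp (s.W * L * (3 * ((N ^ (J + 1 + 1) : ℕ) : ℝ))))
        hN2 hL (by positivity) hNer hB0 hNB (by positivity)
        (by
          rw [add_comm w 2]
          refine pow_bound_mul (by norm_num) (by positivity) ?_ hS'r
          nlinarith) (by positivity)
        (by
          have : s.W * L * (3 * ((N ^ (J + 1 + 1) : ℕ) : ℝ)) = X * (3 * s.W) := by
            rw [← hLSr]; ring
          rw [this, Real.exp_nat_mul, one_mul]
          exact pow_le_pow_left₀ (Real.exp_pos _).le hNW _) hMbX hLS.le hLX hX1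
      have hcP : (Fintype.card (Idx ι L) : ℝ) * P ≤ (N : ℝ) ^ ((a * (n + 2) + E0) * X) := by
        refine (pow_bound_mul (by positivity) hP0 (hcardr X hX1) hPX).trans_eq ?_
        congr 1; ring
      refine s.step p P hpint hpP ((k - J) * N ^ c) Mb (N ^ c) (N ^ (J + 1)) (N ^ (J + 1 + 1))
        ?_ (Nat.pow_le_pow_right hN0 (by omega)) (Nat.one_le_pow _ _ hN0) ih'
        ((N : ℝ) ^ (E * X)) ?_ ?_ ?_ m0 m ?_ l hl
      · refine Nat.mul_le_mul_right _ ((Nat.sub_le _ _).trans ?_)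
        rw [hq]; exact Nat.le_mul_of_pos_left _ (by omega)
      · have := pow_bound_mul (by positivity) (by positivity) hcP hU1
        refine le_trans (le_of_eq ?_) (this.trans (pow_le_pow_right₀ hN1 ?_))
        · ring
        · rw [← add_mul]; exact Nat.mul_le_mul_right _ (by omega)
      · have := pow_bound_mul (by positivity) (by positivity) hcP hV1
        refine le_trans (le_of_eq ?_) (this.trans (pow_le_pow_right₀ hN1 ?_))
        · ring
        · rw [← add_mul]; exact Nat.mul_le_mul_right _ (by omega)
      · have h1 : N ^ c * N ^ (J + 1) = N * X := by
          rw [hX, ← pow_add, ← pow_succ']; congr 1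
        have h2 : ((N : ℝ) ^ (E * X)) ^ δ = ((N : ℝ) ^ (E * δ)) ^ X := by
          rw [← pow_mul, ← pow_mul]; congr 1; ring
        rw [h1, h2, pow_mul (2 : ℝ)]
        exact pow_lt_pow_left₀ hexp (by positivity) (by omega)
      · have h1 : k - J = (k - (J + 1)) + 1 := by omega
        have h2 : (k - J) * N ^ c = (k - (J + 1)) * N ^ c + N ^ c := by rw [h1]; ring
        omega
  refine ⟨L, p, hp0, fun m0 m hm l hl => hind Jm le_rfl m0 m ?_ l ?_⟩
  · have : k - Jm = 1 := by omega
    rw [this, one_mul]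
    exact hm.trans_le (Nat.pow_le_pow_right hN0 (by omega))
  · refine hl.trans_le ?_
    rw [hL, ← pow_mul, pow_succ, ← hJm, mul_comm]
    exact Nat.mul_le_mul_left _ hN2

end BakerPi

namespace BakerPi

open Polynomial

/-! ### The end of the proof -/

variable {K : Type} [Field K] [NumberField K] {ι : Type} [Fintype ι] [DecidableEq ι]

lemma sq_prod_injective (a : ι → ℝ) (hapos : ∀ i, 0 < a i)
    (hli : LinearIndependent ℚ (fun i => Real.log (a i))) (L : ℕ) :
    Function.Injective (fun μ : ι → Fin L => (∏ i, (a i : ℂ) ^ (μ i : ℕ)) ^ 2) := by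
  intro μ ν h
  have h1 : (∏ i, a i ^ (μ i : ℕ)) ^ 2 = (∏ i, a i ^ (ν i : ℕ)) ^ 2 := by
    have h' : (∏ i, (a i : ℂ) ^ (μ i : ℕ)) ^ 2 = (∏ i, (a i : ℂ) ^ (ν i : ℕ)) ^ 2 := h
    exact_mod_cast h'
  have h2 : ∏ i, a i ^ (μ i : ℕ) = ∏ i, a i ^ (ν i : ℕ) :=
    (pow_left_inj₀ (Finset.prod_nonneg fun i _ => (pow_pos (hapos i) _).le)
      (Finset.prod_nonneg fun i _ => (pow_pos (hapos i) _).le) two_ne_zero).mp h1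
  have hlog : ∀ κ : ι → Fin L, Real.log (∏ i, a i ^ (κ i : ℕ))
      = ∑ i, ((κ i : ℕ) : ℚ) • Real.log (a i) := by
    intro κ
    rw [Real.log_prod (fun i _ => (pow_pos (hapos i) _).ne')]
    refine Finset.sum_congr rfl fun i _ => ?_
    rw [Real.log_pow, Rat.smul_def]; simp
  have h3 : ∑ i, (((μ i : ℕ) : ℚ) - ((ν i : ℕ) : ℚ)) • Real.log (a i) = 0 := by
    simp only [sub_smul, Finset.sum_sub_distrib]
    rw [← hlog, ← hlog, h2, sub_self]
  have h4 := Fintype.linearIndependent_iff.mp hli _ h3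
  funext i
  have := sub_eq_zero.mp (h4 i)
  exact Fin.ext (by exact_mod_cast this)

/-- The polynomial attached to a base. -/
noncomputable def Setup.pol (s : Setup K ι) {L : ℕ} (p : Idx ι L → K) (m0 : ℕ) (m : ι → ℕ)
    (μ : ι → Fin L) : ℂ[X] :=
  ∑ d : Fin L, ∑ t : Fin L, C (s.φ (p (d, t, μ)) *
    ∏ i, (((μ i : ℕ) : ℂ) + (t : ℕ) * s.φ (s.b i)) ^ m i) *
      qpoly ((t : ℕ) * s.φ s.b0) d m0

lemma Setup.pol_degree (s : Setup K ι) {L : ℕ} (p : Idx ι L → K) (m0 : ℕ) (m : ι → ℕ)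
    (μ : ι → Fin L) : (s.pol p m0 m μ).degree < L := by
  rw [← mem_degreeLT]
  refine Submodule.sum_mem _ fun d _ => Submodule.sum_mem _ fun t _ => ?_
  rw [← smul_eq_C_mul]
  refine Submodule.smul_mem _ _ ?_
  rw [mem_degreeLT]
  refine degree_le_natDegree.trans_lt ?_
  exact_mod_cast (qpoly_natDegree_le _ _ _).trans_lt d.2

lemma Setup.val_even (s : Setup K ι) (a : ι → ℝ) (ha : ∀ i, s.φ (s.A i) = a i) {L : ℕ}
    (p : Idx ι L → K) (m0 : ℕ) (m : ι → ℕ) (l : ℕ) :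
    s.φ (s.val p m0 m (2 * l)) = ∑ μ : ι → Fin L, (s.pol p m0 m μ).eval ((2 * l : ℕ) : ℂ) *
      (∏ i, (a i : ℂ) ^ (μ i : ℕ)) ^ (2 * l) := by
  rw [s.map_val]
  simp only [Idx, Fintype.sum_prod_type]
  rw [show (∑ d : Fin L, ∑ t : Fin L, ∑ μ : ι → Fin L, s.φ (p (d, t, μ)) *
    termI (fun i => s.φ (s.A i)) (fun i => s.φ (s.b i)) (s.φ s.b0) ((d, t, μ) : Idx ι L) m0 m (2 * l))
    = ∑ μ : ι → Fin L, ∑ d : Fin L, ∑ t : Fin L, s.φ (p (d, t, μ)) *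
    termI (fun i => s.φ (s.A i)) (fun i => s.φ (s.b i)) (s.φ s.b0) ((d, t, μ) : Idx ι L) m0 m (2 * l)
    from ?_]
  · refine Finset.sum_congr rfl fun μ _ => ?_
    rw [Setup.pol, eval_finsetSum, Finset.sum_mul]
    refine Finset.sum_congr rfl fun d _ => ?_
    rw [eval_finsetSum, Finset.sum_mul]
    refine Finset.sum_congr rfl fun t _ => ?_
    have h1 : bs (fun i => s.φ (s.A i)) (t : ℕ) (fun i => (μ i : ℕ)) ^ (2 * l)
        = (∏ i, (a i : ℂ) ^ (μ i : ℕ)) ^ (2 * l) := by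
      rw [bs, mul_pow, ← pow_mul, mul_left_comm, pow_mul]
      simp [ha]
    rw [termI, term, cf, h1, eval_mul, eval_C]
    ring
  · rw [Finset.sum_congr rfl fun d _ => Finset.sum_comm]
    exact Finset.sum_comm

lemma Setup.contra (s : Setup K ι) (a : ι → ℝ) (hapos : ∀ i, 0 < a i)
    (ha : ∀ i, s.φ (s.A i) = a i)
    (hli : LinearIndependent ℚ (fun i => Real.log (a i))) : False := by
  obtain ⟨L, p, hp0, hvan⟩ := s.exists_aux
  have hpol : ∀ m0 m, m0 + ∑ i, m i < L → ∀ μ, s.pol p m0 m μ = 0 := by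
    intro m0 m hm
    refine expPoly_even_eq_zero (fun μ : ι → Fin L => ∏ i, (a i : ℂ) ^ (μ i : ℕ))
      (sq_prod_injective a hapos hli L) ?_ L _ (s.pol_degree p m0 m) ?_
    · intro μ
      exact Finset.prod_ne_zero_iff.mpr fun i _ =>
        pow_ne_zero _ (by exact_mod_cast (hapos i).ne')
    · intro l hl
      rw [← s.val_even a ha, hvan m0 m hm (2 * l), map_zero]
      rw [Fintype.card_fun, Fintype.card_fin] at hl
      rw [pow_succ]; omega
  -- a good direction
  have hdir : ∀ μ : ι → Fin L, ∃ f : Fin L → ℂ, Function.Injective f ∧ ∀ k < L,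
      ∃ (m0 : ℕ) (m : ι → ℕ), m0 + ∑ i, m i = k ∧ ∀ t : Fin L, ((t : ℕ) * s.φ s.b0) ^ m0 *
        ∏ i, (((μ i : ℕ) : ℂ) + (t : ℕ) * s.φ (s.b i)) ^ m i = f t ^ k := by
    intro μ
    by_cases hb0 : s.φ s.b0 = 0
    · have : ∃ i, s.φ (s.b i) ≠ 0 := by
        by_contra! hcon
        have := s.hrel
        simp [hb0, hcon, Real.pi_ne_zero] at this
      obtain ⟨i, hi⟩ := this
      refine ⟨fun t => ((μ i : ℕ) : ℂ) + (t : ℕ) * s.φ (s.b i), ?_, fun k _ =>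
        ⟨0, Pi.single i k, ?_, ?_⟩⟩
      · intro t t' h
        have := mul_right_cancel₀ hi (add_left_cancel h)
        exact Fin.ext (by exact_mod_cast this)
      · simp
      · intro t
        rw [pow_zero, one_mul, Finset.prod_eq_single i]
        · simp
        · intro j _ hj; simp [Pi.single_eq_of_ne hj]
        · simp
    · refine ⟨fun t => (t : ℕ) * s.φ s.b0, ?_, fun k _ => ⟨k, 0, by simp, fun t => by simp⟩⟩
      intro t t' h
      have := mul_right_cancel₀ hb0 h
      exact Fin.ext (by exact_mod_cast this)
  have hall : ∀ μ : ι → Fin L, ∀ j : ℕ, ∀ d : Fin L, L - 1 - d = j → ∀ t, s.φ (p (d, t, μ)) = 0 := by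
    intro μ j
    induction j using Nat.strong_induction_on with
    | _ j ih =>
    intro d0 hd0
    obtain ⟨f, hf, hfk⟩ := hdir μ
    have hv : (fun t : Fin L => s.φ (p (d0, t, μ))) = 0 := by
      refine Matrix.eq_zero_of_forall_pow_sum_mul_pow_eq_zero hf fun k => ?_
      obtain ⟨m0, m, hm, hft⟩ := hfk k k.2
      have h := congrArg (fun q : ℂ[X] => q.coeff (d0 : ℕ)) (hpol m0 m (hm ▸ k.2) μ)
      simp only [Setup.pol, finsetSum_coeff, coeff_C_mul, coeff_zero] at h
      rw [Finset.sum_eq_single d0] at h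
      · rw [← h]
        refine Finset.sum_congr rfl fun t _ => ?_
        rw [qpoly_coeff_self, ← hft]; ring
      · intro d _ hd
        refine Finset.sum_eq_zero fun t _ => ?_
        rcases lt_or_gt_of_ne hd with h1 | h1
        · rw [qpoly_coeff_of_gt _ _ _ _ h1, mul_zero]
        · rw [ih (L - 1 - d) (by have := d.2; have := d0.2; omega) d rfl t]; simp
      · simp
    exact fun t => congrFun hv t
  refine hp0 (funext fun ⟨d, t, μ⟩ => ?_)
  exact (map_eq_zero s.φ).mp (hall μ _ d rfl t)

end BakerPi

namespace BakerPi

/-! ### The reduction -/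

lemma exists_den {K : Type} [Field K] [NumberField K] {κ : Type} [Fintype κ] (g : κ → K) :
    ∃ e : ℕ, 0 < e ∧ ∀ i, IsIntegral ℤ (e * g i) := by
  have h1 : ∀ i, ∃ e : ℕ, 0 < e ∧ IsIntegral ℤ (e * g i) := by
    intro i
    have halg : IsAlgebraic ℤ (g i) :=
      (IsFractionRing.isAlgebraic_iff ℤ ℚ K).mpr (Algebra.IsAlgebraic.isAlgebraic (g i))
    obtain ⟨y, hy0, hy⟩ := halg.exists_integral_multiple
    refine ⟨y.natAbs, Int.natAbs_pos.mpr hy0, ?_⟩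
    rw [zsmul_eq_mul] at hy
    rcases Int.natAbs_eq y with h | h
    · rw [h] at hy; simpa using hy
    · rw [h] at hy
      have := hy.neg
      simpa using this
  choose e he hi using h1
  refine ⟨∏ i, e i, Finset.prod_pos fun i _ => he i, fun i => ?_⟩
  obtain ⟨r, hr⟩ := Finset.dvd_prod_of_mem e (Finset.mem_univ i)
  rw [hr, Nat.cast_mul, mul_comm (e i : K), mul_assoc]
  refine IsIntegral.mul ?_ (hi i)
  exact_mod_cast (isIntegral_algebraMap (R := ℤ) (A := K) (x := (r : ℤ)))

lemma exists_bd {K : Type} [Field K] [NumberField K] {κ : Type} [Fintype κ] (g : κ → K) :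
    ∃ B : ℝ, 1 ≤ B ∧ ∀ (σ : K →+* ℂ) i, ‖σ (g i)‖ ≤ B := by
  obtain ⟨B, hB⟩ := (Set.finite_range (fun x : (K →+* ℂ) × κ => ‖x.1 (g x.2)‖)).bddAbove
  exact ⟨max 1 B, le_max_left _ _, fun σ i => (hB ⟨(σ, i), rfl⟩).trans (le_max_right _ _)⟩

lemma no_relation {ι : Type} [Fintype ι] (a : ι → ℝ) (hapos : ∀ i, 0 < a i)
    (haalg : ∀ i, IsAlgebraic ℚ (a i)) (hli : LinearIndependent ℚ (fun i => Real.log (a i)))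
    (b0 : ℂ) (b : ι → ℂ) (hb0 : IsAlgebraic ℚ b0) (hb : ∀ i, IsAlgebraic ℚ (b i))
    (hrel : (Real.pi : ℂ) * Complex.I = b0 + ∑ i, b i * (Real.log (a i) : ℂ)) : False := by
  classical
  set S : Set ℂ := Set.range (fun x : Option (ι ⊕ ι) =>
    x.elim b0 (Sum.elim (fun i => (a i : ℂ)) b)) with hS
  have haC : ∀ i, IsAlgebraic ℚ (a i : ℂ) := fun i => (haalg i).algebraMap
  have hSfin : Finite S := Set.finite_range _
  have hSint : ∀ x ∈ S, IsIntegral ℚ x := by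
    rintro _ ⟨(_ | i | i), rfl⟩
    · exact hb0.isIntegral
    · exact (haC i).isIntegral
    · exact (hb i).isIntegral
  set K := IntermediateField.adjoin ℚ S with hK
  have hfd : FiniteDimensional ℚ K := IntermediateField.finiteDimensional_adjoin hSint
  have hNF : NumberField K := ⟨⟩
  have hmem : ∀ x ∈ S, x ∈ K := fun x hx => IntermediateField.subset_adjoin ℚ S hx
  set A' : ι → K := fun i => ⟨a i, hmem _ ⟨some (Sum.inl i), rfl⟩⟩ with hA'
  set b' : ι → K := fun i => ⟨b i, hmem _ ⟨some (Sum.inr i), rfl⟩⟩ with hb'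
  set b0' : K := ⟨b0, hmem _ ⟨none, rfl⟩⟩ with hb0'
  let g : Option (ι ⊕ ι) → K := fun x => x.elim b0' (Sum.elim A' b')
  obtain ⟨e, he, hintg⟩ := exists_den g
  obtain ⟨B, hB, hbd⟩ := exists_bd g
  let s : Setup K ι :=
    { φ := (algebraMap K ℂ)
      A := A'
      b := b'
      b0 := b0'
      ℓ := fun i => (Real.log (a i) : ℂ)
      e := e
      B := B
      he := he
      hB := hB
      hA := fun i => by
        rw [← Complex.ofReal_exp, Real.exp_log (hapos i)]; rfl
      hrel := hrel
      intA := fun i => hintg (some (Sum.inl i))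
      intb := fun i => hintg (some (Sum.inr i))
      intb0 := hintg none
      bdA := fun σ i => hbd σ (some (Sum.inl i))
      bdb := fun σ i => hbd σ (some (Sum.inr i))
      bdb0 := fun σ => hbd σ none }
  exact s.contra a hapos (fun i => rfl) hli

end BakerPi

/-- Consequence of Baker's theorem: for positive real algebraic numbers `α₁, …, α_n` and
algebraic numbers `c₀, c₁, …, c_n` with `c₀ ≠ 0`, the number `c₀π + Σ c_j log α_j` is
transcendental. -/
theorem transcendental_pi_add_log_combination {n : ℕ} (α : Fin n → ℝ)
    (hαpos : ∀ j, 0 < α j) (hαalg : ∀ j, IsAlgebraic ℚ (α j))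
    (c₀ : ℂ) (c : Fin n → ℂ) (hc₀alg : IsAlgebraic ℚ c₀)
    (hcalg : ∀ j, IsAlgebraic ℚ (c j)) (hc₀ : c₀ ≠ 0) :
    Transcendental ℚ (c₀ * (Real.pi : ℂ) + ∑ j, c j * (Real.log (α j) : ℂ)) := by
  intro hx
  set x := c₀ * (Real.pi : ℂ) + ∑ j, c j * (Real.log (α j) : ℂ) with hxdef
  obtain ⟨κ, f, hf, hspan, hli⟩ := exists_linearIndependent' ℚ (fun j => Real.log (α j))
  have : Finite κ := Finite.of_injective f hf
  have : Fintype κ := Fintype.ofFinite κ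
  have hex : ∀ j, ∃ q : κ → ℚ, ∑ i, q i • Real.log (α (f i)) = Real.log (α j) := by
    intro j
    have h1 : Real.log (α j) ∈ Submodule.span ℚ (Set.range (fun j => Real.log (α j))) :=
      Submodule.subset_span ⟨j, rfl⟩
    rw [← hspan] at h1
    exact (Submodule.mem_span_range_iff_exists_fun ℚ).mp h1
  choose q hq using hex
  have hI : IsAlgebraic ℚ Complex.I :=
    (IsIntegral.isAlgebraic ⟨Polynomial.X ^ 2 + 1, by monicity!, by simp⟩)
  refine BakerPi.no_relation (fun i => α (f i)) (fun i => hαpos _) (fun i => hαalg _) hli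
    (Complex.I * c₀⁻¹ * x) (fun i => - (Complex.I * c₀⁻¹ * ∑ j, c j * (q j i : ℂ)))
    ((hI.mul hc₀alg.inv).mul hx) (fun i => ?_) ?_
  · refine ((hI.mul hc₀alg.inv).mul ?_).neg
    exact (IsIntegral.sum _ fun j _ =>
      ((hcalg j).mul (isAlgebraic_algebraMap (q j i))).isIntegral).isAlgebraic
  · have h2 : ∑ j, c j * (Real.log (α j) : ℂ)
        = ∑ i, (∑ j, c j * (q j i : ℂ)) * (Real.log (α (f i)) : ℂ) := by
      simp only [Finset.sum_mul]
      rw [Finset.sum_comm]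
      refine Finset.sum_congr rfl fun j _ => ?_
      rw [← hq j, Complex.ofReal_sum, Finset.mul_sum]
      refine Finset.sum_congr rfl fun i _ => ?_
      rw [Rat.smul_def]; push_cast; ring
    have h3 : ∑ i, -(Complex.I * c₀⁻¹ * ∑ j, c j * (q j i : ℂ)) * (Real.log (α (f i)) : ℂ)
        = -(Complex.I * c₀⁻¹ * ∑ j, c j * (Real.log (α j) : ℂ)) := by
      rw [h2, Finset.mul_sum, ← Finset.sum_neg_distrib]
      refine Finset.sum_congr rfl fun i _ => by ring
    rw [h3, hxdef]
    field_simp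
    ring
end
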